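/- arXiv:1605.00773 — 5 statements merged into one kernel-verified Lean document; each statement's English description precedes it below -/
import Mathlib

section
/- There exists n_0 such that for every n ≥ n_0, every 3-graph H on n vertices with minimum vertex degree δ(H) ≥ 0.8·C(n−1,2) contains a tight Hamiltonian cycle. -/
open Finset

/-- A tight Hamiltonian cycle in a 3-graph `H` on the vertex set `Fin n`:
a cyclic ordering of all `n` vertices in which every three cyclically
consecutive vertices form an edge of `H`. -/
def HasTightHamCycle (n : ℕ) (H : Finset (Finset (Fin n))) : Prop :=
  ∃ f : ZMod n → Fin n, Function.Bijective f ∧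
    ∀ i : ZMod n, ({f i, f (i + 1), f (i + 2)} : Finset (Fin n)) ∈ H

set_option linter.all false
set_option linter.unusedSectionVars false
open Finset
namespace TH
section P1
attribute [local instance 100000] Classical.propDecidable
attribute [local instance 100001] instDecidableEqBool

structure Hyp {V : Type} [Fintype V] (E : V → V → V → Prop) : Prop where
  s1 : ∀ a b c, E a b c → E b a c
  s2 : ∀ a b c, E a b c → E a c b
  ne : ∀ a b c, E a b c → a ≠ b
  pos : 0 < Fintype.card V
  deg : ∀ v, (0.7999:ℝ) * (Fintype.card V:ℝ)^2 ≤
    ((univ.filter fun p : V × V => E v p.1 p.2).card : ℝ)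

noncomputable def cd {V : Type} [Fintype V] (E : V → V → V → Prop) (a b : V) : ℕ :=
  (univ.filter fun c => E a b c).card

def Ext {V : Type} [Fintype V] (E : V → V → V → Prop) : ℕ → V → V → Prop
  | 0, a, b => (0.64:ℝ) * (Fintype.card V:ℝ) ≤ (cd E a b : ℝ)
  | (j+1), a, b => (0.0001:ℝ) * (Fintype.card V:ℝ) ≤
      ((univ.filter fun c => E a b c ∧ Ext E j b c).card : ℝ)

def Nice {V : Type} [Fintype V] (E : V → V → V → Prop) (a b : V) : Prop :=
  (0.28:ℝ) * (Fintype.card V:ℝ) ≤ (cd E a b : ℝ)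

variable {V : Type} [Fintype V] {E : V → V → V → Prop}

lemma Hyp.posR (h : Hyp E) : (0:ℝ) < (Fintype.card V:ℝ) := by exact_mod_cast h.pos

lemma Hyp.iff1 (h : Hyp E) (a b c) : E a b c ↔ E b a c := ⟨h.s1 _ _ _, h.s1 _ _ _⟩
lemma Hyp.iff2 (h : Hyp E) (a b c) : E a b c ↔ E a c b := ⟨h.s2 _ _ _, h.s2 _ _ _⟩

lemma Hyp.cd_comm (h : Hyp E) (a b) : cd E a b = cd E b a := by
  unfold cd; congr 1; ext c; simp [h.iff1 a b c]

lemma Hyp.nice_comm (h : Hyp E) {a b} (hn : Nice E a b) : Nice E b a := by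
  unfold Nice at *; rwa [h.cd_comm]

lemma sum_cd (v : V) : ∑ b, cd E v b = (univ.filter fun p : V × V => E v p.1 p.2).card := by
  unfold cd
  simp only [card_filter]
  rw [← Finset.univ_product_univ, Finset.sum_product]

lemma cd_le (a b : V) : (cd E a b : ℝ) ≤ Fintype.card V := by
  unfold cd; exact_mod_cast Finset.card_le_univ _

lemma Hyp.low (h : Hyp E) (v : V) (q : ℝ) :
    (1 - q) * ((univ.filter fun b => (cd E v b : ℝ) < q * Fintype.card V).card : ℝ)
      ≤ 0.2001 * Fintype.card V := by
  set n : ℝ := (Fintype.card V : ℝ) with hn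
  have hpos : 0 < n := h.posR
  have h1 := h.deg v
  rw [← sum_cd] at h1
  push_cast at h1
  have h2 : ∑ b, (cd E v b : ℝ) ≤ ∑ b, (n - if (cd E v b : ℝ) < q * n then (1-q)*n else 0) := by
    apply Finset.sum_le_sum
    intro b _
    split_ifs with hb
    · linarith
    · have := cd_le (E := E) v b; linarith
  rw [Finset.sum_sub_distrib, ← Finset.sum_filter] at h2
  simp only [sum_const, card_univ, nsmul_eq_mul] at h2
  rw [← hn] at h2 h1
  set k : ℝ := ((univ.filter fun b => (cd E v b : ℝ) < q * n).card : ℝ)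
  have h3 : ((1-q)*k) * n ≤ (0.2001 * n) * n := by nlinarith
  exact le_of_mul_le_mul_right h3 hpos

lemma Hyp.nonnice (h : Hyp E) (v : V) :
    ((univ.filter fun b => ¬ Nice E v b).card : ℝ) ≤ 0.278 * Fintype.card V := by
  have := h.low v 0.28
  have h2 : (univ.filter fun b => ¬ Nice E v b) =
    (univ.filter fun b => (cd E v b : ℝ) < 0.28 * Fintype.card V) := by
    ext b; simp [Nice]
  rw [h2]
  have := h.posR
  nlinarith

lemma Hyp.ext_step (h : Hyp E) (j : ℕ) (q q' : ℝ) (hq : q < 1)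
    (hj : ∀ a b, q * Fintype.card V ≤ cd E a b → Ext E j a b)
    (hqq : 0.2001 ≤ (1 - q) * (q' - 0.0001)) :
    ∀ a b, q' * Fintype.card V ≤ cd E a b → Ext E (j+1) a b := by
  intro a b hab
  unfold Ext
  have h1 := h.low b q
  have h2 : (univ.filter fun c => E a b c) ⊆ (univ.filter fun c => E a b c ∧ Ext E j b c) ∪
     (univ.filter fun c => (cd E b c : ℝ) < q * Fintype.card V) := by
    intro c hc
    simp only [mem_union, mem_filter, mem_univ, true_and] at hc ⊢
    by_cases hcc : (cd E b c : ℝ) < q * Fintype.card V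
    · exact Or.inr hcc
    · exact Or.inl ⟨hc, hj _ _ (not_lt.mp hcc)⟩
  have h3 : (cd E a b : ℝ) ≤ ((univ.filter fun c => E a b c ∧ Ext E j b c).card : ℝ) +
     ((univ.filter fun c => (cd E b c : ℝ) < q * Fintype.card V).card : ℝ) := by
    unfold cd at *
    exact_mod_cast (card_le_card h2).trans (card_union_le _ _)
  have hp := h.posR
  set n : ℝ := (Fintype.card V : ℝ)
  set k : ℝ := ((univ.filter fun b_1 => (cd E b b_1 : ℝ) < q * n).card : ℝ)
  have h4 : (1-q) * k ≤ (1-q) * ((q' - 0.0001) * n) := by nlinarith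
  have h5 := le_of_mul_le_mul_left h4 (by linarith)
  linarith

lemma Hyp.nice_ext (h : Hyp E) {a b} (hn : Nice E a b) : Ext E 7 a b := by
  have e0 : ∀ a b, (0.64:ℝ) * Fintype.card V ≤ cd E a b → Ext E 0 a b := by
    intro a b h; exact h
  have e1 := h.ext_step 0 0.64 0.556 (by norm_num) e0 (by norm_num)
  have e2 := h.ext_step 1 0.556 0.451 (by norm_num) e1 (by norm_num)
  have e3 := h.ext_step 2 0.451 0.3649 (by norm_num) e2 (by norm_num)
  have e4 := h.ext_step 3 0.3649 0.3153 (by norm_num) e3 (by norm_num)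
  have e5 := h.ext_step 4 0.3153 0.2925 (by norm_num) e4 (by norm_num)
  have e6 := h.ext_step 5 0.2925 0.283 (by norm_num) e5 (by norm_num)
  have e7 := h.ext_step 6 0.283 0.28 (by norm_num) e6 (by norm_num)
  exact e7 _ _ hn

lemma Hyp.nonedge (h : Hyp E) (v : V) (X Y : Finset V) :
    ((X ×ˢ Y).filter fun p => ¬ E v p.1 p.2).card ≤ (0.2001:ℝ) * (Fintype.card V:ℝ)^2 := by
  have h1 := h.deg v
  have h2 : ((X ×ˢ Y).filter fun p => ¬ E v p.1 p.2).card ≤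
    (univ.filter fun p : V × V => ¬ E v p.1 p.2).card := card_le_card (by intro p; simp)
  have h3 := Finset.card_filter_add_card_filter_not (s := (univ : Finset (V × V))) (fun p => E v p.1 p.2)
  rw [card_univ, Fintype.card_prod] at h3
  have h3' : ((univ.filter fun p : V × V => E v p.1 p.2).card : ℝ) +
    ((univ.filter fun p : V × V => ¬ E v p.1 p.2).card : ℝ) = Fintype.card V * Fintype.card V := by
    exact_mod_cast h3
  have h2' : (((X ×ˢ Y).filter fun p => ¬ E v p.1 p.2).card : ℝ) ≤
    ((univ.filter fun p : V × V => ¬ E v p.1 p.2).card : ℝ) := by exact_mod_cast h2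
  nlinarith

end P1
end TH

set_option linter.all false
set_option linter.unusedSectionVars false
open Finset
namespace TH
section P2
attribute [local instance 100000] Classical.propDecidable
attribute [local instance 100001] instDecidableEqBool

def Tight {V : Type} (E : V → V → V → Prop) : List V → Prop
  | a :: b :: c :: l => E a b c ∧ Tight E (b :: c :: l)
  | _ => True

noncomputable def lists (V : Type) [Fintype V] : ℕ → Finset (List V)
  | 0 => {[]}
  | (k+1) => (univ ×ˢ lists V k).image (fun p : V × List V => p.1 :: p.2)

variable {V : Type} [Fintype V] {E : V → V → V → Prop}

lemma mem_lists {k : ℕ} {l : List V} : l ∈ lists V k ↔ l.length = k := by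
  induction k generalizing l with
  | zero => simp [lists]
  | succ k ih =>
    cases l with
    | nil => simp [lists]
    | cons a l => simp [lists, ih]

lemma cnt_succ (k : ℕ) (P : List V → Prop) :
    ((lists V (k+1)).filter P).card = ∑ x, ((lists V k).filter fun l => P (x :: l)).card := by
  have : (lists V (k+1)).filter P =
    (univ : Finset V).biUnion fun x => (((lists V k).filter fun l => P (x :: l)).image (List.cons x)) := by
    ext l
    cases l with
    | nil => simp [mem_lists]
    | cons a l => simp [mem_lists]
  rw [this, card_biUnion]
  · apply sum_congr rfl
    intro x _
    rw [card_image_of_injective _ List.cons_injective]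
  · intro x _ y _ hxy
    simp only [Function.onFun, disjoint_left, mem_image]
    rintro l ⟨a, _, rfl⟩ ⟨b, _, hb⟩
    simp at hb
    exact hxy hb.1.symm

lemma card_lists (k : ℕ) : (lists V k).card = Fintype.card V ^ k := by
  induction k with
  | zero => simp [lists]
  | succ k ih =>
    have := cnt_succ (V := V) k (fun _ => True)
    simp only [filter_true] at this
    rw [this, sum_const, ih, card_univ, smul_eq_mul, pow_succ, mul_comm]

lemma tight_cons3 {a b c : V} {l} : Tight E (a :: b :: c :: l) ↔ E a b c ∧ Tight E (b :: c :: l) := by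
  simp [Tight]

lemma tight_tail {a : V} {l} (h : Tight E (a :: l)) : Tight E l := by
  match l with
  | [] => trivial
  | [b] => trivial
  | b :: c :: l => exact h.2

lemma tight_glue {l r : List V} {c d : V} (h1 : Tight E (l ++ [c, d])) (h2 : Tight E (c :: d :: r)) :
    Tight E (l ++ c :: d :: r) := by
  induction l with
  | nil => simpa using h2
  | cons a l ih =>
    have h3 := ih (tight_tail h1)
    match l with
    | [] => exact ⟨h1.1, h3⟩
    | [b] => exact ⟨h1.1, h3⟩
    | b :: e :: l => exact ⟨h1.1, h3⟩

lemma Hyp.tight_reverse (h : Hyp E) {l : List V} (hl : Tight E l) : Tight E l.reverse := by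
  induction l with
  | nil => trivial
  | cons a l ih =>
    match l with
    | [] => trivial
    | [b] => trivial
    | b :: c :: l =>
      have h1 := ih hl.2
      have h2 : E c b a := by
        have := hl.1
        exact h.s1 _ _ _ (h.s2 _ _ _ (h.s1 _ _ _ this))
      simp only [List.reverse_cons, List.append_assoc, List.cons_append, List.nil_append] at h1 ⊢
      exact tight_glue h1 ⟨h2, trivial⟩

noncomputable def Conn (E : V → V → V → Prop) (M : ℕ) (a b c d : V) : Finset (List V) :=
  (lists V M).filter fun y => Tight E (a :: b :: (y ++ [c, d]))

lemma Hyp.conn_rev (h : Hyp E) (M : ℕ) (a b c d : V) :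
    (Conn E M a b c d).card ≤ (Conn E M d c b a).card := by
  apply card_le_card_of_injOn List.reverse
  · intro y hy
    simp only [Conn, coe_filter, Set.mem_ofPred_eq, mem_lists] at hy ⊢
    refine ⟨by simpa using hy.1, ?_⟩
    have := h.tight_reverse hy.2
    simpa using this
  · intro x _ y _ hxy
    exact List.reverse_injective hxy

lemma conn_step {M j : ℕ} {κ : ℝ} (hκ : 0 ≤ κ) {c d : V}
    (hj : ∀ a b, Ext E j a b → κ * (Fintype.card V:ℝ)^M ≤ (Conn E M a b c d).card) :
    ∀ a b, Ext E (j+1) a b → (κ * 0.0001) * (Fintype.card V:ℝ)^(M+1) ≤ (Conn E (M+1) a b c d).card := by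
  intro a b hab
  unfold Ext at hab
  unfold Conn
  rw [cnt_succ]
  push_cast
  have h1 : ∑ x ∈ univ.filter (fun x => E a b x ∧ Ext E j b x), κ * (Fintype.card V:ℝ)^M ≤
    ∑ x : V, (((lists V M).filter fun l => Tight E (a :: b :: (x :: l ++ [c, d]))).card : ℝ) := by
    rw [sum_filter]
    apply sum_le_sum
    intro x _
    split_ifs with hx
    · refine (hj b x hx.2).trans ?_
      norm_cast
      apply card_le_card
      intro y hy
      simp only [Conn, mem_filter] at hy ⊢
      exact ⟨hy.1, hx.1, hy.2⟩
    · positivity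
  refine le_trans ?_ h1
  rw [sum_const, nsmul_eq_mul]
  have : 0 ≤ κ * (Fintype.card V:ℝ)^M := by positivity
  calc _ = (0.0001 * (Fintype.card V:ℝ)) * (κ * (Fintype.card V:ℝ)^M) := by ring
    _ ≤ _ := mul_le_mul_of_nonneg_right hab this

lemma conn_steps {M : ℕ} {κ : ℝ} (hκ : 0 ≤ κ) {c d : V}
    (h0 : ∀ a b, Ext E 0 a b → κ * (Fintype.card V:ℝ)^M ≤ (Conn E M a b c d).card) (j : ℕ) :
    ∀ a b, Ext E j a b → (κ * 0.0001^j) * (Fintype.card V:ℝ)^(M+j) ≤ (Conn E (M+j) a b c d).card := by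
  induction j with
  | zero => simpa using h0
  | succ j ih =>
    have := conn_step (by positivity) ih
    intro a b hab
    have h2 := this a b hab
    rw [pow_succ (0.0001:ℝ), ← mul_assoc]
    exact h2

lemma Hyp.conn0 (h : Hyp E) {a b c d : V} (h1 : Ext E 0 a b) (h2 : Ext E 0 d c) :
    0.009 * (Fintype.card V:ℝ)^2 ≤ (Conn E 2 a b c d).card := by
  unfold Ext at h1 h2
  set X := univ.filter fun x => E a b x with hX
  set Y := univ.filter fun y => E d c y with hY
  have hb := h.nonedge b X Y
  have hc := h.nonedge c X Y
  have hXc : (X.card : ℝ) = cd E a b := rfl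
  have hYc : (Y.card : ℝ) = cd E d c := rfl
  set B := (X ×ˢ Y).filter fun p => ¬ E b p.1 p.2
  set C := (X ×ˢ Y).filter fun p => ¬ E c p.1 p.2
  set G := (X ×ˢ Y).filter fun p => E b p.1 p.2 ∧ E c p.1 p.2 with hG
  have hcov : X ×ˢ Y ⊆ G ∪ (B ∪ C) := by
    intro p hp
    simp only [G, B, C, mem_union, mem_filter]
    tauto
  have hcard : ((X.card:ℝ) * Y.card) ≤ G.card + (B.card + C.card) := by
    have := (card_le_card hcov).trans ((card_union_le _ _).trans
      (Nat.add_le_add_left (card_union_le _ _) _))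
    rw [card_product] at this
    exact_mod_cast this
  have hGc : G.card ≤ (Conn E 2 a b c d).card := by
    apply card_le_card_of_injOn (fun p => [p.1, p.2])
    · intro p hp
      simp only [hG, hX, hY, coe_filter, mem_product, mem_filter, mem_univ, true_and, Set.mem_ofPred_eq] at hp
      simp only [Conn, coe_filter, Set.mem_ofPred_eq, mem_lists]
      obtain ⟨⟨p1, p2⟩, p3, p4⟩ := hp
      refine ⟨by simp, p1, p3, ?_, ?_, ?_⟩
      · exact h.s2 _ _ _ (h.s1 _ _ _ p4)
      · exact h.s1 _ _ _ (h.s2 _ _ _ (h.s1 _ _ _ p2))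
      · trivial
    · intro p _ q _ hpq
      simp at hpq
      exact Prod.ext hpq.1 hpq.2
  have hGc' : (G.card:ℝ) ≤ (Conn E 2 a b c d).card := by exact_mod_cast hGc
  have hp := h.posR
  have : (0.64 * (Fintype.card V:ℝ)) * (0.64 * (Fintype.card V:ℝ)) ≤ (X.card:ℝ) * Y.card := by
    rw [hXc, hYc]
    exact mul_le_mul h1 h2 (by positivity) (by positivity)
  nlinarith

lemma Hyp.conn (h : Hyp E) {a b c d : V} (h1 : Nice E a b) (h2 : Nice E c d) :
    (0.009 * 0.0001^14) * (Fintype.card V:ℝ)^16 ≤ (Conn E 16 a b c d).card := by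
  have s1 : ∀ c d : V, Ext E 0 d c → ∀ a b, Ext E 7 a b →
      (0.009 * 0.0001^7) * (Fintype.card V:ℝ)^(2+7) ≤ (Conn E (2+7) a b c d).card := by
    intro c d hcd
    exact conn_steps (by norm_num) (fun a b hab => h.conn0 hab hcd) 7
  have s2 : ∀ a b : V, Ext E 7 a b → ∀ d c, Ext E 7 d c →
      ((0.009 * 0.0001^7) * 0.0001^7) * (Fintype.card V:ℝ)^(2+7+7) ≤ (Conn E (2+7+7) d c b a).card := by
    intro a b hab
    apply conn_steps (by norm_num) _ 7
    intro d c hcd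
    refine (s1 c d hcd a b hab).trans ?_
    exact_mod_cast h.conn_rev _ _ _ _ _
  have s3 := s2 a b (h.nice_ext h1) d c (h.nice_ext (h.nice_comm h2))
  have s4 := h.conn_rev (2+7+7) d c b a
  refine le_trans (le_of_eq ?_) (s3.trans (by exact_mod_cast s4))
  norm_num

end P2
end TH

set_option linter.all false
set_option linter.unusedSectionVars false
open Finset
namespace TH
section P3
attribute [local instance 100000] Classical.propDecidable
attribute [local instance 100001] instDecidableEqBool

structure Blk (V : Type) where
  a : V
  b : V
  m : List V
  c : V
  d : V

def Blk.toList {V : Type} (B : Blk V) : List V := B.a :: B.b :: (B.m ++ [B.c, B.d])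

def AbsB {V : Type} (E : V → V → V → Prop) (v : V) (B : Blk V) : Prop :=
  ∃ m' : List V, Tight E (B.a :: B.b :: (m' ++ [B.c, B.d])) ∧ m'.Perm (v :: B.m)

def IsBlk {V : Type} [Fintype V] (E : V → V → V → Prop) (B : Blk V) : Prop :=
  Tight E B.toList ∧ Nice E B.a B.b ∧ Nice E B.c B.d

def Abs {V : Type} [Fintype V] (E : V → V → V → Prop) (v : V) (l : List V) : Prop :=
  ∃ B : Blk V, B.toList = l ∧ IsBlk E B ∧ AbsB E v B

lemma card_fiber {α β : Type} (S : Finset α) (T : Finset β) (P : α → β → Prop) {t : ℝ}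
    (h : ∀ x ∈ S, t ≤ ((T.filter (P x)).card : ℝ)) :
    S.card * t ≤ (((S ×ˢ T).filter fun p => P p.1 p.2).card : ℝ) := by
  have : (((S ×ˢ T).filter fun p => P p.1 p.2).card : ℝ) = ∑ x ∈ S, ((T.filter (P x)).card : ℝ) := by
    rw [card_filter, sum_product]
    push_cast
    apply sum_congr rfl
    intro x _
    rw [card_filter]; push_cast; rfl
  rw [this, ← nsmul_eq_mul, ← sum_const]
  exact sum_le_sum h

variable {V : Type} [Fintype V] {E : V → V → V → Prop}

lemma card_two (A D : V → Prop) :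
   ((univ.filter fun q : V × V => A q.1 ∧ D q.2).card : ℝ) =
     ((univ.filter A).card : ℝ) * ((univ.filter D).card : ℝ) := by
  rw [← Nat.cast_mul, ← card_product]; congr 2; ext q; simp

/-- walks of length three -/
lemma walks (R : V → V → Prop) (hR : ∀ x y, R x y → R y x) (ρ : ℝ) (hρ : 0 ≤ ρ)
    (hcard : ρ * (Fintype.card V:ℝ)^2 ≤ ((univ.filter fun p : V × V => R p.1 p.2).card : ℝ)) :
    (ρ/2 * (ρ/4)^2) * (Fintype.card V:ℝ)^4 ≤
      ((univ.filter fun p : (V × V) × (V × V) =>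
        R p.1.1 p.1.2 ∧ R p.1.1 p.2.1 ∧ R p.1.2 p.2.2).card : ℝ) := by
  set n : ℝ := (Fintype.card V:ℝ) with hn
  have hn0 : 0 ≤ n := by positivity
  set dg : V → ℝ := fun b => ((univ.filter fun a => R b a).card : ℝ) with hdg
  set S := univ.filter fun p : V × V => R p.1 p.2 ∧ ρ/4*n ≤ dg p.1 ∧ ρ/4*n ≤ dg p.2 with hS
  set L1 := univ.filter fun p : V × V => R p.1 p.2 ∧ dg p.1 < ρ/4*n with hL1
  set L2 := univ.filter fun p : V × V => R p.1 p.2 ∧ dg p.2 < ρ/4*n with hL2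
  have hL1c : (L1.card : ℝ) ≤ ρ/4 * n^2 := by
    have : (L1.card : ℝ) = ∑ x : V, ((univ.filter fun y => R x y ∧ dg x < ρ/4*n).card : ℝ) := by
      rw [hL1, card_filter, ← univ_product_univ, sum_product]
      push_cast
      apply sum_congr rfl
      intro x _
      rw [card_filter]; push_cast; rfl
    rw [this]
    have : ∀ x ∈ (univ : Finset V), ((univ.filter fun y => R x y ∧ dg x < ρ/4*n).card : ℝ) ≤ ρ/4*n := by
      intro x _
      by_cases hx : dg x < ρ/4*n
      · simp only [hx, and_true]; exact hx.le
      · simp only [hx, and_false]; simp; positivity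
    refine (sum_le_sum this).trans ?_
    rw [sum_const, nsmul_eq_mul, card_univ, ← hn]
    apply le_of_eq; ring
  have hL2c : L2.card ≤ L1.card := by
    apply card_le_card_of_injOn Prod.swap
    · intro p hp
      simp only [hL1, hL2, coe_filter, mem_univ, true_and, Set.mem_ofPred_eq] at hp ⊢
      exact ⟨hR _ _ hp.1, hp.2⟩
    · exact Prod.swap_injective.injOn
  have hL2c' : (L2.card : ℝ) ≤ L1.card := by exact_mod_cast hL2c
  have hcov : (univ.filter fun p : V × V => R p.1 p.2) ⊆ S ∪ (L1 ∪ L2) := by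
    intro p hp
    simp only [hS, hL1, hL2, mem_union, mem_filter, mem_univ, true_and] at hp ⊢
    by_cases h1 : ρ/4*n ≤ dg p.1
    · by_cases h2 : ρ/4*n ≤ dg p.2
      · exact Or.inl ⟨hp, h1, h2⟩
      · exact Or.inr (Or.inr ⟨hp, not_le.mp h2⟩)
    · exact Or.inr (Or.inl ⟨hp, not_le.mp h1⟩)
  have hSc : ρ/2 * n^2 ≤ S.card := by
    have := (card_le_card hcov).trans ((card_union_le _ _).trans
      (Nat.add_le_add_left (card_union_le _ _) _))
    have : ((univ.filter fun p : V × V => R p.1 p.2).card : ℝ) ≤ S.card + (L1.card + L2.card) := by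
      exact_mod_cast this
    linarith
  have := card_fiber S (univ : Finset (V × V)) (fun p q => R p.1 q.1 ∧ R p.2 q.2) (t := (ρ/4*n)^2) (by
    intro p hp
    simp only [hS, mem_filter, mem_univ, true_and] at hp
    rw [card_two (fun a => R p.1 a) (fun d => R p.2 d), sq]
    exact mul_le_mul hp.2.1 hp.2.2 (by positivity) (le_trans (by positivity) hp.2.1))
  calc _ = (ρ/2 * n^2) * (ρ/4*n)^2 := by ring
    _ ≤ S.card * (ρ/4*n)^2 := mul_le_mul_of_nonneg_right hSc (by positivity)
    _ ≤ _ := this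
    _ ≤ _ := by
      norm_cast
      apply card_le_card
      intro p hp
      simp only [hS, mem_filter, mem_product, mem_univ, true_and, and_true] at hp ⊢
      exact ⟨hp.1.1, hp.2⟩

lemma Hyp.p1 (h : Hyp E) (v x : V) :
    (0.001:ℝ) * (Fintype.card V:ℝ)^4 ≤
      ((univ.filter fun p : (V × V) × (V × V) =>
        (E v p.1.1 p.1.2 ∧ E x p.1.1 p.1.2) ∧
        (E v p.1.1 p.2.1 ∧ E x p.1.1 p.2.1 ∧ Nice E p.1.1 p.2.1) ∧
        (E v p.1.2 p.2.2 ∧ E x p.1.2 p.2.2 ∧ Nice E p.1.2 p.2.2)).card : ℝ) := by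
  have hw := walks (fun a b => E v a b ∧ E x a b ∧ Nice E a b)
    (fun a b hab => ⟨h.s2 _ _ _ hab.1, h.s2 _ _ _ hab.2.1, h.nice_comm hab.2.2⟩) 0.32 (by norm_num) (by
      have h1 := h.nonedge v univ univ
      have h2 := h.nonedge x univ univ
      have h3 : (((univ ×ˢ univ : Finset (V × V)).filter fun p => ¬ Nice E p.1 p.2).card : ℝ) ≤
          0.278 * (Fintype.card V:ℝ)^2 := by
        rw [card_filter, sum_product]
        push_cast
        have : ∀ y ∈ (univ : Finset V), (∑ z : V, if ¬ Nice E y z then (1:ℝ) else 0) ≤ 0.278 * Fintype.card V := by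
          intro y _
          have := h.nonnice y
          rw [card_filter] at this
          push_cast at this
          exact this
        refine (sum_le_sum this).trans ?_
        rw [sum_const, nsmul_eq_mul, card_univ]
        apply le_of_eq; ring
      set B1 := (univ ×ˢ univ : Finset (V × V)).filter fun p => ¬ E v p.1 p.2 with hB1
      set B2 := (univ ×ˢ univ : Finset (V × V)).filter fun p => ¬ E x p.1 p.2 with hB2
      set B3 := (univ ×ˢ univ : Finset (V × V)).filter fun p => ¬ Nice E p.1 p.2 with hB3
      set G := (univ : Finset (V × V)).filter fun p => E v p.1 p.2 ∧ E x p.1 p.2 ∧ Nice E p.1 p.2 with hG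
      have hcov : (univ : Finset (V × V)) ⊆ G ∪ (B1 ∪ (B2 ∪ B3)) := by
        intro p _
        simp only [hG, hB1, hB2, hB3, mem_union, mem_filter, mem_univ, true_and, mem_product]
        tauto
      have h4 := (card_le_card hcov).trans ((card_union_le _ _).trans
        (Nat.add_le_add_left ((card_union_le _ _).trans (Nat.add_le_add_left (card_union_le _ _) _)) _))
      rw [card_univ, Fintype.card_prod] at h4
      have h5 : (Fintype.card V:ℝ) * Fintype.card V ≤ G.card + (B1.card + (B2.card + B3.card)) := by
        exact_mod_cast h4
      nlinarith)
  refine le_trans ?_ (hw.trans ?_)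
  · have : (0:ℝ) ≤ (Fintype.card V:ℝ)^4 := by positivity
    nlinarith
  · norm_cast
    apply card_le_card
    intro p
    simp only [mem_filter, mem_univ, true_and]
    tauto

/-- the self-absorbing condition -/
def P2 (E : V → V → V → Prop) (z : ((V × V) × V) × (V × V)) : Prop :=
  (E z.1.1.1 z.1.1.2 z.1.2) ∧
  (E z.1.1.1 z.1.1.2 z.2.1 ∧ E z.1.1.1 z.2.1 z.1.2 ∧ Nice E z.1.1.1 z.2.1) ∧
  (E z.1.1.1 z.1.1.2 z.2.2 ∧ E z.1.1.2 z.2.2 z.1.2 ∧ Nice E z.1.1.2 z.2.2)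

lemma Hyp.iso (h : Hyp E) (b : V) (D : Finset V) (hD : 0.795 * (Fintype.card V:ℝ) ≤ D.card) :
    ((D.filter fun x => ((univ.filter fun a => a ∈ D ∧ E b a x ∧ Nice E b a).card : ℝ) <
      0.0001 * (Fintype.card V:ℝ)).card : ℝ) ≤ 0.388 * (Fintype.card V:ℝ) := by
  set n : ℝ := (Fintype.card V:ℝ) with hn
  have hp : 0 < n := h.posR
  set I := D.filter fun x => ((univ.filter fun a => a ∈ D ∧ E b a x ∧ Nice E b a).card : ℝ) < 0.0001 * n with hI
  set D' := D.filter fun a => Nice E b a with hD'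
  have h1 : 0.517 * n ≤ D'.card := by
    have h2 := h.nonnice b
    have h3 : D ⊆ D' ∪ univ.filter fun a => ¬ Nice E b a := by
      intro a ha
      simp only [hD', mem_union, mem_filter, mem_univ, true_and]
      tauto
    have h4 := (card_le_card h3).trans (card_union_le _ _)
    have h5 : (D.card:ℝ) ≤ D'.card + (univ.filter fun a => ¬ Nice E b a).card := by exact_mod_cast h4
    rw [← hn] at h2
    linarith
  have h2 := h.nonedge b I D'
  have h3 := card_fiber I D' (fun x a => ¬ E b x a) (t := 0.5169 * n) (by
    intro x hx
    simp only [hI, mem_filter] at hx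
    have h4 := Finset.card_filter_add_card_filter_not (s := D') (fun a => E b x a)
    have h4' : ((D'.filter fun a => E b x a).card : ℝ) + ((D'.filter fun a => ¬ E b x a).card : ℝ) = D'.card := by
      exact_mod_cast h4
    have h5 : (D'.filter fun a => E b x a) ⊆ univ.filter fun a => a ∈ D ∧ E b a x ∧ Nice E b a := by
      intro a ha
      simp only [hD', mem_filter, mem_univ, true_and] at ha ⊢
      exact ⟨ha.1.1, h.s2 _ _ _ ha.2, ha.1.2⟩
    have h6 : ((D'.filter fun a => E b x a).card : ℝ) ≤ (univ.filter fun a => a ∈ D ∧ E b a x ∧ Nice E b a).card := by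
      exact_mod_cast card_le_card h5
    linarith [hx.2])
  have h4 : (I.card * 0.5169) * n ≤ (0.2001 * n) * n := by
    rw [← hn] at h2
    nlinarith
  have h5 := le_of_mul_le_mul_right h4 hp
  linarith

lemma Hyp.p2 (h : Hyp E) : ((0.0049 * 0.018) * (0.0001)^2 : ℝ) * (Fintype.card V:ℝ)^5 ≤
    ((univ.filter (P2 E)).card : ℝ) := by
  set n : ℝ := (Fintype.card V:ℝ) with hn
  have hp : 0 < n := h.posR
  set S0 := ((univ : Finset V) ×ˢ (univ : Finset V)).filter fun p => 0.795 * n ≤ cd E p.1 p.2 with hS0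
  have c0 : n * (0.0049 * n) ≤ S0.card := by
    have := card_fiber (univ : Finset V) (univ : Finset V) (fun b c => 0.795 * n ≤ cd E b c) (t := 0.0049 * n) (by
      intro b _
      have h1 := h.deg b
      rw [← sum_cd, ← hn] at h1
      push_cast at h1
      have h2 : ∑ c, (cd E b c : ℝ) ≤ ∑ c : V, (0.795 * n + if 0.795 * n ≤ cd E b c then n else 0) := by
        apply sum_le_sum
        intro c _
        split_ifs with hc
        · have := cd_le (E := E) b c; rw [← hn] at this; linarith
        · linarith [not_le.mp hc]
      rw [sum_add_distrib, ← sum_filter, sum_const, sum_const, nsmul_eq_mul, nsmul_eq_mul, card_univ, ← hn] at h2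
      set k : ℝ := ((univ.filter fun c => 0.795 * n ≤ (cd E b c : ℝ)).card : ℝ)
      have h3 : (0.0049 * n) * n ≤ k * n := by nlinarith
      exact le_of_mul_le_mul_right h3 hp)
    rwa [card_univ, ← hn] at this
  set Cnd : V × V → V → Prop := fun q x => E q.1 q.2 x ∧
     0.0001 * n ≤ ((univ.filter fun a => E q.1 q.2 a ∧ E q.1 a x ∧ Nice E q.1 a).card : ℝ) ∧
     0.0001 * n ≤ ((univ.filter fun a => E q.1 q.2 a ∧ E q.2 a x ∧ Nice E q.2 a).card : ℝ) with hCnd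
  have c1 := card_fiber S0 (univ : Finset V) Cnd (t := 0.018 * n) (by
    rintro ⟨b, c⟩ hbc
    simp only [hS0, mem_filter, mem_product, mem_univ, true_and] at hbc
    set D := univ.filter fun x => E b c x with hD
    have hDc : 0.795 * n ≤ D.card := hbc
    have i1 := h.iso b D hDc
    have i2 := h.iso c D hDc
    rw [← hn] at i1 i2
    set I1 := D.filter fun x => ((univ.filter fun a => a ∈ D ∧ E b a x ∧ Nice E b a).card : ℝ) < 0.0001 * n with hI1
    set I2 := D.filter fun x => ((univ.filter fun a => a ∈ D ∧ E c a x ∧ Nice E c a).card : ℝ) < 0.0001 * n with hI2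
    have hcov : D ⊆ univ.filter (Cnd (b, c)) ∪ (I1 ∪ I2) := by
      intro x hx
      simp only [mem_union, hI1, hI2, mem_filter, hx, true_and, mem_univ, hCnd]
      have hx' : E b c x := by simpa [hD] using hx
      simp only [hD, mem_filter, mem_univ, true_and, hx']
      rw [← not_le, ← not_le]
      tauto
    have h4 := (card_le_card hcov).trans ((card_union_le _ _).trans
        (Nat.add_le_add_left (card_union_le _ _) _))
    have h5 : (D.card:ℝ) ≤ (univ.filter (Cnd (b, c))).card + (I1.card + I2.card) := by exact_mod_cast h4
    linarith)
  set S1 := (S0 ×ˢ (univ : Finset V)).filter fun p => Cnd p.1 p.2 with hS1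
  have c2 := card_fiber S1 (univ : Finset (V × V)) (fun p q => P2 E (p, q)) (t := (0.0001 * n)^2) (by
    rintro ⟨⟨b, c⟩, x⟩ hx
    simp only [hS1, mem_filter, hCnd] at hx
    obtain ⟨-, hx1, hx2, hx3⟩ := hx
    have : ((univ.filter fun q => P2 E (((b, c), x), q)).card : ℝ) =
       ((univ.filter fun a => E b c a ∧ E b a x ∧ Nice E b a).card : ℝ) *
       ((univ.filter fun a => E b c a ∧ E c a x ∧ Nice E c a).card : ℝ) := by
      rw [← card_two]
      simp only [P2, hx1, true_and]
    rw [this, sq]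
    exact mul_le_mul hx2 hx3 (by positivity) (le_trans (by positivity) hx2))
  calc _ = ((n * (0.0049 * n)) * (0.018 * n)) * (0.0001 * n)^2 := by ring
    _ ≤ S1.card * (0.0001 * n)^2 := by
      apply mul_le_mul_of_nonneg_right _ (by positivity)
      exact (mul_le_mul_of_nonneg_right c0 (by positivity)).trans c1
    _ ≤ _ := c2
    _ ≤ _ := by
      norm_cast
      apply card_le_card
      intro p hp
      simp only [mem_filter, mem_univ, true_and] at hp ⊢
      exact hp.2

noncomputable def κa : ℝ := (((0.0049 * 0.018) * (0.0001)^2) * 0.001) * (0.009 * 0.0001^14)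

lemma κa_pos : 0 < κa := by unfold κa; norm_num

lemma Hyp.absorb (h : Hyp E) (v : V) : κa * (Fintype.card V:ℝ)^25 ≤
    (((lists V 25).filter (Abs E v)).card : ℝ) := by
  set n : ℝ := (Fintype.card V:ℝ) with hn
  have hp : 0 < n := h.posR
  set S1 := univ.filter (P2 E) with hS1
  have c0 := h.p2
  rw [← hn, ← hS1] at c0
  set Q1 : (((V × V) × V) × (V × V)) → ((V × V) × (V × V)) → Prop := fun z p =>
        (E v p.1.1 p.1.2 ∧ E z.1.2 p.1.1 p.1.2) ∧
        (E v p.1.1 p.2.1 ∧ E z.1.2 p.1.1 p.2.1 ∧ Nice E p.1.1 p.2.1) ∧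
        (E v p.1.2 p.2.2 ∧ E z.1.2 p.1.2 p.2.2 ∧ Nice E p.1.2 p.2.2) with hQ1
  have c1 := card_fiber S1 (univ : Finset ((V × V) × (V × V))) Q1 (t := 0.001 * n^4) (by
    intro z _
    exact h.p1 v z.1.2)
  set S2 := (S1 ×ˢ (univ : Finset ((V × V) × (V × V)))).filter fun p => Q1 p.1 p.2 with hS2
  have c2 := card_fiber S2 (lists V 16)
    (fun p y => Tight E (p.2.1.2 :: p.2.2.2 :: (y ++ [p.1.2.1, p.1.1.1.1])))
    (t := (0.009 * 0.0001^14) * n^16) (by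
    intro p hp
    simp only [hS2, mem_filter, hQ1, hS1, mem_product, P2, mem_univ, true_and, and_true] at hp
    have := h.conn (a := p.2.1.2) (b := p.2.2.2) (c := p.1.2.1) (d := p.1.1.1.1) hp.2.2.2.2.2
       (h.nice_comm hp.1.2.1.2.2)
    exact this)
  set S3 := (S2 ×ˢ lists V 16).filter
    fun q => Tight E (q.1.2.1.2 :: q.1.2.2.2 :: (q.2 ++ [q.1.1.2.1, q.1.1.1.1.1])) with hS3
  have c3 : S3.card ≤ ((lists V 25).filter (Abs E v)).card := by
    apply card_le_card_of_injOn (fun q =>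
      q.1.2.2.1 :: q.1.2.1.1 :: q.1.1.1.2 :: q.1.2.1.2 :: q.1.2.2.2 :: (q.2 ++
        [q.1.1.2.1, q.1.1.1.1.1, q.1.1.1.1.2, q.1.1.2.2]))
    · rintro ⟨⟨⟨⟨⟨b', c'⟩, x⟩, ⟨a', d'⟩⟩, ⟨⟨b, c⟩, ⟨a, d⟩⟩⟩, y⟩ hq
      simp only [hS3, hS2, hS1, hQ1, P2, coe_filter, mem_filter, mem_product, mem_univ, true_and, and_true,
        Set.mem_ofPred_eq, mem_lists] at hq
      obtain ⟨⟨⟨⟨p1, ⟨p2, p3, p4⟩, ⟨p5, p6, p7⟩⟩, ⟨q1, q2⟩, ⟨q3, q4, q5⟩, ⟨q6, q7, q8⟩⟩, hy⟩, ht⟩ := hq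
      simp only [coe_filter, mem_lists, Set.mem_ofPred_eq]
      refine ⟨by simp [hy], ⟨a, b, x :: c :: d :: (y ++ [a', b']), c', d'⟩, by simp [Blk.toList], ⟨?_, h.nice_comm q5, p7⟩, ?_⟩
      · have t1 : Tight E ([a, b, x] ++ [c, d]) := by
          refine ⟨?_, ?_, ?_, trivial⟩
          · exact h.s1 _ _ _ (h.s2 _ _ _ (h.s1 _ _ _ q4))
          · exact h.s1 _ _ _ q2
          · exact q7
        have t2 : Tight E ((c :: d :: y) ++ [a', b']) := by simpa using ht
        have t3 : Tight E [a', b', c', d'] := by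
          refine ⟨?_, ?_, trivial⟩
          · exact h.s1 _ _ _ (h.s2 _ _ _ p2)
          · exact p5
        have t4 := tight_glue t1 (by simpa using tight_glue t2 t3)
        simpa [Blk.toList] using t4
      · refine ⟨v :: c :: d :: (y ++ [a', b', x]), ?_, ?_⟩
        · have t1 : Tight E ([a, b, v] ++ [c, d]) := by
            refine ⟨?_, ?_, ?_, trivial⟩
            · exact h.s1 _ _ _ (h.s2 _ _ _ (h.s1 _ _ _ q3))
            · exact h.s1 _ _ _ q1
            · exact q6
          have t2 : Tight E ((c :: d :: y) ++ [a', b']) := by simpa using ht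
          have t3 : Tight E [a', b', x, c', d'] := by
            refine ⟨?_, ?_, ?_, trivial⟩
            · exact h.s1 _ _ _ p3
            · exact h.s2 _ _ _ p1
            · exact h.s1 _ _ _ (h.s2 _ _ _ p6)
          have t4 := tight_glue t1 (by simpa using tight_glue t2 t3)
          simpa [Blk.toList] using t4
        · refine List.Perm.cons v ?_
          show (c :: d :: (y ++ [a', b', x])).Perm (x :: c :: d :: (y ++ [a', b']))
          have : c :: d :: (y ++ [a', b', x]) = (c :: d :: (y ++ [a', b'])) ++ [x] := by simp
          rw [this]
          exact List.perm_append_singleton _ _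
    · rintro ⟨⟨⟨⟨⟨b', c'⟩, x⟩, ⟨a', d'⟩⟩, ⟨⟨b, c⟩, ⟨a, d⟩⟩⟩, y⟩ hq ⟨⟨⟨⟨⟨b2', c2'⟩, x2⟩, ⟨a2', d2'⟩⟩, ⟨⟨b2, c2⟩, ⟨a2, d2⟩⟩⟩, y2⟩ hq2 heq
      simp only [hS3, coe_filter, mem_filter, mem_product, Set.mem_ofPred_eq, mem_lists] at hq hq2
      simp only [List.cons.injEq] at heq
      obtain ⟨e1, e2, e3, e4, e5, e6⟩ := heq
      obtain ⟨e7, e8⟩ := List.append_inj e6 (by rw [hq.1.2, hq2.1.2])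
      simp only [List.cons.injEq] at e8
      simp [e1, e2, e3, e4, e5, e7, e8]
  calc _ = ((((0.0049 * 0.018) * (0.0001)^2 : ℝ) * n^5) * (0.001 * n^4)) * ((0.009 * 0.0001^14) * n^16) := by
        unfold κa; ring
    _ ≤ S2.card * ((0.009 * 0.0001^14) * n^16) := by
      apply mul_le_mul_of_nonneg_right _ (by positivity)
      exact (mul_le_mul_of_nonneg_right c0 (by positivity)).trans c1
    _ ≤ _ := c2
    _ ≤ _ := by exact_mod_cast c3

end P3
end TH

set_option linter.all false
set_option linter.unusedSectionVars false
open Finset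
namespace TH
section P4
attribute [local instance 100000] Classical.propDecidable
attribute [local instance 100001] instDecidableEqBool
variable {V : Type} [Fintype V] {E : V → V → V → Prop}

def Good (U : Finset V) (l : List V) : Prop := l.Nodup ∧ ∀ x ∈ l, x ∉ U

lemma good_cons (U : Finset V) (x : V) (l : List V) :
    Good U (x :: l) ↔ x ∉ U ∧ Good (insert x U) l := by
  unfold Good
  simp only [List.nodup_cons, List.mem_cons, forall_eq_or_imp, mem_insert, not_or]
  constructor
  · rintro ⟨⟨h1, h2⟩, h3, h4⟩
    exact ⟨h3, h2, fun y hy => ⟨fun e => h1 (e ▸ hy), h4 y hy⟩⟩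
  · rintro ⟨h3, h2, h4⟩
    exact ⟨⟨fun hx => (h4 x hx).1 rfl, h2⟩, h3, fun y hy => (h4 y hy).2⟩

lemma trim (k : ℕ) : ∀ U : Finset V, ((lists V k).filter fun l => ¬ Good U l).card * Fintype.card V ≤
    k * (U.card + k) * Fintype.card V ^ k := by
  induction k with
  | zero => intro U; simp [lists, Good, filter_singleton]
  | succ k ih =>
    intro U
    rw [cnt_succ, sum_mul]
    set n := Fintype.card V
    have h1 : ∀ x ∈ (univ : Finset V), ((lists V k).filter fun l => ¬ Good U (x :: l)).card * n ≤
       (if x ∈ U then n^(k+1) else 0) + k * (U.card + 1 + k) * n^k := by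
      intro x _
      split_ifs with hx
      · have : ((lists V k).filter fun l => ¬ Good U (x :: l)).card ≤ n^k := by
          rw [← card_lists]; exact card_filter_le _ _
        calc _ ≤ n^k * n := Nat.mul_le_mul_right _ this
          _ ≤ _ := by rw [← pow_succ]; exact Nat.le_add_right _ _
      · have e : ((lists V k).filter fun l => ¬ Good U (x :: l)) =
          (lists V k).filter fun l => ¬ Good (insert x U) l := by
          apply filter_congr; intro l _; rw [good_cons]; simp [hx]
        rw [e]
        refine (ih _).trans ?_
        rw [card_insert_of_notMem hx]
        exact Nat.le_add_left _ _
    refine (sum_le_sum h1).trans ?_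
    rw [sum_add_distrib, sum_const, ← sum_filter, sum_const]
    rw [show (univ.filter fun a => a ∈ U) = U by ext; simp]
    simp only [card_univ, smul_eq_mul]
    change U.card * n^(k+1) + n * (k * (U.card + 1 + k) * n^k) ≤ _
    calc _ = (U.card + k * (U.card + 1 + k)) * n^(k+1) := by ring
      _ ≤ _ := Nat.mul_le_mul_right _ (by nlinarith)

lemma trim' {k : ℕ} {η : ℝ} (hn : 0 < Fintype.card V) (U : Finset V)
    (hU : (k:ℝ) * (U.card + k) ≤ η * Fintype.card V) :
    (((lists V k).filter fun l => ¬ Good U l).card : ℝ) ≤ η * (Fintype.card V:ℝ)^k := by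
  have h1 : ((((lists V k).filter fun l => ¬ Good U l).card * Fintype.card V : ℕ):ℝ) ≤
    ((k * (U.card + k) * Fintype.card V ^ k : ℕ) : ℝ) := by exact_mod_cast trim k U
  push_cast at h1
  have hn' : (0:ℝ) < Fintype.card V := by exact_mod_cast hn
  have h2 : (((lists V k).filter fun l => ¬ Good U l).card : ℝ) * Fintype.card V ≤
     (η * (Fintype.card V:ℝ)^k) * Fintype.card V := by
    refine h1.trans ?_
    calc _ ≤ (η * Fintype.card V) * (Fintype.card V:ℝ)^k := mul_le_mul_of_nonneg_right hU (by positivity)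
      _ = _ := by ring
  exact le_of_mul_le_mul_right h2 hn'

noncomputable def verts (T : Finset (List V)) : Finset V := T.biUnion fun l => l.toFinset

structure Sys (K : ℕ) (U : Finset V) (T : Finset (List V)) : Prop where
  len : ∀ l ∈ T, l.length = K
  good : ∀ l ∈ T, Good U l
  disj : ∀ l ∈ T, ∀ l' ∈ T, l ≠ l' → l.Disjoint l'

lemma Sys.verts_card {K : ℕ} {U : Finset V} {T : Finset (List V)} (h : Sys K U T) :
    (verts T).card ≤ K * T.card := by
  unfold verts
  refine card_biUnion_le.trans ?_
  rw [mul_comm]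
  apply sum_le_card_nsmul
  intro l hl
  rw [← h.len l hl]; exact List.toFinset_card_le l

lemma sel_step {K : ℕ} (hK : 0 < K) {η : ℝ} (hη : 0 < η) (hη1 : η ≤ 1) (hn : 0 < Fintype.card V)
    {ι : Type} (J : Finset ι) (F : ι → List V → Prop)
    (hF : ∀ j ∈ J, η * (Fintype.card V:ℝ)^K ≤ ((lists V K).filter (F j)).card) (U0 : Finset V)
    (m : ℕ) (hm : (K:ℝ) * (U0.card + K * m + K) ≤ η/2 * Fintype.card V) :
    ∀ i ≤ m, ∃ T : Finset (List V), Sys K U0 T ∧ T.card = i ∧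
      ∑ j ∈ J, (1/2:ℝ)^((T.filter (F j)).card) ≤ J.card * (1 - η/4)^i := by
  intro i
  induction i with
  | zero => intro _; refine ⟨∅, ⟨by simp, by simp, by simp⟩, rfl, by simp⟩
  | succ i ih =>
    intro hi
    obtain ⟨T, hT, hTc, hΦ⟩ := ih (by omega)
    set n : ℝ := (Fintype.card V:ℝ) with hnn
    have hn' : (0:ℝ) < n := by rw [hnn]; exact_mod_cast hn
    set U := U0 ∪ verts T with hU
    have hUc : (U.card:ℝ) ≤ U0.card + K * m := by
      have h1 := (card_union_le U0 (verts T)).trans (Nat.add_le_add_left hT.verts_card _)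
      have h2 : U.card ≤ U0.card + K * m := h1.trans (Nat.add_le_add_left (Nat.mul_le_mul_left _ (by omega)) _)
      exact_mod_cast h2
    have hbad := trim' (k := K) (η := η/2) hn U (by
      refine le_trans ?_ hm
      apply mul_le_mul_of_nonneg_left _ (by positivity)
      linarith)
    rw [← hnn] at hbad
    set Bd := (lists V K).filter fun l => ¬ Good U l with hBd
    set G := (lists V K).filter fun l => Good U l with hG
    have hGB : (G.card:ℝ) + Bd.card = n^K := by
      have := Finset.card_filter_add_card_filter_not (s := lists V K) (fun l => Good U l)
      rw [card_lists] at this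
      rw [hnn]; exact_mod_cast this
    have hGpos : 0 < G.card := by
      have : (0:ℝ) < G.card := by
        have : 0 < n^K := by positivity
        nlinarith
      exact_mod_cast this
    have hGF : ∀ j ∈ J, η/2 * G.card ≤ (G.filter (F j)).card := by
      intro j hj
      have h1 := hF j hj
      have h2 : (lists V K).filter (F j) ⊆ G.filter (F j) ∪ Bd := by
        intro l hl
        simp only [hG, hBd, mem_union, mem_filter] at hl ⊢
        tauto
      have h3 : (((lists V K).filter (F j)).card:ℝ) ≤ (G.filter (F j)).card + Bd.card := by
        exact_mod_cast (card_le_card h2).trans (card_union_le _ _)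
      have h4 : (G.card:ℝ) ≤ n^K := by linarith [(Nat.cast_nonneg Bd.card : (0:ℝ) ≤ Bd.card)]
      nlinarith
    obtain ⟨l, hl, hle⟩ := Finset.exists_le_of_sum_le (s := G) (card_pos.mp hGpos)
      (f := fun l => ∑ j ∈ J, (1/2:ℝ)^((T.filter (F j)).card) * (1 - if F j l then 1/2 else 0))
      (g := fun _ => (1 - η/4) * ∑ j ∈ J, (1/2:ℝ)^((T.filter (F j)).card)) (by
        rw [sum_comm, sum_const, nsmul_eq_mul, mul_left_comm]
        rw [← mul_assoc, mul_sum]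
        apply sum_le_sum
        intro j hj
        rw [← mul_sum, mul_comm]
        apply mul_le_mul_of_nonneg_right _ (by positivity)
        rw [sum_sub_distrib, ← sum_filter, sum_const, sum_const, nsmul_eq_mul, nsmul_eq_mul]
        have := hGF j hj
        linarith)
    simp only [hG, mem_filter, mem_lists] at hl
    have hdis : ∀ l' ∈ T, l.Disjoint l' := by
      intro l' hl' x hx hx'
      apply hl.2.2 x hx
      simp only [hU, mem_union, verts, mem_biUnion, List.mem_toFinset]
      exact Or.inr ⟨l', hl', hx'⟩
    have hlT : l ∉ T := by
      intro h
      have := hdis l h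
      have h0 : l ≠ [] := by intro e; rw [e] at hl; simp at hl; omega
      obtain ⟨x, hx⟩ := List.exists_mem_of_ne_nil l h0
      exact this hx hx
    refine ⟨insert l T, ⟨?_, ?_, ?_⟩, ?_, ?_⟩
    · intro l' hl'
      rcases mem_insert.mp hl' with rfl | h
      · exact hl.1
      · exact hT.len _ h
    · intro l' hl'
      rcases mem_insert.mp hl' with rfl | h
      · exact ⟨hl.2.1, fun x hx hxU => hl.2.2 x hx (mem_union_left _ hxU)⟩
      · exact hT.good _ h
    · intro l1 h1 l2 h2 hne
      rcases mem_insert.mp h1 with e1 | h1'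
      · rcases mem_insert.mp h2 with e2 | h2'
        · exact absurd (e1.trans e2.symm) hne
        · rw [e1]; exact hdis _ h2'
      · rcases mem_insert.mp h2 with e2 | h2'
        · rw [e2]; exact (hdis _ h1').symm
        · exact hT.disj _ h1' _ h2' hne
    · rw [card_insert_of_notMem hlT, hTc]
    · have : ∀ j, (1/2:ℝ)^(((insert l T).filter (F j)).card) =
         (1/2:ℝ)^((T.filter (F j)).card) * (1 - if F j l then 1/2 else 0) := by
        intro j
        rw [filter_insert]
        split_ifs with hj
        · rw [card_insert_of_notMem (by simp [hlT]), pow_succ]; norm_num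
        · simp
      simp only [this]
      refine hle.trans ?_
      rw [pow_succ]
      have : 0 ≤ 1 - η/4 := by linarith
      calc _ ≤ (1 - η/4) * (J.card * (1 - η/4)^i) := mul_le_mul_of_nonneg_left hΦ this
        _ = _ := by ring

lemma selection (K : ℕ) (hK : 0 < K) (η : ℝ) (hη : 0 < η) (hη1 : η ≤ 1) (μ : ℝ) (hμ : 0 < μ) :
    ∃ N : ℕ, ∀ (V : Type) [Fintype V], N ≤ Fintype.card V → ∀ (ι : Type) (J : Finset ι)
      (F : ι → List V → Prop) (U0 : Finset V),
      J.card ≤ Fintype.card V ^ 4 →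
      (∀ j ∈ J, η * (Fintype.card V:ℝ)^K ≤ ((lists V K).filter (F j)).card) →
      (K:ℝ) * (U0.card + K * (μ * Fintype.card V) + K) ≤ η/2 * Fintype.card V →
      ∃ T : Finset (List V), Sys K U0 T ∧ (T.card : ℝ) ≤ μ * Fintype.card V ∧
        ∀ j ∈ J, η * μ / 8 * Fintype.card V ≤ (T.filter (F j)).card := by
  have hlim : ∀ᶠ n : ℝ in Filter.atTop, Real.log n ≤ (η * μ / 64) * n := by
    have := Real.isLittleO_log_id_atTop.def (c := η * μ / 64) (by positivity)
    filter_upwards [this, Filter.eventually_ge_atTop 1] with n hn h1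
    simp only [id, Real.norm_eq_abs] at hn
    rw [abs_of_nonneg (by linarith : (0:ℝ) ≤ n)] at hn
    exact (le_abs_self _).trans hn
  obtain ⟨N1, hN1⟩ := Filter.eventually_atTop.mp hlim
  refine ⟨⌈max N1 (4/μ)⌉₊ + 1, ?_⟩
  intro V _ hV ι J F U0 hJ hF hU
  set n := Fintype.card V with hn
  have hnR : max N1 (4/μ) ≤ (n:ℝ) := by
    refine (Nat.le_ceil _).trans ?_
    exact_mod_cast (Nat.le_succ _).trans hV
  have hnpos : 0 < n := by omega
  have hnposR : (0:ℝ) < n := by exact_mod_cast hnpos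
  have hlog := hN1 n ((le_max_left _ _).trans hnR)
  have hμn : 4 ≤ μ * n := by
    have := (le_max_right _ _).trans hnR
    rw [div_le_iff₀ hμ] at this; linarith
  set m := ⌊μ * n⌋₊ with hm
  have hm1 : (m:ℝ) ≤ μ * n := Nat.floor_le (by positivity)
  have hm2 : μ * n < m + 1 := Nat.lt_floor_add_one _
  obtain ⟨T, hT, hTc, hΦ⟩ := sel_step hK hη hη1 hnpos J F hF U0 m (by
    refine le_trans ?_ hU
    gcongr) m le_rfl
  refine ⟨T, hT, by rw [hTc]; exact hm1, ?_⟩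
  intro j hj
  have h1 : (1/2:ℝ)^((T.filter (F j)).card) ≤ J.card * (1 - η/4)^m :=
    (single_le_sum (f := fun j => (1/2:ℝ)^((T.filter (F j)).card)) (fun j _ => by positivity) hj).trans hΦ
  set h := (T.filter (F j)).card with hh
  have h2 : (1 - η/4)^m ≤ Real.exp (-(η/4) * m) := by
    rw [mul_comm, Real.exp_nat_mul]
    apply pow_le_pow_left₀ (by linarith)
    linarith [Real.add_one_le_exp (-(η/4))]
  have h3 : (J.card:ℝ) ≤ Real.exp (4 * Real.log n) := by
    have : Real.exp (4 * Real.log n) = (n:ℝ)^4 := by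
      rw [show (4:ℝ) * Real.log n = ((4:ℕ):ℝ) * Real.log n by norm_num, Real.exp_nat_mul, Real.exp_log hnposR]
    rw [this]; exact_mod_cast hJ
  have h4 : Real.exp (-(h:ℝ)) ≤ (1/2:ℝ)^h := by
    rw [show -(h:ℝ) = h * (-1) by ring, Real.exp_nat_mul]
    apply pow_le_pow_left₀ (Real.exp_pos _).le
    rw [Real.exp_neg, one_div]
    apply inv_anti₀ (by norm_num)
    linarith [Real.add_one_le_exp (1:ℝ)]
  have h5 : Real.exp (-(h:ℝ)) ≤ Real.exp (4 * Real.log n + -(η/4) * m) := by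
    rw [Real.exp_add]
    refine h4.trans (h1.trans ?_)
    exact mul_le_mul h3 h2 (by apply pow_nonneg; linarith) (Real.exp_pos _).le
  have h6 := Real.exp_le_exp.mp h5
  -- h ≥ η m / 4 - 4 log n
  have : (3/4) * (μ * n) ≤ m := by linarith
  nlinarith

end P4
end TH

set_option linter.all false
set_option linter.unusedSectionVars false
open Finset
namespace TH
section P5
open scoped Classical
variable {V : Type}

noncomputable def sg (R : V → V → Prop) (x y : V) : ℤ := if R x y then 1 else -1

lemma clean (R : V → V → Prop) (hs : ∀ x y, R x y → R y x) (hi : ∀ x, ¬ R x x) (r : ℤ) :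
    ∀ (k : ℕ) (C : Finset V), C.card = k → r ≤ ∑ x ∈ C, ∑ y ∈ C, sg R x y →
    ∃ U ⊆ C, r ≤ (U.card : ℤ)^2 ∧ ∀ x ∈ U, U.card ≤ 2 * (U.filter fun y => R x y).card := by
  intro k
  induction k with
  | zero =>
    intro C hC hr
    rw [card_eq_zero] at hC
    subst hC
    exact ⟨∅, by simp, by simpa using hr, by simp⟩
  | succ k ih =>
    intro C hC hr
    by_cases h : ∀ x ∈ C, C.card ≤ 2 * (C.filter fun y => R x y).card
    · refine ⟨C, subset_rfl, ?_, h⟩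
      refine hr.trans ?_
      calc _ ≤ ∑ x ∈ C, ∑ y ∈ C, (1:ℤ) := by
            apply sum_le_sum; intro x _; apply sum_le_sum; intro y _; unfold sg; split_ifs <;> norm_num
        _ = _ := by simp [sq]
    · push Not at h
      obtain ⟨x, hx, hlt⟩ := h
      have hrow : ∑ y ∈ C, sg R x y = 2 * ((C.filter fun y => R x y).card : ℤ) - C.card := by
        have : ∀ y ∈ C, sg R x y = 2 * (if R x y then 1 else 0) - 1 := by
          intro y _; unfold sg; split_ifs <;> norm_num
        rw [sum_congr rfl this, sum_sub_distrib, ← mul_sum, card_filter]; simp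
      have hcol : ∑ y ∈ C, sg R y x = ∑ y ∈ C, sg R x y := by
        apply sum_congr rfl; intro y _; unfold sg
        by_cases hh : R x y
        · simp [hh, hs _ _ hh]
        · have : ¬ R y x := fun g => hh (hs _ _ g)
          simp [hh, this]
      have hd : sg R x x = -1 := by simp [sg, hi]
      obtain ⟨U, hU, h1, h2⟩ := ih (C.erase x) (by rw [card_erase_of_mem hx]; omega) (by
        have e1 : ∀ z, ∑ y ∈ C.erase x, sg R z y = ∑ y ∈ C, sg R z y - sg R z x := by
          intro z; rw [← add_sum_erase C _ hx]; ring
        have e2 : ∑ z ∈ C.erase x, ∑ y ∈ C.erase x, sg R z y =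
           ∑ z ∈ C, ∑ y ∈ C.erase x, sg R z y - ∑ y ∈ C.erase x, sg R x y := by
          rw [← add_sum_erase C _ hx]; ring
        rw [e2]
        simp only [e1]
        rw [sum_sub_distrib, hcol, hd]
        omega)
      exact ⟨U, hU.trans (erase_subset _ _), h1, h2⟩

lemma split_count (p q : V → Prop) : ∀ (l : List V) (x : V),
    l.length < (l.filter p).length + ((x :: l).dropLast.filter q).length →
    ∃ A y z B, x :: l = A ++ y :: z :: B ∧ q y ∧ p z := by
  intro l
  induction l with
  | nil => intro x h; simp at h
  | cons z l ih =>
    intro x h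
    by_cases hqp : q x ∧ p z
    · exact ⟨[], x, z, l, rfl, hqp.1, hqp.2⟩
    · have : ((z :: l).filter p).length + ((x :: z :: l).dropLast.filter q).length ≤
          1 + ((l.filter p).length + ((z :: l).dropLast.filter q).length) := by
        rw [List.dropLast_cons₂, List.filter_cons, List.filter_cons]
        by_cases h1 : q x <;> by_cases h2 : p z <;> simp [h1, h2] at hqp ⊢ <;> omega
      obtain ⟨A, y, z', B, e, h1, h2⟩ := ih z (by simp only [List.length_cons] at h this ⊢; omega)
      exact ⟨x :: A, y, z', B, by rw [e]; rfl, h1, h2⟩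

def IsPath (R : V → V → Prop) (U : Finset V) (l : List V) : Prop :=
  l.Nodup ∧ l.IsChain R ∧ ∀ x ∈ l, x ∈ U

lemma nb_le {R : V → V → Prop} {U : Finset V} {a : V} {l : List V}
    (h : ∀ x ∈ U, R a x → x ∈ l) : (U.filter fun y => R a y).card ≤ (l.filter (R a)).length := by
  refine le_trans ?_ (List.toFinset_card_le _)
  apply card_le_card
  intro x hx
  simp only [mem_filter] at hx
  simp [hx.2, h x hx.1 hx.2]

lemma path_step (R : V → V → Prop) (hs : ∀ x y, R x y → R y x) (hi : ∀ x, ¬ R x x)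
    (U : Finset V) (hU : ∀ x ∈ U, U.card ≤ 2 * (U.filter fun y => R x y).card) (P : List V)
    (hP : IsPath R U P) (hlt : P.length < U.card) : ∃ P', IsPath R U P' ∧ P'.length = P.length + 1 := by
  obtain ⟨hnd, hch, hsub⟩ := hP
  have hcardP : P.toFinset.card = P.length := List.toFinset_card_of_nodup hnd
  obtain ⟨w, hwU, hwP⟩ : ∃ w ∈ U, w ∉ P := by
    by_contra hcon
    push Not at hcon
    have : U.card ≤ P.toFinset.card := card_le_card (fun x hx => by simpa using hcon x hx)
    omega
  -- extension lemma
  have ext : ∀ (Q : List V) (x : V), Q.Perm P → Q.IsChain R → x ∈ U → x ∉ P → (∀ y ∈ Q.head?, R x y) →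
      ∃ P', IsPath R U P' ∧ P'.length = P.length + 1 := by
    intro Q x hQ hc hxU hxP hh
    refine ⟨x :: Q, ⟨?_, ?_, ?_⟩, by simp [hQ.length_eq]⟩
    · rw [List.nodup_cons]; exact ⟨fun h => hxP (hQ.mem_iff.mp h), hQ.nodup_iff.mpr hnd⟩
    · rw [List.isChain_cons]; exact ⟨hh, hc⟩
    · intro y hy
      rcases List.mem_cons.mp hy with rfl | h
      · exact hxU
      · exact hsub _ (hQ.mem_iff.mp h)
  match P, hnd, hch, hsub, hlt, hcardP, hwP, ext with
  | [], _, _, _, _, _, _, ext => exact ext [] w (List.Perm.refl _) (by simp) hwU (by simp) (by simp)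
  | a :: l, hnd, hch, hsub, hlt, hcardP, hwP, ext =>
    set P := a :: l with hPdef
    have hPne : P ≠ [] := by simp [hPdef]
    set b := P.getLast hPne with hb
    have hDb : P.dropLast ++ [b] = P := List.dropLast_append_getLast hPne
    by_cases h1 : ∃ x ∈ U, R a x ∧ x ∉ P
    · obtain ⟨x, hx, hax, hxP⟩ := h1
      exact ext P x (List.Perm.refl _) hch hx hxP (by simp [hPdef]; exact hs _ _ hax)
    by_cases h2 : ∃ x ∈ U, R b x ∧ x ∉ P
    · obtain ⟨x, hx, hax, hxP⟩ := h2
      refine ext P.reverse x (List.reverse_perm _) ?_ hx hxP ?_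
      · rw [List.isChain_reverse]; exact hch.imp (fun _ _ h => hs _ _ h)
      · intro y hy
        rw [List.head?_reverse, List.getLast?_eq_some_getLast hPne] at hy
        simp at hy; subst hy; exact hs _ _ hax
    push Not at h1 h2
    have aU : a ∈ U := hsub a (by simp [hPdef])
    have bU : b ∈ U := hsub b (List.getLast_mem hPne)
    have d1 := hU a aU
    have d2 := hU b bU
    have n1 : (U.filter fun y => R a y).card ≤ (l.filter (R a)).length := nb_le (by
      intro x hx hax
      rcases List.mem_cons.mp (h1 x hx hax) with rfl | h
      · exact absurd hax (hi _)
      · exact h)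
    have n2 : (U.filter fun y => R b y).card ≤ (P.dropLast.filter (R b)).length := nb_le (by
      intro x hx hbx
      have := h2 x hx hbx
      rw [← hDb] at this
      rcases List.mem_append.mp this with h | h
      · exact h
      · simp at h; subst h; exact absurd hbx (hi _))
    have hlen : P.length = l.length + 1 := by simp [hPdef]
    obtain ⟨A, y, z, B, hsp, hby, haz⟩ := split_count (R a) (R b) l a (by
      rw [← hPdef]; omega)
    rw [← hPdef] at hsp
    have hsp' : P = (A ++ [y]) ++ (z :: B) := by rw [hsp]; simp
    set C := (A ++ [y]) ++ (z :: B).reverse with hC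
    have hCP : C.Perm P := by
      rw [hsp']; exact List.Perm.append_left _ (List.reverse_perm _)
    have hch' := hch
    rw [hsp', List.isChain_append] at hch'
    obtain ⟨c1, c2, c3⟩ := hch'
    have hlastb : (z :: B).getLast? = some b := by
      have : P.getLast? = some b := List.getLast?_eq_some_getLast hPne
      rw [hsp', List.getLast?_append_of_ne_nil _ (by simp)] at this
      exact this
    have hCch : C.IsChain R := by
      rw [hC, List.isChain_append]
      refine ⟨c1, ?_, ?_⟩
      · rw [List.isChain_reverse]; exact c2.imp (fun _ _ h => hs _ _ h)
      · intro u hu v hv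
        rw [List.head?_reverse, hlastb] at hv
        simp at hu hv
        subst hu; subst hv; exact hs _ _ hby
    have hClast : C.getLast? = some z := by
      rw [hC, List.getLast?_append_of_ne_nil _ (by simp), List.getLast?_reverse]; rfl
    have hChead : C.head? = some a := by
      have : P.head? = some a := rfl
      rw [hsp', List.head?_append_of_ne_nil _ (by simp)] at this
      rw [hC, List.head?_append_of_ne_nil _ (by simp)]; exact this
    -- w has a neighbour in P
    obtain ⟨c, hcU, hwc, hcP⟩ : ∃ c ∈ U, R w c ∧ c ∈ P := by
      by_contra hcon
      push Not at hcon
      have e1 : (U.filter fun y => R w y) ⊆ (U \ P.toFinset).erase w := by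
        intro x hx
        simp only [mem_filter] at hx
        simp only [mem_erase, mem_sdiff, List.mem_toFinset]
        exact ⟨fun e => hi w (e ▸ hx.2), hx.1, hcon x hx.1 hx.2⟩
      have e2 := card_le_card e1
      rw [card_erase_of_mem (by simp [hwU, hwP]), card_sdiff_of_subset (by
        intro x hx; exact hsub x (by simpa using hx)), hcardP] at e2
      have e3 := hU w hwU
      have e4 : (l.filter (R a)).length ≤ l.length := List.length_filter_le _ _
      omega
    obtain ⟨C1, C2, hsplit⟩ := List.append_of_mem (hCP.mem_iff.mpr hcP)
    refine ext ((c :: C2) ++ C1) w ?_ ?_ hwU hwP (by simpa using hwc)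
    · refine List.Perm.trans ?_ hCP
      rw [hsplit]; exact List.perm_append_comm
    · have hcc := hCch
      rw [hsplit, List.isChain_append] at hcc
      rw [List.isChain_append]
      refine ⟨hcc.2.1, hcc.1, ?_⟩
      intro u hu v hv
      have g1 : C.getLast? = some u := by
        rw [hsplit, List.getLast?_append_of_ne_nil _ (by simp)]; exact hu
      have g2 : C.head? = some v := by
        rw [hsplit, List.head?_append_of_ne_nil _ (by rintro rfl; simp at hv)]; exact hv
      rw [hClast] at g1
      rw [hChead] at g2
      simp at g1 g2
      subst g1; subst g2
      exact hs _ _ haz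

lemma ham_path (R : V → V → Prop) (hs : ∀ x y, R x y → R y x) (hi : ∀ x, ¬ R x x)
    (U : Finset V) (hU : ∀ x ∈ U, U.card ≤ 2 * (U.filter fun y => R x y).card) :
    ∀ k ≤ U.card, ∃ P, IsPath R U P ∧ P.length = k := by
  intro k
  induction k with
  | zero => intro _; exact ⟨[], ⟨by simp, by simp, by simp⟩, rfl⟩
  | succ k ih =>
    intro hk
    obtain ⟨P, hP, hl⟩ := ih (by omega)
    obtain ⟨P', h1, h2⟩ := path_step R hs hi U hU P hP (by omega)
    exact ⟨P', h1, by omega⟩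

/-- combined -/
lemma clean_path (R : V → V → Prop) (hs : ∀ x y, R x y → R y x) (hi : ∀ x, ¬ R x x) (C : Finset V) (t : ℕ)
    (h : (t:ℤ)^2 ≤ ∑ x ∈ C, ∑ y ∈ C, sg R x y) : ∃ P, IsPath R C P ∧ P.length = t := by
  obtain ⟨U, hU, h1, h2⟩ := clean R hs hi _ _ C rfl h
  have : t ≤ U.card := by
    have : t^2 ≤ U.card^2 := by exact_mod_cast h1
    exact (Nat.pow_le_pow_iff_left two_ne_zero).mp this
  obtain ⟨P, hP, hl⟩ := ham_path R hs hi U h2 t this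
  exact ⟨P, ⟨hP.1, hP.2.1, fun x hx => hU (hP.2.2 x hx)⟩, hl⟩

end P5
end TH

set_option linter.all false
set_option linter.unusedSectionVars false
open Finset
namespace TH
section P6
open scoped Classical

lemma tile_del {ι : Type} [DecidableEq ι] (f : ι → ι → ℝ) (c : ℝ) (k : ℕ) (hk : 2 ≤ k) : ∀ (t : ℕ) (I : Finset ι), I.card = k + t →
    c * I.card * (I.card - 1) ≤ ∑ i ∈ I, ∑ j ∈ I, (if i = j then 0 else f i j) →
    ∃ K ⊆ I, K.card = k ∧ c * k * (k - 1) ≤ ∑ i ∈ K, ∑ j ∈ K, (if i = j then 0 else f i j) := by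
  intro t
  induction t with
  | zero => intro I hI h; exact ⟨I, subset_rfl, hI, by rw [hI] at h; simpa using h⟩
  | succ t ih =>
    intro I hI h
    set F : ι → ι → ℝ := fun i j => if i = j then 0 else f i j with hF
    set S := ∑ i ∈ I, ∑ j ∈ I, F i j with hS
    change c * I.card * (I.card - 1) ≤ S at h
    have hne : I.Nonempty := by rw [← card_pos]; omega
    set T : ℝ := (I.card : ℝ) with hT
    have hT3 : 3 ≤ T := by rw [hT, hI]; push_cast; have : (2:ℝ) ≤ k := by exact_mod_cast hk
                           linarith [(Nat.cast_nonneg t : (0:ℝ) ≤ t)]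
    obtain ⟨i, hi, hle⟩ := Finset.exists_le_of_sum_le hne
      (f := fun i => ∑ j ∈ I, F i j + ∑ j ∈ I, F j i) (g := fun _ => 2 * S / T) (by
        rw [sum_add_distrib, sum_comm (f := fun i j => F j i), sum_const, nsmul_eq_mul, ← hT]
        rw [mul_div_cancel₀ _ (by linarith)]
        change S + S ≤ _
        linarith)
    have hcard : (I.erase i).card = k + t := by rw [card_erase_of_mem hi]; omega
    have hcardR : ((I.erase i).card : ℝ) = T - 1 := by
      rw [hcard, hT, hI]; push_cast; ring
    obtain ⟨K, hK, h1, h2⟩ := ih (I.erase i) hcard (by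
      have e1 : ∀ z, ∑ y ∈ I.erase i, F z y = ∑ y ∈ I, F z y - F z i := by
        intro z; rw [← add_sum_erase I _ hi]; ring
      have e2 : ∑ z ∈ I.erase i, ∑ y ∈ I.erase i, F z y =
         ∑ z ∈ I, ∑ y ∈ I.erase i, F z y - ∑ y ∈ I.erase i, F i y := by
        rw [← add_sum_erase I _ hi]; ring
      change _ ≤ ∑ z ∈ I.erase i, ∑ y ∈ I.erase i, F z y
      have hd : F i i = 0 := by simp [hF]
      rw [e2, hcardR]
      simp only [e1]
      rw [sum_sub_distrib, hd]
      have hST : c * (T-1) ≤ S / T := by rw [le_div_iff₀ (by linarith)]; linarith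
      have h3 : 2 * S / T = 2 * (S/T) := by ring
      have h4 : S = T * (S/T) := by field_simp
      have h5 : c * (T-1) * (T-2) ≤ S/T * (T-2) := mul_le_mul_of_nonneg_right hST (by linarith)
      rw [h3] at hle
      change _ ≤ S - _ - _
      nlinarith)
    exact ⟨K, hK.trans (erase_subset _ _), h1, h2⟩

end P6
section P6b
attribute [local instance 100000] Classical.propDecidable
attribute [local instance 100001] instDecidableEqBool
variable {V : Type}

lemma partn (L : ℕ) (hL : 0 < L) : ∀ (t : ℕ) (W : Finset V), W.card = t →
    ∃ D : Finset (Finset V), (∀ T ∈ D, T ⊆ W ∧ T.card = L) ∧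
      (∀ T ∈ D, ∀ T' ∈ D, T ≠ T' → Disjoint T T') ∧ (W \ D.biUnion id).card ≤ L := by
  intro t
  induction t using Nat.strong_induction_on with
  | _ t ih =>
    intro W hW
    by_cases h : L ≤ W.card
    · obtain ⟨T, hT, hTc⟩ := exists_subset_card_eq h
      obtain ⟨D, h1, h2, h3⟩ := ih (t - L) (by omega) (W \ T) (by rw [card_sdiff_of_subset hT]; omega)
      have hdis : ∀ T' ∈ D, Disjoint T T' := by
        intro T' hT'
        exact (disjoint_sdiff).mono_right (h1 T' hT').1
      refine ⟨insert T D, ?_, ?_, ?_⟩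
      · intro T' hT'
        rcases mem_insert.mp hT' with rfl | h'
        · exact ⟨hT, hTc⟩
        · exact ⟨(h1 _ h').1.trans sdiff_subset, (h1 _ h').2⟩
      · intro A hA B hB hne
        rcases mem_insert.mp hA with e1 | h1'
        · rcases mem_insert.mp hB with e2 | h2'
          · exact absurd (e1.trans e2.symm) hne
          · rw [e1]; exact hdis _ h2'
        · rcases mem_insert.mp hB with e2 | h2'
          · rw [e2]; exact (hdis _ h1').symm
          · exact h2 _ h1' _ h2' hne
      · rw [biUnion_insert]
        refine (card_le_card ?_).trans h3
        intro x
        simp only [mem_sdiff, mem_union, id]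
        tauto
    · exact ⟨∅, by simp, by simp, by simp; omega⟩

variable [Fintype V] {E : V → V → V → Prop}

noncomputable def ψ (E : V → V → V → Prop) (w x y : V) : ℝ :=
  if Nice E w x ∧ Nice E w y then (if E w x y then 1 else -1) else 0

lemma ψ_le (w x y : V) : ψ E w x y ≤ 1 := by unfold ψ; split_ifs <;> norm_num
lemma ψ_ge (w x y : V) : -1 ≤ ψ E w x y := by unfold ψ; split_ifs <;> norm_num

lemma Hyp.psi_sum (h : Hyp E) (w : V) :
    0.5998 * (Fintype.card V:ℝ)^2 ≤ ∑ x, ∑ y, ψ E w x y := by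
  set n : ℝ := (Fintype.card V:ℝ) with hn
  have hp : 0 < n := h.posR
  set s : V → V → ℝ := fun x y => if E w x y then 1 else -1 with hs
  set B := univ.filter fun b => ¬ Nice E w b with hB
  have hb := h.nonnice w
  rw [← hn, ← hB] at hb
  set b : ℝ := (B.card : ℝ) with hbb
  have b0 : 0 ≤ b := by positivity
  have hrow : ∀ x, ∑ y, s x y = 2 * cd E w x - n := by
    intro x
    have : ∀ y ∈ (univ : Finset V), s x y = 2 * (if E w x y then 1 else 0) - 1 := by
      intro y _; simp only [hs]; split_ifs <;> norm_num
    rw [sum_congr rfl this, sum_sub_distrib, ← mul_sum]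
    unfold cd
    rw [card_filter]; push_cast; simp [hn]
  have hsym : ∀ x y, s x y = s y x := by
    intro x y; simp only [hs, h.iff2 w x y]
  have htot : 0.5998 * n^2 ≤ ∑ x, ∑ y, s x y := by
    simp only [hrow]
    rw [sum_sub_distrib, ← mul_sum]
    have h1 := h.deg w
    rw [← sum_cd] at h1
    push_cast at h1
    simp only [sum_const, card_univ, nsmul_eq_mul]
    rw [← hn] at h1 ⊢
    nlinarith
  have hBrow : ∑ x ∈ B, ∑ y, s x y ≤ b * (-0.44 * n) := by
    rw [hbb, ← nsmul_eq_mul, ← sum_const]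
    apply sum_le_sum
    intro x hx
    rw [hrow]
    rw [hB, mem_filter] at hx
    have hx := hx.2
    unfold Nice at hx
    rw [← hn] at hx
    linarith
  have hBB : -(b^2) ≤ ∑ x ∈ B, ∑ y ∈ B, s x y := by
    calc _ = ∑ x ∈ B, ∑ y ∈ B, (-1:ℝ) := by simp [hbb, sq]
      _ ≤ _ := by
        apply sum_le_sum; intro x _; apply sum_le_sum; intro y _; simp only [hs]; split_ifs <;> norm_num
  have hdec : ∑ x, ∑ y, ψ E w x y = ∑ x, ∑ y, s x y - 2 * ∑ x ∈ B, ∑ y, s x y + ∑ x ∈ B, ∑ y ∈ B, s x y := by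
    have e1 : ∑ x ∈ B, ∑ y, s x y = ∑ x, ∑ y, if ¬ Nice E w x then s x y else 0 := by
      rw [hB, sum_filter]; apply sum_congr rfl; intro x _; split_ifs <;> simp
    have e1' : ∑ x ∈ B, ∑ y, s x y = ∑ x, ∑ y, if ¬ Nice E w y then s x y else 0 := by
      rw [e1, sum_comm]
      apply sum_congr rfl; intro x _; apply sum_congr rfl; intro y _; rw [hsym]
    have e2 : ∑ x ∈ B, ∑ y ∈ B, s x y = ∑ x, ∑ y, if ¬ Nice E w x ∧ ¬ Nice E w y then s x y else 0 := by
      rw [hB, sum_filter]; apply sum_congr rfl; intro x _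
      rw [sum_filter]
      by_cases hx : Nice E w x <;> simp [hx]
    rw [two_mul]
    nth_rw 1 [e1]
    rw [e1', e2, ← sum_add_distrib, ← sum_sub_distrib, ← sum_add_distrib]
    apply sum_congr rfl; intro x _
    rw [← sum_add_distrib, ← sum_sub_distrib, ← sum_add_distrib]
    apply sum_congr rfl; intro y _
    unfold ψ
    by_cases hx : Nice E w x <;> by_cases hy : Nice E w y <;> simp [hx, hy, hs]
  rw [hdec]
  nlinarith

end P6b
end TH

set_option linter.all false
set_option linter.unusedSectionVars false
open Finset
namespace TH
section P7
open scoped Classical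
variable {V : Type} [Fintype V] {E : V → V → V → Prop}

def PB (E : V → V → V → Prop) (l : List V) : Prop := ∃ B : Blk V, B.toList = l ∧ IsBlk E B

def weave : List V → List V → List V
  | w :: ws, x :: y :: r => w :: x :: y :: weave ws r
  | ws, _ => ws

lemma weave_perm : ∀ (j : ℕ) (ws r : List V), ws.length = j + 1 → r.length = 2 * j →
    (weave ws r).Perm (ws ++ r) := by
  intro j
  induction j with
  | zero => intro ws r h1 h2
            have : r = [] := by simpa using h2
            subst this
            match ws, h1 with
            | [w], _ => simp [weave]
  | succ j ih =>
    intro ws r h1 h2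
    match ws, r, h1, h2 with
    | w :: ws, x :: y :: r, h1, h2 =>
      have := ih ws r (by simpa using h1) (by simp at h2; omega)
      simp only [weave, List.cons_append]
      refine List.Perm.cons _ ?_
      calc (x :: y :: weave ws r).Perm (x :: y :: (ws ++ r)) := (this.cons _).cons _
        _ = [x, y] ++ ws ++ r := by simp
        List.Perm _ (ws ++ [x, y] ++ r) := List.Perm.append_right _ List.perm_append_comm
        _ = ws ++ x :: y :: r := by simp

lemma Hyp.weave_tight (h : Hyp E) (Q : Finset V) (R : V → V → Prop) (hE : ∀ w ∈ Q, ∀ x y, R x y → E w x y) :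
    ∀ (j : ℕ) (ws r : List V), ws.length = j + 1 → r.length = 2 * j → r.IsChain R → (∀ w ∈ ws, w ∈ Q) →
      Tight E (weave ws r) := by
  intro j
  induction j with
  | zero => intro ws r h1 h2 _ _
            have : r = [] := by simpa using h2
            subst this
            match ws, h1 with
            | [w], _ => simp [weave, Tight]
  | succ j ih =>
    intro ws r h1 h2 hc hw
    match ws, r, h1, h2 with
    | w :: w' :: ws, x :: y :: [], h1, h2 =>
      simp only [List.isChain_cons_cons] at hc
      have e1 := hE w (hw _ (by simp)) x y hc.1
      have e2 := hE w' (hw _ (by simp)) x y hc.1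
      have : ws = [] := by simp at h1 h2; exact List.length_eq_zero_iff.mp (by omega)
      subst this
      exact ⟨e1, h.s2 _ _ _ (h.s1 _ _ _ e2), trivial⟩
    | w :: w' :: ws, x :: y :: x' :: y' :: r, h1, h2 =>
      have e0 := ih (w' :: ws) (x' :: y' :: r) (by simpa using h1) (by simp at h2 ⊢; omega)
        (by simp only [List.isChain_cons_cons] at hc ⊢; exact hc.2.2) (fun z hz => hw z (List.mem_cons_of_mem _ hz))
      simp only [List.isChain_cons_cons] at hc
      have e1 := hE w (hw _ (by simp)) x y hc.1
      have e2 := hE w' (hw _ (by simp)) x y hc.1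
      have e3 := hE w' (hw _ (by simp)) y x' hc.2.1
      exact ⟨e1, h.s2 _ _ _ (h.s1 _ _ _ e2), h.s1 _ _ _ e3, e0⟩
    | [w], _, h1, _ => simp at h1
    | [], _, h1, _ => simp at h1
    | w :: w' :: ws, [], _, h2 => simp at h2
    | w :: w' :: ws, [x], _, h2 => simp at h2; omega
    | w :: w' :: ws, [x, y, z], _, h2 => simp at h2; omega

lemma weave_shape : ∀ (j : ℕ) (ws r : List V), ws.length = j + 2 → r.length = 2 * (j + 1) →
    ∃ B : Blk V, B.toList = weave ws r ∧ B.a ∈ ws ∧ B.b ∈ r ∧ B.c ∈ r ∧ B.d ∈ ws := by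
  intro j
  induction j with
  | zero => intro ws r h1 h2
            match ws, r, h1, h2 with
            | [w, w'], [x, y], _, _ =>
              exact ⟨⟨w, x, [], y, w'⟩, by simp [Blk.toList, weave], by simp, by simp, by simp, by simp⟩
  | succ j ih =>
    intro ws r h1 h2
    match ws, r, h1, h2 with
    | w :: ws, x :: y :: r, h1, h2 =>
      obtain ⟨B, e, m1, m2, m3, m4⟩ := ih ws r (by simpa using h1) (by simp at h2; omega)
      refine ⟨⟨w, x, y :: B.a :: B.b :: B.m, B.c, B.d⟩, ?_, by simp, by simp, by simp [m3], by simp [m4]⟩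
      simp only [Blk.toList, weave, ← e]
      simp

lemma Hyp.chunks (h : Hyp E) (Q C : Finset V) (R : V → V → Prop) (hE : ∀ w ∈ Q, ∀ x y, R x y → E w x y)
    (hN : ∀ w ∈ Q, ∀ x ∈ C, Nice E w x) (l : ℕ) :
    ∀ (j : ℕ) (ws P : List V), ws.length = (l + 2) * j → P.length = 2 * (l + 1) * j → IsPath R C P →
      ws.Nodup → (∀ w ∈ ws, w ∈ Q) → ws.Disjoint P →
      ∃ T : Finset (List V), T.card = j ∧ (∀ t ∈ T, t.length = 3 * (l+1) + 1 ∧ t.Nodup ∧ PB E t ∧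
        ∀ x ∈ t, x ∈ ws ∨ x ∈ P) ∧ (∀ t ∈ T, ∀ t' ∈ T, t ≠ t' → t.Disjoint t') := by
  intro j
  induction j with
  | zero => intro ws P _ _ _ _ _ _; exact ⟨∅, by simp, by simp, by simp⟩
  | succ j ih =>
    intro ws P h1 h2 hP hnd hQ hdis
    obtain ⟨p1, p2, p3⟩ := hP
    set ws1 := ws.take (l+2) with hws1
    set ws2 := ws.drop (l+2) with hws2
    set P1 := P.take (2*(l+1)) with hP1
    set P2 := P.drop (2*(l+1)) with hP2
    have ew : ws1 ++ ws2 = ws := List.take_append_drop _ _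
    have eP : P1 ++ P2 = P := List.take_append_drop _ _
    have lw1 : ws1.length = l + 2 := by rw [hws1, List.length_take, h1]; apply min_eq_left; nlinarith
    have lP1 : P1.length = 2 * (l+1) := by rw [hP1, List.length_take, h2]; apply min_eq_left; nlinarith
    have lw2 : ws2.length = (l+2)*j := by rw [hws2, List.length_drop, h1, mul_add]; omega
    have lP2 : P2.length = 2*(l+1)*j := by rw [hP2, List.length_drop, h2, mul_add]; omega
    rw [← ew] at hnd hQ hdis
    rw [← eP] at p1 p2 p3 hdis
    rw [List.nodup_append'] at hnd p1
    rw [List.isChain_append] at p2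
    rw [List.disjoint_append_left, List.disjoint_append_right, List.disjoint_append_right] at hdis
    obtain ⟨⟨d11, d12⟩, d21, d22⟩ := hdis
    obtain ⟨T, hTc, hT1, hT2⟩ := ih ws2 P2 lw2 lP2
      ⟨p1.2.1, p2.2.1, fun x hx => p3 x (List.mem_append_right _ hx)⟩ hnd.2.1
      (fun x hx => hQ x (List.mem_append_right _ hx)) d22
    set t := weave ws1 P1 with ht
    have hperm : t.Perm (ws1 ++ P1) := weave_perm (l+1) ws1 P1 lw1 lP1
    have htmem : ∀ x, x ∈ t ↔ x ∈ ws1 ∨ x ∈ P1 := by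
      intro x; rw [hperm.mem_iff, List.mem_append]
    have htlen : t.length = 3 * (l+1) + 1 := by rw [hperm.length_eq, List.length_append, lw1, lP1]; ring
    have htt : ∀ t' ∈ T, t.Disjoint t' := by
      intro t' ht' x hx hx'
      rw [htmem] at hx
      have hx' := (hT1 t' ht').2.2.2 x hx'
      rcases hx with hx | hx <;> rcases hx' with hx' | hx'
      · exact hnd.2.2 hx hx'
      · exact d12 hx hx'
      · exact d21 hx' hx
      · exact p1.2.2 hx hx'
    have htT : t ∉ T := by
      intro hh
      have h0 : t ≠ [] := by intro e; rw [e] at htlen; simp at htlen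
      obtain ⟨x, hx⟩ := List.exists_mem_of_ne_nil t h0
      exact htt t hh hx hx
    refine ⟨insert t T, ?_, ?_, ?_⟩
    · rw [card_insert_of_notMem htT, hTc]
    · intro t' ht'
      rcases mem_insert.mp ht' with e | h'
      · rw [e]
        refine ⟨htlen, ?_, ?_, ?_⟩
        · rw [hperm.nodup_iff, List.nodup_append']
          exact ⟨hnd.1, p1.1, d11⟩
        · obtain ⟨B, eB, m1, m2, m3, m4⟩ := weave_shape l ws1 P1 lw1 lP1
          refine ⟨B, eB, ?_, ?_, ?_⟩
          · rw [eB]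
            exact h.weave_tight Q R hE (l+1) ws1 P1 lw1 lP1 p2.1 (fun x hx => hQ x (List.mem_append_left _ hx))
          · exact hN _ (hQ _ (List.mem_append_left _ m1)) _ (p3 _ (List.mem_append_left _ m2))
          · exact h.nice_comm (hN _ (hQ _ (List.mem_append_left _ m4)) _ (p3 _ (List.mem_append_left _ m3)))
        · intro x hx
          rw [htmem] at hx
          rw [← ew, ← eP]
          simp only [List.mem_append]
          tauto
      · obtain ⟨g1, g2, g3, g4⟩ := hT1 t' h'
        refine ⟨g1, g2, g3, fun x hx => ?_⟩
        rw [← ew, ← eP]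
        simp only [List.mem_append]
        have := g4 x hx
        tauto
    · intro A hA B hB hne
      rcases mem_insert.mp hA with e1 | h1'
      · rcases mem_insert.mp hB with e2 | h2'
        · exact absurd (e1.trans e2.symm) hne
        · rw [e1]; exact htt _ h2'
      · rcases mem_insert.mp hB with e2 | h2'
        · rw [e2]; exact (htt _ h1').symm
        · exact hT2 _ h1' _ h2' hne

end P7
end TH

set_option linter.all false
set_option linter.unusedSectionVars false
open Finset
namespace TH
section P8
open scoped Classical
variable {V : Type} [Fintype V] {E : V → V → V → Prop}

lemma sum2_le (g : V → V → ℝ) (ω : ℝ) (hg : ∀ x y, g x y ≤ ω) (A B : Finset V) :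
    ∑ x ∈ A, ∑ y ∈ B, g x y ≤ A.card * (B.card * ω) := by
  rw [← nsmul_eq_mul, ← nsmul_eq_mul, ← sum_const, ← sum_const]
  apply sum_le_sum; intro x _; apply sum_le_sum; intro y _; exact hg x y

lemma le_sum2 (g : V → V → ℝ) (ω : ℝ) (hg : ∀ x y, -ω ≤ g x y) (A B : Finset V) :
    -(A.card * (B.card * ω)) ≤ ∑ x ∈ A, ∑ y ∈ B, g x y := by
  have := sum2_le (fun x y => - g x y) ω (fun x y => by linarith [hg x y]) A B
  simp only [sum_neg_distrib] at this
  linarith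

set_option maxHeartbeats 1000000 in
lemma Hyp.avg (h : Hyp E) (W : Finset V) (L : ℕ) (hL : 0 < L) (C : Finset (Finset V))
    (hC : ∀ T ∈ C, T.card = L) (hd : ∀ T ∈ C, ∀ T' ∈ C, T ≠ T' → Disjoint T T')
    (hLn : (L:ℝ) ≤ 0.001 * Fintype.card V)
    (hmiss : ((univ \ C.biUnion id).card : ℝ) ≤ 0.002 * Fintype.card V) :
    ∃ K ⊆ C, K.card = 50 ∧ 0.55 * W.card * (50 * (L:ℝ))^2 ≤
      ∑ x ∈ K.biUnion id, ∑ y ∈ K.biUnion id, ∑ w ∈ W, ψ E w x y := by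
  set n : ℝ := (Fintype.card V:ℝ) with hn
  have hp : 0 < n := h.posR
  set ω : ℝ := (W.card:ℝ) with hω
  have hω0 : 0 ≤ ω := by positivity
  set g : V → V → ℝ := fun x y => ∑ w ∈ W, ψ E w x y with hg
  have g1 : ∀ x y, g x y ≤ ω := by
    intro x y
    calc _ ≤ ∑ w ∈ W, (1:ℝ) := sum_le_sum (fun w _ => ψ_le w x y)
      _ = ω := by simp [hω]
  have g2 : ∀ x y, -ω ≤ g x y := by
    intro x y
    calc -ω = ∑ w ∈ W, (-1:ℝ) := by simp [hω]
      _ ≤ _ := sum_le_sum (fun w _ => ψ_ge w x y)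
  have gtot : 0.5998 * n^2 * ω ≤ ∑ x, ∑ y, g x y := by
    have : ∑ x, ∑ y, g x y = ∑ w ∈ W, ∑ x, ∑ y, ψ E w x y := by
      rw [sum_comm (s := W)]
      apply sum_congr rfl; intro x _
      rw [sum_comm (s := W)]
    rw [this, mul_comm, hω, ← nsmul_eq_mul, ← sum_const]
    exact sum_le_sum (fun w _ => h.psi_sum w)
  set A := C.biUnion id with hA
  set M := univ \ A with hM
  have hpd : ∀ D ⊆ C, (D : Set (Finset V)).PairwiseDisjoint id := by
    intro D hD T hT T' hT' hne
    exact hd T (hD hT) T' (hD hT') hne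
  have hcardD : ∀ D ⊆ C, (D.biUnion id).card = D.card * L := by
    intro D hD
    rw [card_biUnion (hpd D hD), sum_const_nat (m := L)]
    intro T hT; exact hC T (hD hT)
  have hAc : (A.card : ℝ) = C.card * L := by exact_mod_cast hcardD C subset_rfl
  have hAn : (A.card : ℝ) ≤ n := by rw [hn]; exact_mod_cast card_le_univ A
  have hAM : (A.card : ℝ) + M.card = n := by
    have : M.card + A.card = Fintype.card V := by
      rw [hM, card_sdiff_add_card_eq_card (subset_univ _), card_univ]
    rw [hn, ← this]; push_cast; ring
  set t : ℝ := (C.card : ℝ) with ht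
  have hAA : 0.5958 * n^2 * ω ≤ ∑ x ∈ A, ∑ y ∈ A, g x y := by
    have e1 : ∀ F : V → ℝ, ∑ x, F x = ∑ x ∈ M, F x + ∑ x ∈ A, F x := by
      intro F; rw [hM, sum_sdiff (subset_univ _)]
    rw [e1] at gtot
    have e2 : ∑ x ∈ A, ∑ y, g x y = ∑ x ∈ A, ∑ y ∈ M, g x y + ∑ x ∈ A, ∑ y ∈ A, g x y := by
      rw [← sum_add_distrib]; exact sum_congr rfl (fun x _ => e1 _)
    rw [e2] at gtot
    have u1 := sum2_le g ω g1 M univ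
    have u2 := sum2_le g ω g1 A M
    rw [card_univ, ← hn] at u1
    have v1 : (M.card:ℝ) * (n * ω) ≤ (0.002 * n) * (n * ω) := mul_le_mul_of_nonneg_right hmiss (by positivity)
    have v2 : (A.card:ℝ) * (M.card * ω) ≤ n * ((0.002 * n) * ω) := by gcongr
    nlinarith
  set f : Finset V → Finset V → ℝ := fun T T' => ∑ x ∈ T, ∑ y ∈ T', g x y with hf
  have hdec : ∀ D ⊆ C, ∑ x ∈ D.biUnion id, ∑ y ∈ D.biUnion id, g x y = ∑ T ∈ D, ∑ T' ∈ D, f T T' := by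
    intro D hD
    rw [sum_biUnion (hpd D hD)]
    apply sum_congr rfl; intro T hT
    rw [hf]
    simp only [id]
    rw [sum_comm (s := D)]
    apply sum_congr rfl; intro x _
    rw [sum_biUnion (hpd D hD)]; rfl
  have hoff : ∀ D : Finset (Finset V), ∑ T ∈ D, ∑ T' ∈ D, f T T' =
     ∑ T ∈ D, ∑ T' ∈ D, (if T = T' then 0 else f T T') + ∑ T ∈ D, f T T := by
    intro D
    rw [← sum_add_distrib]
    apply sum_congr rfl; intro T hT
    have : f T T = ∑ T' ∈ D, if T = T' then f T T' else 0 := by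
      rw [sum_ite_eq]; simp [hT]
    rw [this, ← sum_add_distrib]
    apply sum_congr rfl; intro T' _
    split_ifs <;> simp
  have ht0 : 0 ≤ t := by positivity
  have hL0 : (0:ℝ) < L := by exact_mod_cast hL
  have h998 : 998 ≤ t := by
    have h1 : 0.998 * n ≤ t * L := by rw [← hAc]; linarith
    have h2 : t * L ≤ t * (0.001 * n) := mul_le_mul_of_nonneg_left hLn ht0
    have h3 : 998 * (0.001 * n) ≤ t * (0.001 * n) := by linarith
    exact le_of_mul_le_mul_right h3 (by positivity)
  have hC50 : 50 ≤ C.card := by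
    have : (50:ℝ) ≤ C.card := by linarith
    exact_mod_cast this
  have htL : t * L ≤ n := by rw [← hAc]; exact hAn
  have hcond : (0.59 * L^2 * ω) * t * (t - 1) ≤ ∑ T ∈ C, ∑ T' ∈ C, (if T = T' then 0 else f T T') := by
    have e := hoff C
    rw [← hdec C subset_rfl] at e
    have hdiag : ∑ T ∈ C, f T T ≤ t * (L * (L * ω)) := by
      rw [ht, ← nsmul_eq_mul, ← sum_const]
      apply sum_le_sum; intro T hT
      have := sum2_le g ω g1 T T
      rw [hC T hT] at this; exact this
    have a1 : t * (L * (L * ω)) ≤ n * ((0.001 * n) * ω) := by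
      calc t * (L * (L * ω)) = (t * L) * (L * ω) := by ring
        _ ≤ _ := by gcongr
    have a2 : (t * L)^2 ≤ n^2 := by gcongr
    have a3 : (t*L)^2 * ω ≤ n^2 * ω := mul_le_mul_of_nonneg_right a2 hω0
    have a4 : 0 ≤ (0.59 * L^2 * ω) * t := by positivity
    nlinarith
  obtain ⟨K, hK, hKc, hKs⟩ := tile_del f (0.59 * L^2 * ω) 50 (by norm_num) (C.card - 50) C (by omega) hcond
  refine ⟨K, hK, hKc, ?_⟩
  change _ ≤ ∑ x ∈ K.biUnion id, ∑ y ∈ K.biUnion id, g x y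
  rw [hdec K hK, hoff K]
  have hdiag : -((50:ℝ) * (L * (L * ω))) ≤ ∑ T ∈ K, f T T := by
    have : -((50:ℝ) * (L * (L * ω))) = ∑ T ∈ K, (-(L * (L * ω))) := by
      rw [sum_const, hKc, nsmul_eq_mul]; push_cast; ring
    rw [this]
    apply sum_le_sum; intro T hT
    have := le_sum2 g ω g2 T T
    rw [hC T (hK hT)] at this; exact this
  push_cast at hKs
  have : 0 ≤ (L:ℝ)^2 * ω := by positivity
  nlinarith

lemma Hyp.gain (h : Hyp E) (W S : Finset V) (l L : ℕ) (hL : L = 3 * (l+1) + 1) (hS : S.card = 50 * L)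
    (hsum : 0.55 * W.card * (50 * (L:ℝ))^2 ≤ ∑ x ∈ S, ∑ y ∈ S, ∑ w ∈ W, ψ E w x y)
    (hW : ((2^(50*L) * 2^((50*L)*(50*L)) * (50 * L + (l+2) * 51) : ℕ):ℝ) < 0.08 * W.card) :
    ∃ T : Finset (List V), T.card = 51 ∧ (∀ t ∈ T, t.length = L ∧ t.Nodup ∧ PB E t ∧
        ∀ x ∈ t, x ∈ W ∨ x ∈ S) ∧ (∀ t ∈ T, ∀ t' ∈ T, t ≠ t' → t.Disjoint t') := by
  set N : ℝ := 50 * (L:ℝ) with hN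
  have hL0 : (0:ℝ) < L := by rw [hL]; positivity
  have hN0 : 0 < N := by positivity
  have hSR : (S.card:ℝ) = N := by rw [hS, hN]; push_cast; ring
  set F : V → ℝ := fun w => ∑ x ∈ S, ∑ y ∈ S, ψ E w x y with hF
  have hsum' : 0.55 * W.card * N^2 ≤ ∑ w ∈ W, F w := by
    refine hsum.trans (le_of_eq ?_)
    rw [hF, sum_comm (s := W)]
    apply sum_congr rfl; intro x _
    rw [sum_comm (s := W)]
  have hFle : ∀ w, F w ≤ N^2 := by
    intro w
    have := sum2_le (ψ E w) 1 (ψ_le w) S S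
    rw [hSR] at this
    calc _ ≤ _ := this
      _ = _ := by ring
  set W' := W.filter fun w => 0.47 * N^2 ≤ F w with hW'
  have hW'c : 0.08 * W.card ≤ (W'.card:ℝ) := by
    have : ∑ w ∈ W, F w ≤ ∑ w ∈ W, (0.47 * N^2 + if 0.47 * N^2 ≤ F w then N^2 else 0) := by
      apply sum_le_sum; intro w _
      split_ifs with hw
      · have := hFle w; nlinarith
      · linarith [not_le.mp hw]
    rw [sum_add_distrib, ← sum_filter, sum_const, sum_const, nsmul_eq_mul, nsmul_eq_mul, ← hW'] at this
    have h2 : (0.08 * W.card) * N^2 ≤ W'.card * N^2 := by nlinarith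
    exact le_of_mul_le_mul_right h2 (by positivity)
  set pat : V → Finset V × Finset (V × V) := fun w =>
    (S.filter fun x => Nice E w x, (S ×ˢ S).filter fun p => E w p.1 p.2) with hpat
  obtain ⟨y, hy, hfib⟩ := exists_lt_card_fiber_of_mul_lt_card_of_maps_to (s := W')
    (t := S.powerset ×ˢ (S ×ˢ S).powerset) (f := pat) (n := 50 * L + (l+2) * 51) (by
      intro w _
      simp only [hpat, mem_product, mem_powerset]
      exact ⟨filter_subset _ _, filter_subset _ _⟩) (by
      rw [card_product, card_powerset, card_powerset, card_product, hS]
      have := hW.trans_le hW'c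
      exact_mod_cast this)
  set Q0 := W'.filter fun x => pat x = y with hQ0
  set Q := Q0 \ S with hQ
  have hQc : (l+2)*51 ≤ Q.card := by
    have := le_card_sdiff S Q0
    rw [hS] at this
    rw [hQ]; omega
  obtain ⟨Q1, hQ1, hQ1c⟩ := exists_subset_card_eq hQc
  obtain ⟨w0, hw0⟩ : Q0.Nonempty := by rw [← card_pos]; omega
  have hpe : ∀ w ∈ Q0, pat w = pat w0 := by
    intro w hw
    rw [hQ0, mem_filter] at hw hw0
    rw [hw.2, hw0.2]
  set C := S.filter fun x => Nice E w0 x with hC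
  set R : V → V → Prop := fun x y => E w0 x y ∧ x ∈ C ∧ y ∈ C with hR
  have hsgn : ((∑ x ∈ C, ∑ y ∈ C, sg R x y : ℤ) : ℝ) = F w0 := by
    push_cast
    rw [hF, hC, sum_filter]
    apply sum_congr rfl; intro x hx
    by_cases hnx : Nice E w0 x
    · rw [if_pos hnx, sum_filter]
      apply sum_congr rfl; intro y hy
      by_cases hny : Nice E w0 y
      · by_cases he : E w0 x y <;> simp [hny, sg, hR, hC, hx, hy, hnx, ψ, he]
      · simp [ψ, hny]
    · rw [if_neg hnx]; simp [ψ, hnx]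
  have hF0 : 0.47 * N^2 ≤ F w0 := by
    rw [hQ0, mem_filter, hW', mem_filter] at hw0
    exact hw0.1.2
  obtain ⟨P, hP, hPl⟩ := clean_path R (fun x y hxy => ⟨h.s2 _ _ _ hxy.1, hxy.2.2, hxy.2.1⟩)
    (fun x hx => h.ne _ _ _ (h.s1 _ _ _ (h.s2 _ _ _ hx.1)) |> fun _ => by
      have := h.s1 _ _ _ (h.s2 _ _ _ (h.s1 _ _ _ hx.1))
      exact h.ne x x w0 (h.s2 _ _ _ (h.s1 _ _ _ hx.1)) rfl)
    C (2 * (l+1) * 51) (by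
      have : (((2 * (l+1) * 51 : ℕ):ℝ))^2 ≤ 0.47 * N^2 := by
        rw [hN, hL]; push_cast
        have : (0:ℝ) ≤ l := by positivity
        nlinarith
      have h2 := this.trans hF0
      rw [← hsgn] at h2
      exact_mod_cast h2)
  have hCS : C ⊆ S := filter_subset _ _
  have hQ0Q1 : ∀ w ∈ Q1, w ∈ Q0 := fun w hw => (mem_sdiff.mp (hQ1 hw)).1
  obtain ⟨T, t1, t2, t3⟩ := h.chunks Q1 C R (by
      intro w hw x y hxy
      have hpw := hpe w (hQ0Q1 w hw)
      have : (x, y) ∈ (pat w0).2 := by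
        simp only [hpat, mem_filter, mem_product]
        exact ⟨⟨hCS hxy.2.1, hCS hxy.2.2⟩, hxy.1⟩
      rw [← hpw] at this
      simp only [hpat, mem_filter] at this
      exact this.2) (by
      intro w hw x hx
      have hpw := hpe w (hQ0Q1 w hw)
      have : x ∈ (pat w0).1 := hx
      rw [← hpw] at this
      simp only [hpat, mem_filter] at this
      exact this.2) l 51 Q1.toList P (by simp [hQ1c]) hPl hP (nodup_toList _) (by simp) (by
      intro x hx hxP
      have := hQ1 (mem_toList.mp hx)
      exact (mem_sdiff.mp this).2 (hCS (hP.2.2 x hxP)))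
  refine ⟨T, t1, ?_, t3⟩
  intro t ht
  obtain ⟨a1, a2, a3, a4⟩ := t2 t ht
  refine ⟨by rw [hL]; exact a1, a2, a3, ?_⟩
  intro x hx
  rcases a4 x hx with h1 | h1
  · left
    have := hQ0Q1 x (mem_toList.mp h1)
    rw [hQ0, mem_filter, hW', mem_filter] at this
    exact this.1.1
  · right; exact hCS (hP.2.2 x h1)

end P8
end TH

set_option linter.all false
set_option linter.unusedSectionVars false
open Finset
namespace TH
section P9
open scoped Classical

lemma cover (l : ℕ) (α : ℝ) (hα : 0 < α) : ∃ N : ℕ, ∀ (V : Type) [Fintype V] (E : V → V → V → Prop),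
    Hyp E → N ≤ Fintype.card V → ∀ U : Finset V, (U.card : ℝ) ≤ 0.001 * Fintype.card V →
    ∃ T : Finset (List V), Sys (3*(l+1)+1) U T ∧ (∀ t ∈ T, PB E t) ∧
      ((Uᶜ \ verts T).card : ℝ) ≤ α * Fintype.card V := by
  set L := 3*(l+1)+1 with hL
  set Z : ℕ := 2^(50*L) * 2^((50*L)*(50*L)) * (50 * L + (l+2) * 51) with hZ
  clear_value Z
  refine ⟨⌈(Z:ℝ) / (0.08 * α)⌉₊ + 1000 * L + 1, ?_⟩
  intro V _ E h hN U hU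
  set n : ℝ := (Fintype.card V:ℝ) with hn
  have hp : 0 < n := h.posR
  have hn1 : (Z:ℝ) < 0.08 * (α * n) := by
    have h1 : (Z:ℝ) / (0.08 * α) < n := by
      refine lt_of_le_of_lt (Nat.le_ceil _) ?_
      rw [hn]; exact_mod_cast (show _ < _ by omega)
    rw [div_lt_iff₀ (by positivity)] at h1
    linarith
  have hn2 : (L:ℝ) ≤ 0.001 * n := by
    have : 1000 * L ≤ Fintype.card V := by
      clear hZ hn1; clear_value L; omega
    have : (1000:ℝ) * L ≤ n := by rw [hn]; exact_mod_cast this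
    linarith
  set Fam := (lists V L).powerset.filter fun T => Sys L U T ∧ ∀ t ∈ T, PB E t with hFam
  obtain ⟨T, hT, hmax⟩ := exists_max_image Fam card ⟨∅, by
    simp only [hFam, mem_filter, mem_powerset]
    exact ⟨by simp, ⟨by simp, by simp, by simp⟩, by simp⟩⟩
  simp only [hFam, mem_filter, mem_powerset] at hT
  obtain ⟨hTl, hTs, hTb⟩ := hT
  refine ⟨T, hTs, hTb, ?_⟩
  by_contra hcon
  push Not at hcon
  set W := Uᶜ \ verts T with hWd
  obtain ⟨D, hD1, hD2, hD3⟩ := partn L (by omega) _ W rfl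
  set Cc := T.image List.toFinset ∪ D with hCc
  have hmemv : ∀ t ∈ T, ∀ x ∈ t, x ∈ verts T := by
    intro t ht x hx
    simp only [verts, mem_biUnion, List.mem_toFinset]
    exact ⟨t, ht, hx⟩
  have hWv : ∀ t ∈ T, ∀ x ∈ t, x ∉ W := by
    intro t ht x hx hxW
    exact (mem_sdiff.mp hxW).2 (hmemv t ht x hx)
  have hcase : ∀ A ∈ Cc, (∃ t ∈ T, t.toFinset = A) ∨ A ∈ D := by
    intro A hA
    rw [hCc, mem_union, mem_image] at hA
    exact hA
  have hC : ∀ A ∈ Cc, A.card = L := by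
    intro A hA
    rcases hcase A hA with ⟨t, ht, rfl⟩ | hA
    · rw [List.toFinset_card_of_nodup (hTs.good t ht).1, hTs.len t ht]
    · exact (hD1 A hA).2
  have hTD : ∀ t ∈ T, ∀ A ∈ D, Disjoint t.toFinset A := by
    intro t ht A hA
    rw [disjoint_left]
    intro x hx hxA
    exact hWv t ht x (List.mem_toFinset.mp hx) ((hD1 A hA).1 hxA)
  have hd : ∀ A ∈ Cc, ∀ A' ∈ Cc, A ≠ A' → Disjoint A A' := by
    intro A hA A' hA' hne
    rcases hcase A hA with ⟨t, ht, rfl⟩ | hA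
    · rcases hcase A' hA' with ⟨t', ht', rfl⟩ | hA'
      · have : t ≠ t' := fun e => hne (by rw [e])
        have := hTs.disj t ht t' ht' this
        rw [disjoint_left]
        intro x hx hx'
        exact this (List.mem_toFinset.mp hx) (List.mem_toFinset.mp hx')
      · exact hTD t ht _ hA'
    · rcases hcase A' hA' with ⟨t', ht', rfl⟩ | hA'
      · exact (hTD t' ht' _ hA).symm
      · exact hD2 _ hA _ hA' hne
  have hmiss : ((univ \ Cc.biUnion id).card : ℝ) ≤ 0.002 * n := by
    have h1 : univ \ Cc.biUnion id ⊆ U ∪ (W \ D.biUnion id) := by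
      intro x hx
      rw [mem_sdiff] at hx
      have hx := hx.2
      by_cases hxU : x ∈ U
      · exact mem_union_left _ hxU
      · apply mem_union_right
        rw [mem_sdiff]
        constructor
        · rw [hWd, mem_sdiff, mem_compl]
          refine ⟨hxU, fun hv => hx ?_⟩
          simp only [verts, mem_biUnion, List.mem_toFinset] at hv
          obtain ⟨t, ht, hxt⟩ := hv
          simp only [mem_biUnion, id]
          exact ⟨t.toFinset, by rw [hCc]; exact mem_union_left _ (mem_image_of_mem _ ht), List.mem_toFinset.mpr hxt⟩
        · intro hD
          apply hx
          simp only [mem_biUnion, id] at hD ⊢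
          obtain ⟨A, hA, hxA⟩ := hD
          exact ⟨A, by rw [hCc]; exact mem_union_right _ hA, hxA⟩
    have h2 : ((univ \ Cc.biUnion id).card : ℝ) ≤ U.card + L := by
      exact_mod_cast (card_le_card h1).trans ((card_union_le _ _).trans (Nat.add_le_add_left hD3 _))
    linarith
  obtain ⟨K, hK, hKc, hKs⟩ := h.avg W L (by omega) Cc hC hd hn2 hmiss
  set S := K.biUnion id with hS
  have hSc : S.card = 50 * L := by
    have hpd : (K : Set (Finset V)).PairwiseDisjoint id := fun A hA A' hA' hne => hd A (hK hA) A' (hK hA') hne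
    rw [hS, card_biUnion hpd, sum_const_nat (m := L), hKc]
    intro A hA; exact hC A (hK hA)
  obtain ⟨T2, c1, c2, c3⟩ := h.gain W S l L hL hSc hKs (by
    rw [← hZ]
    refine hn1.trans ?_
    linarith)
  set T1 := T.filter fun t => t.toFinset ∉ K with hT1
  set T0 := T.filter fun t => t.toFinset ∈ K with hT0
  have hT0c : T0.card ≤ 50 := by
    rw [← hKc]
    apply card_le_card_of_injOn List.toFinset
    · intro t ht
      rw [hT0, coe_filter] at ht
      exact ht.2
    · intro t ht t' ht' e
      rw [hT0, coe_filter] at ht ht'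
      by_contra hne
      have := hTs.disj t ht.1 t' ht'.1 hne
      have h0 : t ≠ [] := by
        intro e0
        have := hTs.len t ht.1
        rw [e0] at this; simp at this
      obtain ⟨x, hx⟩ := List.exists_mem_of_ne_nil t h0
      have hx' : x ∈ t'.toFinset := by rw [← e]; exact List.mem_toFinset.mpr hx
      exact this hx (List.mem_toFinset.mp hx')
  have hT01 : T0.card + T1.card = T.card := card_filter_add_card_filter_not _
  have hout : ∀ t ∈ T1, ∀ x ∈ t, x ∉ W ∧ x ∉ S := by
    intro t ht x hx
    rw [hT1, mem_filter] at ht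
    refine ⟨hWv t ht.1 x hx, fun hxS => ?_⟩
    rw [hS, mem_biUnion] at hxS
    obtain ⟨A, hA, hxA⟩ := hxS
    rcases hcase A (hK hA) with ⟨t', ht', rfl⟩ | hAD
    · have hne : t ≠ t' := fun e => ht.2 (by rw [e]; exact hA)
      exact hTs.disj t ht.1 t' ht' hne hx (List.mem_toFinset.mp hxA)
    · exact hWv t ht.1 x hx ((hD1 A hAD).1 hxA)
  have hdis12 : ∀ t ∈ T1, ∀ t' ∈ T2, t.Disjoint t' := by
    intro t ht t' ht' x hx hx'
    have h1 := hout t ht x hx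
    rcases (c2 t' ht').2.2.2 x hx' with h2 | h2
    · exact h1.1 h2
    · exact h1.2 h2
  have hD12 : Disjoint T1 T2 := by
    rw [disjoint_left]
    intro t ht ht'
    have h0 : t ≠ [] := by
      intro e0
      have := (c2 t ht').1
      rw [e0] at this; simp at this
    obtain ⟨x, hx⟩ := List.exists_mem_of_ne_nil t h0
    exact hdis12 t ht t ht' hx hx
  have hT1T : T1 ⊆ T := filter_subset _ _
  have hnew : T1 ∪ T2 ∈ Fam := by
    simp only [hFam, mem_filter, mem_powerset]
    refine ⟨?_, ⟨?_, ?_, ?_⟩, ?_⟩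
    · intro t ht
      rcases mem_union.mp ht with ht | ht
      · exact hTl (hT1T ht)
      · rw [mem_lists]; exact (c2 t ht).1
    · intro t ht
      rcases mem_union.mp ht with ht | ht
      · exact hTs.len t (hT1T ht)
      · exact (c2 t ht).1
    · intro t ht
      rcases mem_union.mp ht with ht | ht
      · exact hTs.good t (hT1T ht)
      · refine ⟨(c2 t ht).2.1, ?_⟩
        intro x hx
        have hWU : ∀ x ∈ W, x ∉ U := fun x hx => by
          rw [hWd, mem_sdiff, mem_compl] at hx; exact hx.1
        rcases (c2 t ht).2.2.2 x hx with h2 | h2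
        · exact hWU x h2
        · rw [hS, mem_biUnion] at h2
          obtain ⟨A, hA, hxA⟩ := h2
          rcases hcase A (hK hA) with ⟨t', ht', rfl⟩ | hAD
          · exact (hTs.good t' ht').2 x (List.mem_toFinset.mp hxA)
          · exact hWU x ((hD1 A hAD).1 hxA)
    · intro t ht t' ht' hne
      rcases mem_union.mp ht with ht | ht
      · rcases mem_union.mp ht' with ht' | ht'
        · exact hTs.disj t (hT1T ht) t' (hT1T ht') hne
        · exact hdis12 t ht t' ht'
      · rcases mem_union.mp ht' with ht' | ht'
        · exact (hdis12 t' ht' t ht).symm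
        · exact c3 t ht t' ht' hne
    · intro t ht
      rcases mem_union.mp ht with ht | ht
      · exact hTb t (hT1T ht)
      · exact (c2 t ht).2.2.1
  have := hmax _ hnew
  rw [card_union_of_disjoint hD12, c1] at this
  omega

end P9
end TH

set_option linter.all false
set_option linter.unusedSectionVars false
open Finset
namespace TH
section P10
open scoped Classical

variable {V : Type} [Fintype V] {E : V → V → V → Prop}

def hd : List (Blk V) → V × V → V × V
  | [], p => p
  | B :: _, _ => (B.a, B.b)

def Skel (E : V → V → V → Prop) : List (Blk V × List V) → V × V → Prop
  | [], _ => True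
  | e :: S, p => Tight E e.1.toList ∧
      Tight E (e.1.c :: e.1.d :: (e.2 ++ [(hd (S.map Prod.fst) p).1, (hd (S.map Prod.fst) p).2])) ∧ Skel E S p

def flat (S : List (Blk V × List V)) : List V := S.flatMap fun e => e.1.toList ++ e.2

lemma flat_cons (e : Blk V × List V) (S) : flat (e :: S) = e.1.toList ++ e.2 ++ flat S := by
  simp [flat]

lemma flat_append (S S' : List (Blk V × List V)) : flat (S ++ S') = flat S ++ flat S' := by
  simp [flat]

lemma flat_head (S : List (Blk V × List V)) (p : V × V) :
    ∃ r, flat S ++ [p.1, p.2] = (hd (S.map Prod.fst) p).1 :: (hd (S.map Prod.fst) p).2 :: r := by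
  cases S with
  | nil => exact ⟨[], by simp [flat, hd]⟩
  | cons e S => exact ⟨_, by simp only [flat_cons, Blk.toList, List.cons_append, List.map_cons, hd]; rfl⟩

lemma skel_tight (S : List (Blk V × List V)) (p : V × V) (h : Skel E S p) :
    Tight E (flat S ++ [p.1, p.2]) := by
  induction S with
  | nil => simp [flat, Tight]
  | cons e S ih =>
    obtain ⟨h1, h2, h3⟩ := h
    have h4 := ih h3
    obtain ⟨r, hr⟩ := flat_head S p
    rw [hr] at h4
    rw [flat_cons, List.append_assoc, hr]
    have h5 : Tight E ((e.1.c :: e.1.d :: e.2) ++ (hd (S.map Prod.fst) p).1 :: (hd (S.map Prod.fst) p).2 :: r) :=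
      tight_glue (by simpa using h2) h4
    have h6 : Tight E ((e.1.a :: e.1.b :: e.1.m) ++ e.1.c :: e.1.d :: (e.2 ++ (hd (S.map Prod.fst) p).1 :: (hd (S.map Prod.fst) p).2 :: r)) :=
      tight_glue (by simpa [Blk.toList] using h1) (by simpa using h5)
    simpa [Blk.toList] using h6

lemma hd_append (A B : List (Blk V)) (p) : hd (A ++ B) p = hd A (hd B p) := by
  cases A <;> simp [hd]

lemma skel_append (S S' : List (Blk V × List V)) (p : V × V)
    (h : Skel E S (hd (S'.map Prod.fst) p)) (h' : Skel E S' p) : Skel E (S ++ S') p := by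
  induction S with
  | nil => simpa using h'
  | cons e S ih =>
    obtain ⟨h1, h2, h3⟩ := h
    rw [List.cons_append]
    refine ⟨h1, ?_, ih h3⟩
    simpa only [List.map_append, hd_append] using h2

lemma skel_replace (S1 S2 : List (Blk V × List V)) (B B' : Blk V) (y : List V) (p : V × V)
    (ha : B'.a = B.a) (hb : B'.b = B.b) (hc : B'.c = B.c) (hdd : B'.d = B.d) (ht : Tight E B'.toList)
    (h : Skel E (S1 ++ (B, y) :: S2) p) : Skel E (S1 ++ (B', y) :: S2) p ∧
      hd ((S1 ++ (B', y) :: S2).map Prod.fst) p = hd ((S1 ++ (B, y) :: S2).map Prod.fst) p := by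
  induction S1 with
  | nil =>
    obtain ⟨h1, h2, h3⟩ := h
    refine ⟨⟨ht, ?_, h3⟩, by simp [hd, ha, hb]⟩
    simpa only [hc, hdd] using h2
  | cons e S ih =>
    rw [List.cons_append] at h
    obtain ⟨h1, h2, h3⟩ := h
    obtain ⟨h4, h5⟩ := ih h3
    rw [List.cons_append, List.cons_append]
    exact ⟨⟨h1, by rw [h5]; exact h2, h4⟩, rfl⟩

lemma absorb_all (p : V × V) (X : List V) : ∀ S : List (Blk V × List V), Skel E S p →
    (∀ v ∈ X, X.length ≤ S.countP fun e => AbsB E v e.1) →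
    ∃ S', Skel E S' p ∧ hd (S'.map Prod.fst) p = hd (S.map Prod.fst) p ∧ (flat S').Perm (X ++ flat S) := by
  induction X with
  | nil => intro S h _; exact ⟨S, h, rfl, by simp⟩
  | cons v X ih =>
    intro S h hc
    have h1 := hc v (by simp)
    have h2 : 0 < S.countP fun e => AbsB E v e.1 := lt_of_lt_of_le (by simp) h1
    obtain ⟨⟨B, y⟩, hB, hv⟩ := List.countP_pos_iff.mp h2
    simp only [decide_eq_true_eq] at hv
    obtain ⟨m', hm1, hm2⟩ := hv
    obtain ⟨S1, S2, rfl⟩ := List.append_of_mem hB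
    obtain ⟨h3, h4⟩ := skel_replace S1 S2 B ⟨B.a, B.b, m', B.c, B.d⟩ y p rfl rfl rfl rfl hm1 h
    obtain ⟨S', c1, c2, c3⟩ := ih _ h3 (by
      intro w hw
      have := hc w (by simp [hw])
      simp only [List.countP_append, List.countP_cons, List.length_cons] at this ⊢
      split_ifs at this ⊢ <;> omega)
    refine ⟨S', c1, c2.trans h4, c3.trans ?_⟩
    simp only [flat_append, flat_cons, Blk.toList]
    rw [List.perm_iff_count]
    intro a
    have := List.perm_iff_count.mp hm2 a
    simp only [List.count_append, List.count_cons] at this ⊢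
    omega

lemma connect (u : ℝ) (Z : Finset V)
    (av : ∀ a b c d, Nice E a b → Nice E c d → ∀ U : Finset V, (U.card:ℝ) ≤ u →
      ∃ y : List V, y.Nodup ∧ y.length = 16 ∧ (∀ x ∈ y, x ∈ Z ∧ x ∉ U) ∧ Tight E (a :: b :: (y ++ [c, d])))
    (p : V × V) (hp : Nice E p.1 p.2) (U0 : Finset V) (Bs : List (Blk V)) :
    (∀ B ∈ Bs, IsBlk E B) → (U0.card : ℝ) + 16 * Bs.length ≤ u →
    ∃ S : List (Blk V × List V), S.map Prod.fst = Bs ∧ Skel E S p ∧ (S.flatMap Prod.snd).Nodup ∧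
      (∀ x ∈ S.flatMap Prod.snd, x ∈ Z ∧ x ∉ U0) ∧ (S.flatMap Prod.snd).length = 16 * Bs.length := by
  induction Bs with
  | nil => intro _ _; exact ⟨[], by simp [Skel]⟩
  | cons B Bs ih =>
    intro hB hu
    simp only [List.length_cons, Nat.cast_add, Nat.cast_one] at hu
    obtain ⟨S, h1, h2, h3, h4, h5⟩ := ih (fun B hB' => hB B (by simp [hB'])) (by linarith)
    have hn : Nice E (hd Bs p).1 (hd Bs p).2 := by
      cases Bs with
      | nil => exact hp
      | cons B' Bs => exact (hB B' (by simp)).2.1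
    obtain ⟨y, y1, y2, y3, y4⟩ := av B.c B.d _ _ (hB B (by simp)).2.2 hn
      (U0 ∪ (S.flatMap Prod.snd).toFinset) (by
        have e1 := card_union_le U0 (S.flatMap Prod.snd).toFinset
        have e2 := List.toFinset_card_le (S.flatMap Prod.snd)
        rw [h5] at e2
        have e3 : ((U0 ∪ (S.flatMap Prod.snd).toFinset).card:ℝ) ≤ U0.card + 16 * Bs.length := by
          exact_mod_cast e1.trans (Nat.add_le_add_left e2 _)
        linarith)
    refine ⟨(B, y) :: S, by simp [h1], ⟨(hB B (by simp)).1, by rw [h1]; exact y4, h2⟩, ?_, ?_, ?_⟩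
    · rw [List.flatMap_cons, List.nodup_append']
      refine ⟨y1, h3, ?_⟩
      intro x hx hx'
      exact (y3 x hx).2 (mem_union_right _ (List.mem_toFinset.mpr hx'))
    · intro x hx
      rw [List.flatMap_cons, List.mem_append] at hx
      rcases hx with hx | hx
      · exact ⟨(y3 x hx).1, fun h => (y3 x hx).2 (mem_union_left _ h)⟩
      · exact h4 x hx
    · rw [List.flatMap_cons, List.length_append, h5, List.length_cons]; simp only [y2]; ring

lemma flat_perm (S : List (Blk V × List V)) :
    (flat S).Perm ((S.map Prod.fst).flatMap Blk.toList ++ S.flatMap Prod.snd) := by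
  induction S with
  | nil => simp [flat]
  | cons e S ih =>
    rw [flat_cons, List.perm_iff_count]
    intro a
    have := List.perm_iff_count.mp ih a
    simp only [List.map_cons, List.flatMap_cons, List.count_append] at this ⊢
    omega

lemma blk_inj {B B' : Blk V} (h : B.toList = B'.toList) : B = B' := by
  cases B; cases B'
  simp only [Blk.toList, List.cons.injEq] at h
  obtain ⟨h1, h2, h3⟩ := h
  have h4 := List.append_inj' h3 (by simp)
  simp at h4
  simp [h1, h2, h4]

lemma get_blks (L : List (List V)) (h : ∀ l ∈ L, PB E l) :
    ∃ Bs : List (Blk V), Bs.map Blk.toList = L ∧ ∀ B ∈ Bs, IsBlk E B := by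
  induction L with
  | nil => exact ⟨[], by simp⟩
  | cons l L ih =>
    obtain ⟨Bs, h1, h2⟩ := ih (fun l hl => h l (by simp [hl]))
    obtain ⟨B, b1, b2⟩ := h l (by simp)
    refine ⟨B :: Bs, by simp [h1, b1], ?_⟩
    intro B' hB'
    rcases List.mem_cons.mp hB' with rfl | hB'
    · exact b2
    · exact h2 _ hB'

lemma sys_flat {K : ℕ} {U : Finset V} {T : Finset (List V)} (h : Sys K U T) :
    T.toList.flatten.Nodup ∧ (∀ x, x ∈ T.toList.flatten ↔ x ∈ verts T) ∧
      T.toList.flatten.length = K * T.card := by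
  refine ⟨?_, ?_, ?_⟩
  · rw [List.nodup_flatten]
    refine ⟨fun l hl => (h.good l (mem_toList.mp hl)).1, ?_⟩
    refine (T.nodup_toList).imp_of_mem ?_
    intro a b ha hb hab
    exact h.disj a (mem_toList.mp ha) b (mem_toList.mp hb) hab
  · intro x; simp [verts]
  · rw [List.length_flatten, List.sum_eq_card_nsmul _ K]
    · simp [mul_comm]
    · intro x hx
      simp only [List.mem_map, mem_toList] at hx
      obtain ⟨l, hl, rfl⟩ := hx
      exact h.len l hl

lemma sys_avail {K : ℕ} {U0 : Finset V} {T : Finset (List V)} (h : Sys K U0 T) (F : List V → Prop)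
    (U : Finset V) (hU : U.card < (T.filter F).card) :
    ∃ y ∈ T, F y ∧ ∀ x ∈ y, x ∉ U := by
  by_contra hcon
  push Not at hcon
  have hcon' : ∀ y : List V, ∃ x : V, y ∈ T.filter F → x ∈ y ∧ x ∈ U := by
    intro y
    by_cases hy : y ∈ T.filter F
    · rw [mem_filter] at hy
      obtain ⟨x, hx⟩ := hcon y hy.1 hy.2
      exact ⟨x, fun _ => hx⟩
    · have : U.card < (T.filter F).card := hU
      obtain ⟨y', hy'⟩ := card_pos.mp (lt_of_le_of_lt (Nat.zero_le _) this)
      rw [mem_filter] at hy'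
      obtain ⟨x, hx⟩ := hcon y' hy'.1 hy'.2
      exact ⟨x, fun h => absurd h hy⟩
  choose f hf using hcon'
  have : (T.filter F).card ≤ U.card := by
    apply card_le_card_of_injOn f
    · intro y hy; exact (hf y hy).2
    · intro y hy y' hy' e
      by_contra hne
      have m1 := (mem_filter.mp (mem_coe.mp hy)).1
      have m2 := (mem_filter.mp (mem_coe.mp hy')).1
      refine h.disj y m1 y' m2 hne (hf y hy).1 ?_
      rw [e]; exact (hf y' hy').1
  omega

lemma Hyp.avail (h : Hyp E) (u : ℝ) (hu : 16 * (u + 16) ≤ (0.009 * 0.0001^14)/2 * (Fintype.card V:ℝ)) :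
    ∀ a b c d, Nice E a b → Nice E c d → ∀ U : Finset V, (U.card:ℝ) ≤ u →
      ∃ y : List V, y.Nodup ∧ y.length = 16 ∧ (∀ x ∈ y, x ∈ (univ : Finset V) ∧ x ∉ U) ∧
        Tight E (a :: b :: (y ++ [c, d])) := by
  intro a b c d h1 h2 U hU
  have e1 := h.conn h1 h2
  have e2 : (((lists V 16).filter fun l => ¬ Good U l).card : ℝ) ≤ (0.009 * 0.0001^14)/2 * (Fintype.card V:ℝ)^16 := by
    have := trim' (k := 16) (η := (0.009 * 0.0001^14)/2) h.pos U (by push_cast; linarith)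
    convert this
  have hp : 0 < (Fintype.card V:ℝ)^16 := pow_pos h.posR _
  have e3 : (((lists V 16).filter fun l => ¬ Good U l).card : ℝ) < (Conn E 16 a b c d).card := by
    refine lt_of_le_of_lt e2 (lt_of_lt_of_le ?_ e1)
    have : (0:ℝ) < (0.009 * 0.0001^14) := by norm_num
    nlinarith
  have e4 : ((lists V 16).filter fun l => ¬ Good U l).card < (Conn E 16 a b c d).card := by exact_mod_cast e3
  obtain ⟨y, hy, hy'⟩ := exists_mem_notMem_of_card_lt_card e4
  simp only [Conn, mem_filter, mem_lists, not_and, not_not] at hy hy'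
  have hg := hy' hy.1
  exact ⟨y, hg.1, hy.1, fun x hx => ⟨mem_univ _, hg.2 x hx⟩, hy.2⟩

end P10
end TH

set_option linter.all false
set_option linter.unusedSectionVars false
open Finset
namespace TH
section P11
open scoped Classical

lemma main : ∃ N : ℕ, ∀ (V : Type) [Fintype V] (E : V → V → V → Prop), Hyp E → N ≤ Fintype.card V →
    ∃ l : List V, l.Nodup ∧ (∀ x, x ∈ l) ∧ ∃ x y r, l = x :: y :: r ∧ Tight E (l ++ [x, y]) := by
  obtain ⟨κ, hκ⟩ : ∃ κ : ℝ, κ = 0.009 * 0.0001^14 := ⟨_, rfl⟩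
  obtain ⟨k, hk⟩ : ∃ k : ℝ, k = κa := ⟨_, rfl⟩
  have hκ0 : 0 < κ := by rw [hκ]; norm_num
  have hκ1 : κ ≤ 1 := by rw [hκ]; norm_num
  have hk0 : 0 < k := by rw [hk]; exact κa_pos
  have hkκ : k ≤ κ := by rw [hk, hκ]; unfold κa; norm_num
  obtain ⟨μ1, hμ1⟩ : ∃ μ1 : ℝ, μ1 = k * (1/100000) := ⟨_, rfl⟩
  have hμ10 : 0 < μ1 := by rw [hμ1]; positivity
  obtain ⟨c1, hc1⟩ : ∃ c1 : ℝ, c1 = k * μ1 / 8 := ⟨_, rfl⟩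
  have hc10 : 0 < c1 := by rw [hc1]; positivity
  have hc11 : c1 ≤ μ1 := by rw [hc1]; nlinarith
  obtain ⟨μ2, hμ2⟩ : ∃ μ2 : ℝ, μ2 = c1 / 100 := ⟨_, rfl⟩
  have hμ20 : 0 < μ2 := by rw [hμ2]; positivity
  obtain ⟨c2, hc2⟩ : ∃ c2 : ℝ, c2 = κ * μ2 / 8 := ⟨_, rfl⟩
  have hc20 : 0 < c2 := by rw [hc2]; positivity
  have hc21 : c2 ≤ μ2 := by rw [hc2]; nlinarith
  obtain ⟨ℓ, hℓ⟩ : ∃ ℓ : ℕ, ℓ = ⌈64 / c2⌉₊ := ⟨_, rfl⟩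
  have hℓ1 : 64 ≤ c2 * ℓ := by
    have : 64 / c2 ≤ ℓ := by rw [hℓ]; exact Nat.le_ceil _
    rw [div_le_iff₀ hc20] at this; linarith
  obtain ⟨N1, hN1⟩ := selection 25 (by norm_num) k hk0 (hkκ.trans hκ1) μ1 hμ10
  obtain ⟨N2, hN2⟩ := selection 16 (by norm_num) κ hκ0 hκ1 μ2 hμ20
  obtain ⟨N3, hN3⟩ := cover ℓ (c1/2) (by positivity)
  refine ⟨N1 + N2 + N3 + ⌈100000 / c2⌉₊, ?_⟩
  intro V _ E h hN
  obtain ⟨n, hn⟩ : ∃ n : ℝ, n = (Fintype.card V : ℝ) := ⟨_, rfl⟩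
  have hnp : 0 < n := by rw [hn]; exact h.posR
  have hbig : 100000 ≤ c2 * n := by
    have : 100000 / c2 ≤ n := by
      refine (Nat.le_ceil _).trans ?_
      rw [hn]; exact_mod_cast (show _ ≤ _ by omega)
    rw [div_le_iff₀ hc20] at this; linarith
  have hm2n : c2 * n ≤ μ2 * n := mul_le_mul_of_nonneg_right hc21 hnp.le
  have hm1n : μ2 * n ≤ c1 * n / 100 := by rw [hμ2]; apply le_of_eq; ring
  have hc1n : c1 * n ≤ μ1 * n := mul_le_mul_of_nonneg_right hc11 hnp.le
  have hmu1n : μ1 * n = k * n * (1/100000) := by rw [hμ1]; ring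
  have hkκn : k * n ≤ κ * n := mul_le_mul_of_nonneg_right hkκ hnp.le
  have hκn : κ * n ≤ n := by nlinarith
  -- phase 1
  obtain ⟨T1, t1, t2, t3⟩ := hN1 V (by omega) V univ (fun v l => Abs E v l) ∅ (by
      rw [card_univ]; exact Nat.le_self_pow (by norm_num) _) (by
      intro v _
      have := h.absorb v
      rw [← hk] at this
      convert this) (by
      rw [← hn]; push_cast
      simp only [card_empty, Nat.cast_zero]
      linarith)
  rw [← hn] at t2 t3
  obtain ⟨TB, hTB⟩ : ∃ TB, TB = T1.filter fun l => PB E l := ⟨_, rfl⟩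
  have hTBs : TB ⊆ T1 := by rw [hTB]; exact filter_subset _ _
  have sB : Sys 25 ∅ TB := ⟨fun l hl => t1.len l (hTBs hl), fun l hl => t1.good l (hTBs hl),
    fun l hl l' hl' => t1.disj l (hTBs hl) l' (hTBs hl')⟩
  obtain ⟨Bs, hBs1, hBs2⟩ := get_blks (E := E) TB.toList (by
    intro l hl
    rw [mem_toList, hTB, mem_filter] at hl
    exact hl.2)
  have hBlen : Bs.length = TB.card := by rw [← length_toList TB, ← hBs1, List.length_map]
  have hTBc : (TB.card : ℝ) ≤ μ1 * n := by
    refine le_trans ?_ t2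
    exact_mod_cast card_le_card hTBs
  have hcount : ∀ v : V, c1 * n ≤ (Bs.countP fun B => AbsB E v B) := by
    intro v
    have e1 := t3 v (mem_univ _)
    rw [← hc1] at e1
    refine e1.trans ?_
    have e2 : T1.filter (fun l => Abs E v l) = TB.filter (fun l => Abs E v l) := by
      ext l
      rw [hTB, mem_filter, mem_filter, mem_filter]
      constructor
      · rintro ⟨a, b⟩
        obtain ⟨B, b1, b2, b3⟩ := b
        exact ⟨⟨a, B, b1, b2⟩, B, b1, b2, b3⟩
      · rintro ⟨⟨a, _⟩, b⟩; exact ⟨a, b⟩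
    have e3 : (TB.filter (fun l => Abs E v l)).card = TB.toList.countP (fun l => Abs E v l) := by
      rw [List.countP_eq_length_filter, ← List.toFinset_card_of_nodup (TB.nodup_toList.filter _)]
      congr 1; ext l; simp
    have e4 : TB.toList.countP (fun l => Abs E v l) ≤ Bs.countP fun B => AbsB E v B := by
      rw [← hBs1, List.countP_map]
      apply List.countP_mono_left
      intro B _ hB
      simp only [Function.comp, decide_eq_true_eq] at hB ⊢
      obtain ⟨B', b1, b2, b3⟩ := hB
      rw [← blk_inj b1]; exact b3
    have e5 : (T1.filter (fun l => Abs E v l)).card ≤ Bs.countP fun B => AbsB E v B := by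
      rw [e2, e3]; exact e4
    have e6 : ((T1.filter (fun l => Abs E v l)).card : ℝ) ≤ ((Bs.countP fun B => AbsB E v B : ℕ) : ℝ) := by
      exact_mod_cast e5
    convert e6
  have hne : Bs ≠ [] := by
    intro e
    obtain ⟨v⟩ : Nonempty V := Fintype.card_pos_iff.mp h.pos
    have := hcount v
    rw [e] at this
    simp only [List.countP_nil, Nat.cast_zero] at this
    nlinarith
  obtain ⟨A0, As, rfl⟩ := List.exists_cons_of_ne_nil hne
  have hA0 : IsBlk E A0 := hBs2 A0 (by simp)
  obtain ⟨p, hp⟩ : ∃ p, p = hd As (A0.a, A0.b) := ⟨_, rfl⟩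
  have hpn : Nice E p.1 p.2 := by
    rw [hp]
    cases As with
    | nil => exact hA0.2.1
    | cons B' Bs => exact (hBs2 B' (by simp)).2.1
  have hvTB : ((verts TB).card : ℝ) ≤ 25 * (μ1 * n) := by
    have : ((verts TB).card : ℝ) ≤ 25 * TB.card := by exact_mod_cast sB.verts_card
    linarith
  have hAsl : (As.length : ℝ) ≤ μ1 * n := by
    refine le_trans ?_ hTBc
    rw [← hBlen]; push_cast; simp
  obtain ⟨S1, s1, s2, s3, s4, s5⟩ := connect (41 * (μ1 * n)) univ (h.avail (41 * (μ1 * n)) (by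
      rw [← hκ, ← hn]; linarith)) (A0.a, A0.b) hA0.2.1 (verts TB) As
      (fun B hB => hBs2 B (by simp [hB])) (by linarith)
  obtain ⟨Y1, hY1⟩ : ∃ Y1, Y1 = S1.flatMap Prod.snd := ⟨_, rfl⟩
  rw [← hY1] at s3 s4 s5
  obtain ⟨R1, hR1⟩ : ∃ R1, R1 = verts TB ∪ Y1.toFinset := ⟨_, rfl⟩
  have hR1c : (R1.card : ℝ) ≤ 41 * (μ1 * n) := by
    have e1 : (R1.card : ℝ) ≤ (verts TB).card + 16 * As.length := by
      rw [hR1]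
      have := (card_union_le (verts TB) Y1.toFinset).trans (Nat.add_le_add_left (List.toFinset_card_le Y1) _)
      rw [s5] at this
      exact_mod_cast this
    linarith
  -- phase 2
  obtain ⟨T2, r1, r2, r3⟩ := hN2 V (by omega) ((V × V) × (V × V))
    (univ.filter fun q => Nice E q.1.1 q.1.2 ∧ Nice E q.2.1 q.2.2)
    (fun q y => Tight E (q.1.1 :: q.1.2 :: (y ++ [q.2.1, q.2.2]))) R1 (by
      refine (card_filter_le _ _).trans ?_
      rw [card_univ]; simp only [Fintype.card_prod]; apply le_of_eq; ring) (by
      intro q hq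
      rw [mem_filter] at hq
      have := h.conn hq.2.1 hq.2.2
      rw [← hκ] at this
      unfold Conn at this
      convert this) (by
      rw [← hn]; push_cast
      linarith)
  rw [← hn] at r2 r3
  have hv2 : ((verts T2).card : ℝ) ≤ 16 * (μ2 * n) := by
    have : ((verts T2).card : ℝ) ≤ 16 * T2.card := by exact_mod_cast r1.verts_card
    linarith
  -- cover
  obtain ⟨TP, p1, p2, p3⟩ := hN3 V E h (by omega) (R1 ∪ verts T2) (by
    have : ((R1 ∪ verts T2).card : ℝ) ≤ R1.card + (verts T2).card := by exact_mod_cast card_union_le _ _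
    rw [← hn]; linarith)
  rw [← hn] at p3
  obtain ⟨Ps, hPs1, hPs2⟩ := get_blks (E := E) TP.toList (fun l hl => p2 l (mem_toList.mp hl))
  obtain ⟨f1, f2, f3⟩ := sys_flat p1
  obtain ⟨g1, g2, g3⟩ := sys_flat sB
  have hPlen : Ps.length = TP.card := by rw [← length_toList TP, ← hPs1, List.length_map]
  have hPc : 16 * (Ps.length : ℝ) ≤ c2 * n / 4 := by
    have e1 : (3*(ℓ+1)+1) * TP.card ≤ Fintype.card V := by
      rw [← f3]; exact f1.length_le_card
    have e2 : (ℓ:ℝ) * Ps.length ≤ n := by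
      rw [hPlen, hn]
      have : ℓ * TP.card ≤ Fintype.card V := (Nat.mul_le_mul_right _ (by omega)).trans e1
      exact_mod_cast this
    have e3 : c2 * (ℓ * Ps.length) ≤ c2 * n := mul_le_mul_of_nonneg_left e2 hc20.le
    have e4 : 64 * (Ps.length:ℝ) ≤ c2 * ℓ * Ps.length := mul_le_mul_of_nonneg_right hℓ1 (by positivity)
    linarith
  obtain ⟨S2, q1, q2, q3, q4, q5⟩ := connect (E := E) (c2 * n / 2) (verts T2) (by
      intro a b c d hab hcd U hU
      have e1 := r3 ((a, b), (c, d)) (by rw [mem_filter]; exact ⟨mem_univ _, hab, hcd⟩)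
      rw [← hc2] at e1
      obtain ⟨y, y1, y2, y3⟩ := sys_avail r1 (fun y => Tight E (a :: b :: (y ++ [c, d]))) U (by
        have e2 : (U.card : ℝ) < _ := lt_of_lt_of_le (by linarith) e1
        have e3 := Nat.cast_lt.mp e2
        convert e3)
      refine ⟨y, (r1.good y y1).1, r1.len y y1, ?_, y2⟩
      intro x hx
      exact ⟨by simp only [verts, mem_biUnion, List.mem_toFinset]; exact ⟨y, y1, hx⟩, y3 x hx⟩)
    p hpn ∅ (A0 :: Ps) (by
      intro B hB
      rcases List.mem_cons.mp hB with rfl | hB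
      · exact hA0
      · exact hPs2 B hB) (by
      simp only [card_empty, Nat.cast_zero, List.length_cons, Nat.cast_add, Nat.cast_one]
      linarith)
  obtain ⟨Y2, hY2⟩ : ∃ Y2, Y2 = S2.flatMap Prod.snd := ⟨_, rfl⟩
  rw [← hY2] at q3 q4 q5
  have hskel : Skel E (S1 ++ S2) p := skel_append _ _ _ (by rw [q1]; exact s2) q2
  have hhd : hd ((S1 ++ S2).map Prod.fst) p = p := by
    rw [List.map_append, hd_append, s1, q1]; simp only [hd]; exact hp.symm
  -- vertices
  have hB1 : (A0 :: As).flatMap Blk.toList = TB.toList.flatten := by rw [← hBs1, List.flatMap_def]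
  have hP1 : Ps.flatMap Blk.toList = TP.toList.flatten := by rw [← hPs1, List.flatMap_def]
  have hperm : (flat (S1 ++ S2)).Perm ((TB.toList.flatten ++ Y1) ++ (TP.toList.flatten ++ Y2)) := by
    rw [flat_append]
    refine ((flat_perm S1).append (flat_perm S2)).trans ?_
    rw [s1, q1, ← hY1, ← hY2, ← hB1, ← hP1]
    rw [List.perm_iff_count]
    intro a
    simp only [List.flatMap_cons, List.count_append]
    omega
  have hT2R : ∀ x ∈ verts T2, x ∉ R1 := by
    intro x hx
    simp only [verts, mem_biUnion, List.mem_toFinset] at hx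
    obtain ⟨y, y1, y2⟩ := hx
    exact (r1.good y y1).2 x y2
  have hTPR : ∀ x ∈ verts TP, x ∉ R1 ∪ verts T2 := by
    intro x hx
    simp only [verts, mem_biUnion, List.mem_toFinset] at hx
    obtain ⟨y, y1, y2⟩ := hx
    exact (p1.good y y1).2 x y2
  have hR1m : ∀ x, x ∈ TB.toList.flatten ++ Y1 ↔ x ∈ R1 := by
    intro x
    rw [List.mem_append, g2, hR1, mem_union, List.mem_toFinset]
  have hnod : ((TB.toList.flatten ++ Y1) ++ (TP.toList.flatten ++ Y2)).Nodup := by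
    rw [List.nodup_append', List.nodup_append', List.nodup_append']
    refine ⟨⟨g1, s3, ?_⟩, ⟨f1, q3, ?_⟩, ?_⟩
    · intro x hx hx'
      exact (s4 x hx').2 ((g2 x).mp hx)
    · intro x hx hx'
      exact hTPR x ((f2 x).mp hx) (mem_union_right _ (q4 x hx').1)
    · intro x hx hx'
      rw [hR1m] at hx
      rcases List.mem_append.mp hx' with hx' | hx'
      · exact hTPR x ((f2 x).mp hx') (mem_union_left _ hx)
      · exact hT2R x (q4 x hx').1 hx
  have hfn : (flat (S1 ++ S2)).Nodup := hperm.nodup_iff.mpr hnod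
  obtain ⟨X, hX⟩ : ∃ X : Finset V, X = univ \ (flat (S1 ++ S2)).toFinset := ⟨_, rfl⟩
  have hXc : (X.card : ℝ) ≤ c1 * n := by
    have e1 : X ⊆ ((R1 ∪ verts T2)ᶜ \ verts TP) ∪ verts T2 := by
      intro x hx
      rw [hX, mem_sdiff, List.mem_toFinset, hperm.mem_iff, List.mem_append, hR1m, List.mem_append, f2] at hx
      simp only [mem_union, mem_sdiff, mem_compl]
      tauto
    have e2 : (X.card : ℝ) ≤ ((R1 ∪ verts T2)ᶜ \ verts TP).card + (verts T2).card := by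
      exact_mod_cast (card_le_card e1).trans (card_union_le _ _)
    have e3 : (((R1 ∪ verts T2)ᶜ \ verts TP).card : ℝ) ≤ c1 / 2 * n := by convert p3
    linarith
  obtain ⟨S', z1, z2, z3⟩ := absorb_all (E := E) p X.toList (S1 ++ S2) hskel (by
    intro v _
    rw [length_toList]
    have e1 : (X.card : ℝ) ≤ (((A0 :: As).countP fun B => AbsB E v B : ℕ) : ℝ) := hXc.trans (hcount v)
    have e2 : X.card ≤ (A0 :: As).countP fun B => AbsB E v B := by exact_mod_cast e1
    refine e2.trans ?_
    have e3 : ((S1 ++ S2).countP fun e => AbsB E v e.1) = ((S1 ++ S2).map Prod.fst).countP fun B => AbsB E v B := by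
      rw [List.countP_map]; rfl
    rw [e3, List.map_append, s1, q1]
    simp only [List.countP_append, List.countP_cons]
    omega)
  refine ⟨flat S', ?_, ?_, ?_⟩
  · rw [z3.nodup_iff, List.nodup_append']
    refine ⟨X.nodup_toList, hfn, ?_⟩
    intro x hx hx'
    rw [mem_toList, hX, mem_sdiff, List.mem_toFinset] at hx
    exact hx.2 hx'
  · intro x
    rw [z3.mem_iff, List.mem_append, mem_toList, hX, mem_sdiff, List.mem_toFinset]
    by_cases hx : x ∈ flat (S1 ++ S2)
    · exact Or.inr hx
    · exact Or.inl ⟨mem_univ _, hx⟩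
  · have hz := z2.trans hhd
    cases S' with
    | nil =>
      exfalso
      have := z3.length_eq
      have h0 : flat (S1 ++ S2) = [] := by
        have h1 : (X.toList ++ flat (S1 ++ S2)) = [] := by
          apply List.eq_nil_of_length_eq_zero; rw [← this]; simp [flat]
        exact (List.append_eq_nil_iff.mp h1).2
      cases S2 with
      | nil => simp at q1
      | cons e S2 => rw [flat_append, flat_cons] at h0; simp [Blk.toList] at h0
    | cons e S' =>
      simp only [List.map_cons, hd] at hz
      have h1 : e.1.a = p.1 := by rw [← hz]
      have h2 : e.1.b = p.2 := by rw [← hz]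
      refine ⟨p.1, p.2, e.1.m ++ [e.1.c, e.1.d] ++ e.2 ++ flat S', ?_, skel_tight _ _ z1⟩
      rw [flat_cons]; simp [Blk.toList, h1, h2]

end P11
end TH

set_option linter.all false
set_option linter.unusedSectionVars false
open Finset
namespace TH
section P12
open scoped Classical

lemma tight_get {V : Type} [Fintype V] {E : V → V → V → Prop} (l : List V) (h : Tight E l) :
    ∀ (i : ℕ) (a b c : V), l[i]? = some a → l[i+1]? = some b → l[i+2]? = some c → E a b c := by
  induction l with
  | nil => intro i a b c h1; simp at h1
  | cons v l ih =>
    intro i a b c h1 h2 h3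
    cases i with
    | zero =>
      match l, h, h1, h2, h3 with
      | b' :: c' :: r, h, h1, h2, h3 =>
        simp at h1 h2 h3
        subst h1 h2 h3
        exact (tight_cons3.mp h).1
      | [b'], h, h1, h2, h3 => simp at h3
      | [], h, h1, h2, h3 => simp at h2
    | succ i =>
      exact ih (tight_tail h) i a b c (by simpa using h1) (by simpa using h2) (by simpa using h3)

lemma ham_of_list {n : ℕ} (hn : 3 ≤ n) (H : Finset (Finset (Fin n))) (l : List (Fin n)) (hl : l.Nodup)
    (hall : ∀ x, x ∈ l) (x y : Fin n) (r : List (Fin n)) (hlr : l = x :: y :: r)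
    (ht : Tight (fun a b c : Fin n => ({a, b, c} : Finset (Fin n)) ∈ H) (l ++ [x, y])) :
    HasTightHamCycle n H := by
  have hlen : l.length = n := by
    have h1 : l.toFinset = univ := by ext x; simp [hall]
    rw [← List.toFinset_card_of_nodup hl, h1, card_univ, Fintype.card_fin]
  haveI : NeZero n := ⟨by omega⟩
  haveI : Fact (1 < n) := ⟨by omega⟩
  have hlt : ∀ k, k % n < l.length := fun k => by rw [hlen]; exact Nat.mod_lt _ (by omega)
  set g : ℕ → Fin n := fun k => l[k % n]'(hlt k) with hg
  have hgm : ∀ k, g (k % n) = g k := fun k => by simp [hg]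
  have hg1 : ∀ k, k < n + 2 → (l ++ [x, y])[k]? = some (g k) := by
    intro k hk
    by_cases hkn : k < n
    · rw [List.getElem?_append_left (by omega), List.getElem?_eq_getElem (by omega)]
      simp [hg, Nat.mod_eq_of_lt hkn]
    · have hx : l[0]'(by omega) = x := by simp [hlr]
      have hy : l[1]'(by omega) = y := by simp [hlr]
      rw [List.getElem?_append_right (by omega), hlen]
      rcases (show k = n ∨ k = n + 1 by omega) with rfl | rfl
      · simp [hg, hx]
      · have : (n + 1) % n = 1 := by rw [Nat.add_mod_left]; exact Nat.mod_eq_of_lt (by omega)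
        simp [hg, this, hy]
  refine ⟨fun i => g i.val, ?_, ?_⟩
  · rw [Fintype.bijective_iff_injective_and_card]
    refine ⟨?_, by rw [ZMod.card, Fintype.card_fin]⟩
    intro i j hij
    simp only [hg] at hij
    have := (hl.getElem_inj_iff).mp hij
    rw [Nat.mod_eq_of_lt (ZMod.val_lt i), Nat.mod_eq_of_lt (ZMod.val_lt j)] at this
    exact ZMod.val_injective n this
  · intro i
    have h1 : g (i + 1).val = g (i.val + 1) := by
      rw [ZMod.val_add, hgm, ZMod.val_one]
    have h2 : g (i + 2).val = g (i.val + 2) := by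
      have : (2 : ZMod n).val = 2 % n := by exact_mod_cast ZMod.val_natCast n 2
      rw [ZMod.val_add, hgm, this, Nat.mod_eq_of_lt (by omega : 2 < n)]
    have hi := ZMod.val_lt i
    show ({g i.val, g (i + 1).val, g (i + 2).val} : Finset (Fin n)) ∈ H
    rw [h1, h2]
    exact tight_get _ ht i.val _ _ _ (hg1 _ (by omega)) (hg1 _ (by omega)) (hg1 _ (by omega))

lemma final : ∃ n₀ : ℕ, ∀ n : ℕ, n₀ ≤ n → ∀ H : Finset (Finset (Fin n)),
      (∀ e ∈ H, e.card = 3) →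
      (∀ v : Fin n,
        (0.8 : ℝ) * ((n - 1).choose 2 : ℝ) ≤ ((H.filter fun e => v ∈ e).card : ℝ)) →
      HasTightHamCycle n H := by
  obtain ⟨N, hN⟩ := main
  refine ⟨N + 100000, ?_⟩
  intro n hn H h3 hdeg
  have hyp : Hyp (fun a b c : Fin n => ({a, b, c} : Finset (Fin n)) ∈ H) := by
    refine ⟨?_, ?_, ?_, ?_, ?_⟩
    · intro a b c h
      rwa [insert_comm] at h
    · intro a b c h
      rwa [pair_comm] at h
    · intro a b c h e
      have := h3 _ h
      rw [e, insert_eq_of_mem (by simp)] at this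
      have := card_le_two (a := b) (b := c)
      omega
    · rw [Fintype.card_fin]; omega
    · intro v
      rw [Fintype.card_fin]
      have h2 : 2 * (H.filter fun e => v ∈ e).card ≤
          (univ.filter fun p : Fin n × Fin n => ({v, p.1, p.2} : Finset (Fin n)) ∈ H).card := by
        rw [card_eq_sum_card_fiberwise (f := fun p : Fin n × Fin n => ({v, p.1, p.2} : Finset (Fin n)))
          (t := H.filter fun e => v ∈ e)]
        · rw [mul_comm, ← smul_eq_mul]
          apply card_nsmul_le_sum
          intro e he
          rw [mem_filter] at he
          have hc : (e.erase v).card = 2 := by rw [card_erase_of_mem he.2, h3 e he.1]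
          obtain ⟨x, y, hxy, hxye⟩ := card_eq_two.mp hc
          have he1 : ({v, x, y} : Finset (Fin n)) = e := by rw [← hxye, insert_erase he.2]
          have he2 : ({v, y, x} : Finset (Fin n)) = e := by rw [pair_comm, he1]
          rw [← card_pair (show (x, y) ≠ (y, x) from fun h => hxy (Prod.ext_iff.mp h).1)]
          apply card_le_card
          intro p hp
          rw [mem_insert, mem_singleton] at hp
          simp only [mem_filter, mem_univ, true_and]
          rcases hp with rfl | rfl
          · exact ⟨by rw [he1]; exact he.1, he1⟩
          · exact ⟨by rw [he2]; exact he.1, he2⟩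
        · intro p hp
          simp only [coe_filter, mem_univ, true_and, Set.mem_ofPred_eq] at hp ⊢
          exact ⟨hp, by simp⟩
      have h4 : (2:ℝ) * ((H.filter fun e => v ∈ e).card : ℝ) ≤
        ((univ.filter fun p : Fin n × Fin n => ({v, p.1, p.2} : Finset (Fin n)) ∈ H).card : ℝ) := by
        exact_mod_cast h2
      have h5 : (0.8 : ℝ) * ((n - 1).choose 2 : ℝ) ≤ ((H.filter fun e => v ∈ e).card : ℝ) := by
        convert hdeg v
      have h6 : (((n-1).choose 2 : ℕ) : ℝ) = ((n:ℝ) - 1) * ((n:ℝ) - 1 - 1) / 2 := by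
        rw [Nat.cast_choose_two, Nat.cast_sub (by omega)]; simp
      rw [h6] at h5
      have h7 : (100000:ℝ) ≤ n := by exact_mod_cast (show 100000 ≤ n by omega)
      have h8 : 0.7999 * (n:ℝ)^2 ≤ ((univ.filter fun p : Fin n × Fin n => ({v, p.1, p.2} : Finset (Fin n)) ∈ H).card : ℝ) := by
        nlinarith
      convert h8
  obtain ⟨l, l1, l2, x, y, r, l3, l4⟩ := hN (Fin n) _ hyp (by rw [Fintype.card_fin]; omega)
  exact ham_of_list (by omega) H l l1 l2 x y r l3 l4

end P12
end TH

/-- There exists `n₀` such that every 3-graph on `n ≥ n₀` vertices with minimum vertex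
degree at least `0.8·C(n-1,2)` contains a tight Hamiltonian cycle. -/
theorem stmt_0 :
    ∃ n₀ : ℕ, ∀ n : ℕ, n₀ ≤ n → ∀ H : Finset (Finset (Fin n)),
      (∀ e ∈ H, e.card = 3) →
      (∀ v : Fin n,
        (0.8 : ℝ) * ((n - 1).choose 2 : ℝ) ≤ ((H.filter fun e => v ∈ e).card : ℝ)) →
      HasTightHamCycle n H := by
  obtain ⟨n₀, h⟩ := TH.final
  refine ⟨n₀, fun n hn H h3 hd => h n hn H h3 ?_⟩
  intro v
  convert hd v
end

section
/- Every (simple) graph G with n vertices and m edges contains at least (m/(3n))·(4m − n²) triangles. In particular, if m ≥ ρ·n²/2 for some ρ > 0, then the number of triangles in G is at least ρ(2ρ−1)·n³/6. -/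
open Finset

lemma aux_tri {V : Type} [Fintype V] [DecidableEq V]
    (G : SimpleGraph V) [DecidableRel G.Adj] :
    (Finset.univ.filter (fun p : V × V × V => G.Adj p.1 p.2.1 ∧ G.Adj p.1 p.2.2 ∧
      G.Adj p.2.1 p.2.2)).card ≤ 6 * (G.cliqueFinset 3).card := by
  refine Finset.card_le_mul_card_image_of_maps_to
    (f := fun p : V × V × V => ({p.1, p.2.1, p.2.2} : Finset V)) ?_ 6 ?_
  · rintro ⟨a, b, c⟩ h
    simp only [Finset.mem_filter, Finset.mem_univ, true_and] at h
    rw [SimpleGraph.mem_cliqueFinset_iff, SimpleGraph.is3Clique_iff]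
    exact ⟨a, b, c, h.1, h.2.1, h.2.2, rfl⟩
  · intro s hs
    rw [SimpleGraph.mem_cliqueFinset_iff, SimpleGraph.is3Clique_iff] at hs
    obtain ⟨x, y, z, -, -, -, rfl⟩ := hs
    refine le_trans (Finset.card_le_card (t := {(x, y, z), (x, z, y), (y, x, z), (y, z, x),
      (z, x, y), (z, y, x)}) ?_) Finset.card_le_six
    rintro ⟨a, b, c⟩ h
    simp only [Finset.mem_filter, Finset.mem_univ, true_and] at h
    obtain ⟨⟨h1, h2, h3⟩, h4⟩ := h
    have n1 := h1.ne
    have n2 := h2.ne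
    have n3 := h3.ne
    have ha : a ∈ ({x, y, z} : Finset V) := by rw [← h4]; simp
    have hb : b ∈ ({x, y, z} : Finset V) := by rw [← h4]; simp
    have hc : c ∈ ({x, y, z} : Finset V) := by rw [← h4]; simp
    clear h4 h1 h2 h3
    simp only [Finset.mem_insert, Finset.mem_singleton, Prod.mk.injEq] at *
    grind

lemma aux_main {V : Type} [Fintype V] [DecidableEq V]
    (G : SimpleGraph V) [DecidableRel G.Adj] :
    2 * ∑ v, (G.degree v : ℝ) ^ 2 - 2 * (G.edgeFinset.card : ℝ) * Fintype.card V ≤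
      6 * ((G.cliqueFinset 3).card : ℝ) := by
  have hT : ((Finset.univ.filter (fun p : V × V × V => G.Adj p.1 p.2.1 ∧ G.Adj p.1 p.2.2 ∧
      G.Adj p.2.1 p.2.2)).card : ℝ) ≤ 6 * ((G.cliqueFinset 3).card : ℝ) := by
    exact_mod_cast aux_tri G
  refine le_trans ?_ hT
  let a : V → V → ℝ := fun u v => if G.Adj u v then 1 else 0
  have hd : ∀ u, ∑ v, a u v = G.degree u := by
    intro u
    simp [a, Finset.sum_boole, ← SimpleGraph.card_neighborFinset_eq_degree,
      SimpleGraph.neighborFinset_eq_filter]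
  have hsymm : ∀ u v, a u v = a v u := by
    intro u v; simp [a, G.adj_comm]
  have hm : ∑ v, (G.degree v : ℝ) = 2 * (G.edgeFinset.card : ℝ) := by
    exact_mod_cast G.sum_degrees_eq_twice_card_edges
  have e : ((Finset.univ.filter (fun p : V × V × V => G.Adj p.1 p.2.1 ∧ G.Adj p.1 p.2.2 ∧
      G.Adj p.2.1 p.2.2)).card : ℝ) = ∑ u, ∑ v, ∑ w, a u v * (a u w * a v w) := by
    rw [← Finset.sum_boole, Fintype.sum_prod_type]
    refine Finset.sum_congr rfl fun u _ => ?_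
    rw [Fintype.sum_prod_type]
    refine Finset.sum_congr rfl fun v _ => Finset.sum_congr rfl fun w _ => ?_
    simp only [a]
    split_ifs <;> simp_all
  have h1 : ∑ u, ∑ v, ∑ w, a u v * (a u w + a v w - 1) ≤
      ∑ u, ∑ v, ∑ w, a u v * (a u w * a v w) := by
    refine Finset.sum_le_sum fun u _ => Finset.sum_le_sum fun v _ =>
      Finset.sum_le_sum fun w _ => ?_
    simp only [a]
    split_ifs <;> norm_num
  rw [e]
  refine le_trans (le_of_eq ?_) h1
  have h2 : ∀ u v, ∑ w, a u v * (a u w + a v w - 1) =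
      a u v * G.degree u + a v u * G.degree v - a u v * Fintype.card V := by
    intro u v
    rw [← Finset.mul_sum, Finset.sum_sub_distrib, Finset.sum_add_distrib, hd, hd, hsymm v u]
    simp
    ring
  simp_rw [h2, Finset.sum_sub_distrib, Finset.sum_add_distrib]
  rw [Finset.sum_comm (f := fun u v => a v u * (G.degree v : ℝ))]
  simp_rw [← Finset.sum_mul, hd]
  rw [hm]
  simp_rw [sq]
  ring

/-- Every graph `G` with `n` vertices and `m` edges contains at least `(m/(3n))·(4m - n²)`
triangles; in particular if `m ≥ ρn²/2` with `ρ > 0` then `G` has at least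
`ρ(2ρ-1)n³/6` triangles. -/
theorem stmt_4 {V : Type} [Fintype V] [DecidableEq V]
    (G : SimpleGraph V) [DecidableRel G.Adj] :
    ((G.edgeFinset.card : ℝ) / (3 * Fintype.card V)) *
        (4 * (G.edgeFinset.card : ℝ) - (Fintype.card V : ℝ) ^ 2) ≤
      ((G.cliqueFinset 3).card : ℝ) ∧
    ∀ ρ : ℝ, 0 < ρ →
      ρ * (Fintype.card V : ℝ) ^ 2 / 2 ≤ (G.edgeFinset.card : ℝ) →
      ρ * (2 * ρ - 1) * (Fintype.card V : ℝ) ^ 3 / 6 ≤ ((G.cliqueFinset 3).card : ℝ) := by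
  have hmain := aux_main G
  have hm : ∑ v, (G.degree v : ℝ) = 2 * (G.edgeFinset.card : ℝ) := by
    exact_mod_cast G.sum_degrees_eq_twice_card_edges
  have hcs := sq_sum_le_card_mul_sum_sq (s := (Finset.univ : Finset V))
    (f := fun v => (G.degree v : ℝ))
  rw [hm, Finset.card_univ] at hcs
  generalize (∑ v, (G.degree v : ℝ) ^ 2) = S at *
  have hT : (0 : ℝ) ≤ ((G.cliqueFinset 3).card : ℝ) := by positivity
  have hm0 : (0 : ℝ) ≤ (G.edgeFinset.card : ℝ) := by positivity
  have hn : (0 : ℝ) ≤ (Fintype.card V : ℝ) := by positivity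
  clear hm
  generalize ((G.cliqueFinset 3).card : ℝ) = T at *
  generalize (G.edgeFinset.card : ℝ) = m at *
  generalize (Fintype.card V : ℝ) = n at *
  rcases hn.eq_or_lt with h0 | hn
  · subst h0
    simp [hT]
  have key : m * (4 * m - n ^ 2) ≤ T * (3 * n) := by nlinarith
  constructor
  · rw [div_mul_eq_mul_div, div_le_iff₀ (by positivity)]
    exact key
  · intro ρ hρ h
    rcases le_or_gt (2 * ρ - 1) 0 with h' | h'
    · have : ρ * (2 * ρ - 1) * n ^ 3 ≤ 0 :=
        mul_nonpos_of_nonpos_of_nonneg (mul_nonpos_of_nonneg_of_nonpos hρ.le h') (by positivity)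
      linarith
    · have h3 : (ρ * n ^ 2 / 2) * ((2 * ρ - 1) * n ^ 2) ≤ m * (4 * m - n ^ 2) := by
        apply mul_le_mul h _ (by positivity) hm0
        linarith
      have h4 : (ρ * (2 * ρ - 1) * n ^ 3 / 6) * (3 * n) ≤ T * (3 * n) := by
        refine le_trans (le_of_eq ?_) (h3.trans key)
        ring
      exact le_of_mul_le_mul_right h4 (by positivity)
end

section
/- For every d > 0 and every integer h ≥ 1, there exist c > 0 and n_0 such that every 3-graph H on n ≥ n_0 vertices with at least d·n³ edges contains at least c·n^{3h} copies of K_{h,h,h}. -/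
open Finset
open scoped Classical

/-- The (ordered) copies of the complete 3-partite 3-graph `K_{h,h,h}` in a 3-graph `H`:
triples `(A,B,C)` of pairwise disjoint `h`-element vertex sets such that every triple
with one vertex in each of `A`, `B`, `C` is an edge of `H`. -/
noncomputable def tripartiteCopies {V : Type} [DecidableEq V] [Fintype V]
    (H : Finset (Finset V)) (h : ℕ) : Finset (Finset V × Finset V × Finset V) :=
  Finset.univ.filter fun T =>
    T.1.card = h ∧ T.2.1.card = h ∧ T.2.2.card = h ∧
    Disjoint T.1 T.2.1 ∧ Disjoint T.1 T.2.2 ∧ Disjoint T.2.1 T.2.2 ∧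
    ∀ a ∈ T.1, ∀ b ∈ T.2.1, ∀ c ∈ T.2.2, ({a, b, c} : Finset V) ∈ H

lemma aux_pow {X Y : Type} [Fintype X] [Fintype Y] (R : X → Y → Prop)
    [∀ x y, Decidable (R x y)] (δ : ℝ) (hδ : 0 ≤ δ)
    (h : ℕ) (hh : 1 ≤ h)
    (H : δ * ((Fintype.card X : ℝ) * Fintype.card Y) ≤
      ((univ.filter fun p : X × Y => R p.1 p.2).card : ℝ)) :
    δ ^ h * ((Fintype.card X : ℝ) * (Fintype.card Y : ℝ) ^ h) ≤
      ((univ.filter fun p : X × (Fin h → Y) => ∀ i, R p.1 (p.2 i)).card : ℝ) := by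
  have e1 : ((univ.filter fun p : X × Y => R p.1 p.2).card : ℝ)
      = ∑ x : X, ((univ.filter fun y => R x y).card : ℝ) := by
    simp only [Finset.card_filter]
    push_cast
    rw [Fintype.sum_prod_type]
  have e2 : ((univ.filter fun p : X × (Fin h → Y) => ∀ i, R p.1 (p.2 i)).card : ℝ)
      = ∑ x : X, ((univ.filter fun y => R x y).card : ℝ) ^ h := by
    have : ∀ x : X, ((univ.filter fun y => R x y).card : ℝ) ^ h
        = ((univ.filter fun f : Fin h → Y => ∀ i, R x (f i)).card : ℝ) := by
      intro x
      have : (univ.filter fun f : Fin h → Y => ∀ i, R x (f i))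
          = Fintype.piFinset (fun _ : Fin h => univ.filter fun y => R x y) := by
        ext f; simp
      rw [this, Fintype.card_piFinset]
      simp
    simp only [this]
    simp only [Finset.card_filter]
    push_cast
    rw [Fintype.sum_prod_type]
  rw [e2]
  rw [e1] at H
  obtain ⟨k, rfl⟩ : ∃ k, h = k + 1 := ⟨h - 1, by omega⟩
  have J := pow_sum_div_card_le_sum_pow (s := (univ : Finset X)) (f := fun x => ((univ.filter fun y => R x y).card : ℝ)) (fun _ _ => by positivity) k
  refine le_trans ?_ J
  rcases Nat.eq_zero_or_pos (Fintype.card X) with h0 | h0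
  · rw [h0, Nat.cast_zero, zero_mul, mul_zero]
    exact div_nonneg (pow_nonneg (Finset.sum_nonneg fun _ _ => Nat.cast_nonneg _) _)
      (pow_nonneg (Nat.cast_nonneg _) _)
  have h0' : (0 : ℝ) < Fintype.card X := by exact_mod_cast h0
  rw [le_div_iff₀ (by rw [Finset.card_univ]; exact pow_pos h0' _)]
  calc _ = (δ * ((Fintype.card X : ℝ) * Fintype.card Y)) ^ (k + 1) := by
        simp only [Finset.card_univ]; ring
    _ ≤ _ := pow_le_pow_left₀ (by positivity) H _

lemma aux_noninj {V : Type} [Fintype V] (h : ℕ) (hn : h ≤ Fintype.card V)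
    (hn1 : 1 ≤ Fintype.card V) :
    ((univ.filter fun f : Fin h → V => ¬ Function.Injective f).card : ℝ) * Fintype.card V
      ≤ (h : ℝ) ^ 2 * (Fintype.card V : ℝ) ^ h := by
  have h1 : (univ.filter fun f : Fin h → V => Function.Injective f).card
      = (Fintype.card V).descFactorial h := by
    have := Fintype.card_embedding_eq (α := Fin h) (β := V)
    rw [Fintype.card_fin] at this
    rw [← this, ← Fintype.card_subtype]
    exact Fintype.card_congr (Equiv.subtypeInjectiveEquivEmbedding _ _)
  have h2 := Finset.card_filter_add_card_filter_not (s := univ)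
    (fun f : Fin h → V => Function.Injective f)
  rw [h1] at h2
  simp only [Finset.card_univ, Fintype.card_fun, Fintype.card_fin] at h2
  set n := Fintype.card V with hnd
  have h3 := Nat.pow_sub_le_descFactorial n h
  have h3' : ((n + 1 - h : ℕ) : ℝ) ^ h ≤ (n.descFactorial h : ℝ) := by exact_mod_cast h3
  have h2' : (n.descFactorial h : ℝ) +
    ((univ.filter fun f : Fin h → V => ¬ Function.Injective f).card : ℝ) = (n : ℝ) ^ h := by
    exact_mod_cast h2
  have hnp : (0 : ℝ) < n := by exact_mod_cast hn1
  have hle : (h : ℝ) ≤ n := by exact_mod_cast hn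
  have hq : (h : ℝ) / n ≤ 1 := by rw [div_le_one hnp]; exact hle
  have h4 := one_add_mul_le_pow (a := -((h : ℝ) / n)) (by linarith) h
  have h5 : ((n : ℝ) - h) ^ h ≤ (n.descFactorial h : ℝ) := by
    refine le_trans (pow_le_pow_left₀ (by linarith) ?_ h) h3'
    rw [Nat.cast_sub (by omega)]; push_cast; linarith
  have h6 : ((n : ℝ) - h) ^ h = (1 + -((h : ℝ) / n)) ^ h * (n : ℝ) ^ h := by
    rw [← mul_pow]; congr 1; field_simp; ring
  have h7 : (1 + (h : ℝ) * -((h : ℝ) / n)) * (n : ℝ) ^ h ≤ (n.descFactorial h : ℝ) := by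
    rw [h6] at h5
    exact le_trans (mul_le_mul_of_nonneg_right h4 (by positivity)) h5
  have h8 : ((univ.filter fun f : Fin h → V => ¬ Function.Injective f).card : ℝ)
      ≤ (h : ℝ) ^ 2 * (n : ℝ) ^ h / n := by
    have : (h : ℝ) ^ 2 * (n : ℝ) ^ h / n
      = (n : ℝ) ^ h - (1 + (h : ℝ) * -((h : ℝ) / n)) * (n : ℝ) ^ h := by
      field_simp; ring
    rw [this]; linarith
  rwa [le_div_iff₀ hnp] at h8

lemma aux_hom {V : Type} [DecidableEq V] [Fintype V] (H : Finset (Finset V))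
    (hH : ∀ e ∈ H, e.card = 3) (d : ℝ) (hd : 0 < d) (h : ℕ) (hh : 1 ≤ h)
    (hc : d * (Fintype.card V : ℝ) ^ 3 ≤ (H.card : ℝ)) :
    d ^ (h * h * h) * (Fintype.card V : ℝ) ^ (3 * h) ≤
      ((univ.filter fun p : ((Fin h → V) × (Fin h → V)) × (Fin h → V) =>
        ∀ i j k, ({p.2 i, p.1.1 j, p.1.2 k} : Finset V) ∈ H).card : ℝ) := by
  have s0 : H.card ≤ (univ.filter fun p : (V × V) × V =>
      ({p.1.1, p.1.2, p.2} : Finset V) ∈ H).card := by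
    refine le_trans (Finset.card_le_card ?_) (Finset.card_image_le
      (f := fun p : (V × V) × V => ({p.1.1, p.1.2, p.2} : Finset V)))
    intro e he
    obtain ⟨a, b, c, -, -, -, rfl⟩ := Finset.card_eq_three.1 (hH e he)
    exact Finset.mem_image.2 ⟨((a, b), c), by simpa using he, rfl⟩
  have s0' : (H.card : ℝ) ≤ ((univ.filter fun p : (V × V) × V =>
      ({p.1.1, p.1.2, p.2} : Finset V) ∈ H).card : ℝ) := by exact_mod_cast s0
  have s1 := aux_pow (fun (x : V × V) (y : V) => ({x.1, x.2, y} : Finset V) ∈ H) d hd.le h hh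
    (by
      refine le_trans (le_of_eq ?_) (hc.trans s0')
      simp only [Fintype.card_prod]; push_cast; ring)
  have t1 : (univ.filter fun p : (V × V) × (Fin h → V) =>
        ∀ k, ({p.1.1, p.1.2, p.2 k} : Finset V) ∈ H).card ≤
      (univ.filter fun p : (V × (Fin h → V)) × V =>
        ∀ k, ({p.1.1, p.2, p.1.2 k} : Finset V) ∈ H).card := by
    refine Finset.card_le_card_of_injOn (fun p => ((p.1.1, p.2), p.1.2)) ?_ ?_
    · intro p hp; simpa using hp
    · rintro ⟨⟨a, b⟩, c⟩ - ⟨⟨a', b'⟩, c'⟩ - hp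
      simp at hp; simp [hp]
  have t1' := s1.trans (Nat.cast_le.2 t1)
  have s2 := aux_pow (fun (x : V × (Fin h → V)) (y : V) =>
      ∀ k, ({x.1, y, x.2 k} : Finset V) ∈ H) (d ^ h) (by positivity) h hh
    (by
      refine le_trans (le_of_eq ?_) t1'
      simp only [Fintype.card_prod, Fintype.card_fun, Fintype.card_fin]; push_cast; ring)
  have t2 : (univ.filter fun p : (V × (Fin h → V)) × (Fin h → V) =>
        ∀ j k, ({p.1.1, p.2 j, p.1.2 k} : Finset V) ∈ H).card ≤
      (univ.filter fun p : ((Fin h → V) × (Fin h → V)) × V =>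
        ∀ j k, ({p.2, p.1.1 j, p.1.2 k} : Finset V) ∈ H).card := by
    refine Finset.card_le_card_of_injOn (fun p => ((p.2, p.1.2), p.1.1)) ?_ ?_
    · intro p hp; simpa using hp
    · rintro ⟨⟨a, b⟩, c⟩ - ⟨⟨a', b'⟩, c'⟩ - hp
      simp at hp; simp [hp]
  have t2' := s2.trans (Nat.cast_le.2 t2)
  have s3 := aux_pow (fun (x : (Fin h → V) × (Fin h → V)) (y : V) =>
      ∀ j k, ({y, x.1 j, x.2 k} : Finset V) ∈ H) ((d ^ h) ^ h) (by positivity) h hh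
    (by
      refine le_trans (le_of_eq ?_) t2'
      simp only [Fintype.card_prod, Fintype.card_fun, Fintype.card_fin]; push_cast; ring)
  refine le_trans (le_of_eq ?_) s3
  simp only [Fintype.card_prod, Fintype.card_fun, Fintype.card_fin]; push_cast
  rw [← pow_mul, ← pow_mul]; ring

lemma aux_fiber {V : Type} [DecidableEq V] [Fintype V] (H : Finset (Finset V))
    (hH : ∀ e ∈ H, e.card = 3) (h : ℕ) (hh : 1 ≤ h) :
    (univ.filter fun p : ((Fin h → V) × (Fin h → V)) × (Fin h → V) =>
      (∀ i j k, ({p.2 i, p.1.1 j, p.1.2 k} : Finset V) ∈ H) ∧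
        Function.Injective p.1.1 ∧ Function.Injective p.1.2 ∧ Function.Injective p.2).card
    ≤ (h ^ h * h ^ h * h ^ h) * (tripartiteCopies H h).card := by
  have key : ∀ a b c : V, ({a, b, c} : Finset V) ∈ H → a ≠ b ∧ a ≠ c ∧ b ≠ c := by
    intro a b c hm
    have := hH _ hm
    refine ⟨?_, ?_, ?_⟩ <;> rintro rfl
    · have h2 := Finset.card_le_two (a := a) (b := c)
      simp at this; omega
    · have h2 := Finset.card_le_two (a := b) (b := a)
      rw [show ({a, b, a} : Finset V) = {b, a} by ext; simp] at this; omega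
    · have h2 := Finset.card_le_two (a := a) (b := b)
      simp at this; omega
  have z : Fin h := ⟨0, hh⟩
  refine Finset.card_le_mul_card_image_of_maps_to
    (f := fun p => (univ.image p.2, univ.image p.1.1, univ.image p.1.2)) ?_ _ ?_
  · rintro ⟨⟨β, γ⟩, α⟩ hp
    simp only [Finset.mem_filter, Finset.mem_univ, true_and] at hp
    obtain ⟨hE, hβ, hγ, hα⟩ := hp
    simp only [tripartiteCopies, Finset.mem_filter, Finset.mem_univ, true_and]
    refine ⟨?_, ?_, ?_, ?_, ?_, ?_, ?_⟩
    · rw [Finset.card_image_of_injective _ hα]; simp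
    · rw [Finset.card_image_of_injective _ hβ]; simp
    · rw [Finset.card_image_of_injective _ hγ]; simp
    · rw [Finset.disjoint_left]
      intro x hx hy
      obtain ⟨i, -, rfl⟩ := Finset.mem_image.1 hx
      obtain ⟨j, -, hj⟩ := Finset.mem_image.1 hy
      exact (key _ _ _ (hE i j z)).1 hj.symm
    · rw [Finset.disjoint_left]
      intro x hx hy
      obtain ⟨i, -, rfl⟩ := Finset.mem_image.1 hx
      obtain ⟨j, -, hj⟩ := Finset.mem_image.1 hy
      exact (key _ _ _ (hE i z j)).2.1 hj.symm
    · rw [Finset.disjoint_left]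
      intro x hx hy
      obtain ⟨i, -, rfl⟩ := Finset.mem_image.1 hx
      obtain ⟨j, -, hj⟩ := Finset.mem_image.1 hy
      exact (key _ _ _ (hE z i j)).2.2 hj.symm
    · intro a ha b hb c hc
      obtain ⟨i, -, rfl⟩ := Finset.mem_image.1 ha
      obtain ⟨j, -, rfl⟩ := Finset.mem_image.1 hb
      obtain ⟨k, -, rfl⟩ := Finset.mem_image.1 hc
      exact hE i j k
  · rintro ⟨A, B, C⟩ hT
    simp only [tripartiteCopies, Finset.mem_filter, Finset.mem_univ, true_and] at hT
    obtain ⟨hA, hB, hC, -⟩ := hT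
    have hsz : ((Fintype.piFinset (fun _ : Fin h => B) ×ˢ Fintype.piFinset (fun _ : Fin h => C))
        ×ˢ Fintype.piFinset (fun _ : Fin h => A)).card = h ^ h * h ^ h * h ^ h := by
      simp [hA, hB, hC]
    rw [← hsz]
    refine Finset.card_le_card ?_
    rintro ⟨⟨β, γ⟩, α⟩ hp
    simp only [Finset.mem_filter, Prod.mk.injEq] at hp
    obtain ⟨-, rfl, rfl, rfl⟩ := hp
    simp

/-- For every `d > 0` and integer `h ≥ 1` there exist `c > 0` and `n₀` such that every
3-graph on `n ≥ n₀` vertices with at least `d·n³` edges contains at least `c·n^{3h}`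
copies of `K_{h,h,h}`. -/
theorem stmt_5 (d : ℝ) (hd : 0 < d) (h : ℕ) (hh : 1 ≤ h) :
    ∃ c : ℝ, 0 < c ∧ ∃ n₀ : ℕ, ∀ n : ℕ, n₀ ≤ n →
      ∀ (V : Type) [DecidableEq V] [Fintype V], Fintype.card V = n →
      ∀ H : Finset (Finset V), (∀ e ∈ H, e.card = 3) →
        d * (n : ℝ) ^ 3 ≤ (H.card : ℝ) →
        c * (n : ℝ) ^ (3 * h) ≤ ((tripartiteCopies H h).card : ℝ) := by
  set D : ℝ := d ^ (h * h * h) with hD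
  have hDp : 0 < D := by positivity
  have hhp : (0 : ℝ) < h := by exact_mod_cast hh
  obtain ⟨N, hN⟩ := exists_nat_ge (6 * (h : ℝ) ^ 2 / D)
  refine ⟨D / (2 * ((h : ℝ) ^ h * (h : ℝ) ^ h * (h : ℝ) ^ h)), by positivity, N + h + 1, ?_⟩
  intro n hn V _ _ hV H hH hc
  subst hV
  set n := Fintype.card V with hnd
  have a1 := aux_hom H hH d hd h hh hc
  have a2 := aux_fiber H hH h hh
  have a3 := aux_noninj (V := V) h (by omega) (by omega)
  rw [← hD, ← hnd] at a1
  rw [← hnd] at a3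
  set m := (univ.filter fun f : Fin h → V => ¬ Function.Injective f).card with hm
  have a4 : (univ.filter fun p : ((Fin h → V) × (Fin h → V)) × (Fin h → V) =>
        ∀ i j k, ({p.2 i, p.1.1 j, p.1.2 k} : Finset V) ∈ H).card ≤
      (univ.filter fun p : ((Fin h → V) × (Fin h → V)) × (Fin h → V) =>
      (∀ i j k, ({p.2 i, p.1.1 j, p.1.2 k} : Finset V) ∈ H) ∧
        Function.Injective p.1.1 ∧ Function.Injective p.1.2 ∧ Function.Injective p.2).card
      + 3 * (m * (n ^ h * n ^ h)) := by
    set S := univ.filter fun f : Fin h → V => ¬ Function.Injective f with hS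
    set U : Finset (Fin h → V) := univ with hU
    have c1 : ((S ×ˢ U) ×ˢ U).card = m * (n ^ h * n ^ h) := by
      simp [hU, ← hm, ← hnd]; ring
    have c2 : ((U ×ˢ S) ×ˢ U).card = m * (n ^ h * n ^ h) := by
      simp [hU, ← hm, ← hnd]; ring
    have c3 : ((U ×ˢ U) ×ˢ S).card = m * (n ^ h * n ^ h) := by
      simp [hU, ← hm, ← hnd]; ring
    set G := univ.filter fun p : ((Fin h → V) × (Fin h → V)) × (Fin h → V) =>
      (∀ i j k, ({p.2 i, p.1.1 j, p.1.2 k} : Finset V) ∈ H) ∧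
        Function.Injective p.1.1 ∧ Function.Injective p.1.2 ∧ Function.Injective p.2 with hG
    have sub : (univ.filter fun p : ((Fin h → V) × (Fin h → V)) × (Fin h → V) =>
        ∀ i j k, ({p.2 i, p.1.1 j, p.1.2 k} : Finset V) ∈ H) ⊆
        G ∪ (((S ×ˢ U) ×ˢ U) ∪ (((U ×ˢ S) ×ˢ U) ∪ ((U ×ˢ U) ×ˢ S))) := by
      intro p hp
      simp only [Finset.mem_filter, Finset.mem_univ, true_and] at hp
      simp only [hG, hS, hU, Finset.mem_union, Finset.mem_product, Finset.mem_filter,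
        Finset.mem_univ, true_and, and_true]
      tauto
    have u0 := Finset.card_le_card sub
    have u1 := Finset.card_union_le G (((S ×ˢ U) ×ˢ U) ∪ (((U ×ˢ S) ×ˢ U) ∪ ((U ×ˢ U) ×ˢ S)))
    have u2 := Finset.card_union_le ((S ×ˢ U) ×ˢ U) (((U ×ˢ S) ×ˢ U) ∪ ((U ×ˢ U) ×ˢ S))
    have u3 := Finset.card_union_le ((U ×ˢ S) ×ˢ U) ((U ×ˢ U) ×ˢ S)
    omega
  have a5 := a4.trans (Nat.add_le_add_right a2 _)
  have a6 := a1.trans (Nat.cast_le.2 a5)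
  push_cast at a6
  have hnp : (0 : ℝ) < n := by
    have : 0 < n := by omega
    exact_mod_cast this
  have hNn : (N : ℝ) ≤ n := by
    have : N ≤ n := by omega
    exact_mod_cast this
  have b1 : 6 * (h : ℝ) ^ 2 ≤ D * n := by
    have := hN.trans hNn
    rw [div_le_iff₀ hDp] at this; linarith
  have a3' : (m : ℝ) * n ≤ (h : ℝ) ^ 2 * (n : ℝ) ^ h := by
    rw [hm]; convert a3
  have b2 : 6 * (m : ℝ) ≤ D * (n : ℝ) ^ h := by
    have : 6 * (m : ℝ) * n ≤ D * (n : ℝ) ^ h * n := by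
      have := mul_le_mul_of_nonneg_right b1 (by positivity : (0 : ℝ) ≤ (n : ℝ) ^ h)
      linarith
    exact le_of_mul_le_mul_right this hnp
  have b3 : 6 * ((m : ℝ) * ((n : ℝ) ^ h * (n : ℝ) ^ h)) ≤ D * (n : ℝ) ^ (3 * h) := by
    have := mul_le_mul_of_nonneg_right b2 (by positivity : (0 : ℝ) ≤ (n : ℝ) ^ h * (n : ℝ) ^ h)
    have e : (n : ℝ) ^ (3 * h) = (n : ℝ) ^ h * ((n : ℝ) ^ h * (n : ℝ) ^ h) := by ring
    rw [e]; linarith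
  rw [div_mul_eq_mul_div, div_le_iff₀ (by positivity)]
  linarith
end

section
/- For every ε > 0 and every integer t_0 there exist T_0 and n_0 such that the following holds. For every 3-graph H on n ≥ n_0 vertices there exist t with t_0 ≤ t ≤ T_0 and a partition V(H) = V_1 ∪ … ∪ V_t with |V_1| ≤ |V_2| ≤ … ≤ |V_t| ≤ |V_1| + 1 such that for all but fewer than ε·C(t,3) triples {i_1, i_2, i_3} of partition classes, the 3-partite 3-graph H[V_{i_1}, V_{i_2}, V_{i_3}] is ε-regular. -/
open Finset
open scoped Classical

/-- The number of edges of the 3-graph `H` with one vertex in each of the (disjoint)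
sets `A`, `B`, `C`. -/
noncomputable def eH {V : Type} [DecidableEq V] (H : Finset (Finset V))
    (A B C : Finset V) : ℕ :=
  ((A ×ˢ B ×ˢ C).filter fun x => ({x.1, x.2.1, x.2.2} : Finset V) ∈ H).card

/-- The density of the 3-graph `H` with respect to the triple `(A,B,C)`. -/
noncomputable def dH {V : Type} [DecidableEq V] (H : Finset (Finset V))
    (A B C : Finset V) : ℝ :=
  (eH H A B C : ℝ) / ((A.card : ℝ) * (B.card : ℝ) * (C.card : ℝ))

/-- The 3-partite 3-graph `H[V1,V2,V3]` is `ε`-regular. -/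
def EpsRegular {V : Type} [DecidableEq V] (ε : ℝ) (H : Finset (Finset V))
    (V1 V2 V3 : Finset V) : Prop :=
  ∀ A1 ⊆ V1, ∀ A2 ⊆ V2, ∀ A3 ⊆ V3,
    ε * (V1.card : ℝ) ≤ (A1.card : ℝ) → ε * (V2.card : ℝ) ≤ (A2.card : ℝ) →
    ε * (V3.card : ℝ) ≤ (A3.card : ℝ) →
    |dH H A1 A2 A3 - dH H V1 V2 V3| ≤ ε


section Av
variable {X ι κ : Type} [Fintype X]

noncomputable def av (g : X → ι) (f : X → ℝ) (x : X) : ℝ :=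
  (∑ y with g y = g x, f y) / ((univ.filter fun y => g y = g x).card : ℝ)

lemma av_congr (g : X → ι) (g' : X → κ) (f : X → ℝ) (x x' : X)
    (h : ∀ y, g y = g x ↔ g' y = g' x') : av g f x = av g' f x' := by
  have : (univ.filter fun y => g y = g x) = (univ.filter fun y => g' y = g' x') := by
    ext y; simp [h y]
  unfold av
  rw [this]

lemma av_mul (g : X → ι) (f h : X → ℝ) (hh : ∀ x y, g x = g y → h x = h y) :
    ∑ x, h x * av g f x = ∑ x, h x * f x := by
  have h1 : ∀ x, h x * av g f x = ∑ y, if g y = g x then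
      h y * f y / ((univ.filter fun z => g z = g y).card : ℝ) else 0 := by
    intro x
    rw [← Finset.sum_filter]
    unfold av
    rw [← mul_div_assoc, Finset.mul_sum, Finset.sum_div]
    apply Finset.sum_congr rfl
    intro y hy
    have hy : g y = g x := by simpa using hy
    rw [hh x y hy.symm, hy]
  simp_rw [h1]
  rw [Finset.sum_comm]
  apply Finset.sum_congr rfl
  intro y _
  rw [← Finset.sum_filter, Finset.sum_const]
  have h2 : (univ.filter fun x => g y = g x) = (univ.filter fun z => g z = g y) := by
    ext z; simp [eq_comm]
  rw [h2, nsmul_eq_mul]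
  have h3 : ((univ.filter fun z => g z = g y).card : ℝ) ≠ 0 := by
    have : 0 < (univ.filter fun z => g z = g y).card := Finset.card_pos.2 ⟨y, by simp⟩
    positivity
  field_simp

lemma pyth (g : X → ι) (g' : X → κ) (f : X → ℝ) (hr : ∀ x y, g' x = g' y → g x = g y) :
    ∑ x, (av g' f x - av g f x) ^ 2 = ∑ x, (av g' f x) ^ 2 - ∑ x, (av g f x) ^ 2 := by
  have hm : ∀ x y, g x = g y → av g f x = av g f y := by
    intro x y h
    exact av_congr _ _ _ _ _ (by intro z; rw [h])
  have s1 := av_mul g' f (av g f) (fun x y h => hm x y (hr x y h))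
  have s2 := av_mul g f (av g f) hm
  have : ∀ x, (av g' f x - av g f x) ^ 2 =
      (av g' f x) ^ 2 - (av g f x) ^ 2 - 2 * (av g f x * av g' f x) + 2 * (av g f x * av g f x) := by
    intro x; ring
  simp_rw [this]
  rw [Finset.sum_add_distrib, Finset.sum_sub_distrib, Finset.sum_sub_distrib,
    ← Finset.mul_sum, ← Finset.mul_sum, s1, s2]
  ring

lemma av_nonneg (g : X → ι) (f : X → ℝ) (hf : ∀ x, 0 ≤ f x) (x : X) : 0 ≤ av g f x :=
  div_nonneg (Finset.sum_nonneg fun y _ => hf y) (by positivity)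

lemma av_le_one (g : X → ι) (f : X → ℝ) (hf : ∀ x, f x ≤ 1) (x : X) : av g f x ≤ 1 := by
  unfold av
  apply div_le_one_of_le₀ _ (by positivity)
  calc _ ≤ ∑ y with g y = g x, (1 : ℝ) := Finset.sum_le_sum fun y _ => hf y
    _ = _ := by simp

lemma box_incr (g' : X → κ) (f : X → ℝ) (S : Finset X) (d ε : ℝ) (hε : 0 ≤ ε)
    (hS : ∀ x y, g' x = g' y → (x ∈ S ↔ y ∈ S))
    (hd : ε * (S.card : ℝ) ≤ |∑ x ∈ S, f x - d * S.card|) :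
    ε ^ 2 * (S.card : ℝ) ≤ ∑ x ∈ S, (av g' f x - d) ^ 2 := by
  have h1 : ∑ x ∈ S, av g' f x = ∑ x ∈ S, f x := by
    have := av_mul g' f (fun x => if x ∈ S then 1 else 0) (by
      intro x y h; simp [hS x y h])
    simpa using this
  have h2 : ∑ x ∈ S, (av g' f x - d) = ∑ x ∈ S, f x - d * S.card := by
    rw [Finset.sum_sub_distrib, h1]; simp [mul_comm]
  have h3 := sq_sum_le_card_mul_sum_sq (s := S) (f := fun x => av g' f x - d)
  rw [h2] at h3
  rcases Nat.eq_zero_or_pos S.card with h0 | h0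
  · rw [h0]; simp; exact Finset.sum_nonneg fun x _ => sq_nonneg _
  have h0 : (0 : ℝ) < S.card := by exact_mod_cast h0
  have h4 : (ε * (S.card : ℝ)) ^ 2 ≤ (∑ x ∈ S, f x - d * S.card) ^ 2 := by
    rw [← sq_abs (∑ x ∈ S, f x - d * S.card)]
    gcongr
  have h5 : (S.card : ℝ) * (ε ^ 2 * S.card) ≤ S.card * ∑ x ∈ S, (av g' f x - d) ^ 2 := by
    nlinarith
  exact le_of_mul_le_mul_left h5 h0

end Av

section Lab
variable {V ι κ : Type} [Fintype V]

def lab (c : V → ι) (x : V × V × V) : ι × ι × ι := (c x.1, c x.2.1, c x.2.2)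

noncomputable def energy (c : V → ι) (f : V × V × V → ℝ) : ℝ := ∑ x, (av (lab c) f x) ^ 2

lemma energy_mono (c : V → ι) (c' : V → κ) (f : V × V × V → ℝ)
    (hr : ∀ x y, c' x = c' y → c x = c y) : energy c f ≤ energy c' f := by
  have := pyth (lab c) (lab c') f (by
    rintro ⟨x1, x2, x3⟩ ⟨y1, y2, y3⟩ h
    simp only [lab, Prod.mk.injEq] at h ⊢
    exact ⟨hr _ _ h.1, hr _ _ h.2.1, hr _ _ h.2.2⟩)
  have h2 : 0 ≤ ∑ x, (av (lab c') f x - av (lab c) f x) ^ 2 :=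
    Finset.sum_nonneg fun x _ => sq_nonneg _
  unfold energy
  linarith

lemma energy_le (c : V → ι) (f : V × V × V → ℝ) (h0 : ∀ x, 0 ≤ f x) (h1 : ∀ x, f x ≤ 1) :
    energy c f ≤ (Fintype.card V : ℝ) ^ 3 := by
  unfold energy
  calc _ ≤ ∑ x : V × V × V, (1 : ℝ) := by
        apply Finset.sum_le_sum
        intro x _
        have := av_nonneg (lab c) f h0 x
        have := av_le_one (lab c) f h1 x
        nlinarith
    _ = _ := by simp; ring

lemma sum_ind_aux (u : V → ℝ) :
    ∑ x : V × V × V, (u x.1 + u x.2.1 + u x.2.2) =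
      3 * (∑ x, u x) * (Fintype.card V : ℝ) ^ 2 := by
  simp only [Finset.sum_add_distrib, Fintype.sum_prod_type, Finset.sum_const, Finset.card_univ,
    nsmul_eq_mul, ← Finset.mul_sum, Fintype.card_prod, Nat.cast_mul]
  ring

lemma sum_ind (B : Finset V) :
    ∑ x : V × V × V, ((if x.1 ∈ B then (1 : ℝ) else 0) + (if x.2.1 ∈ B then 1 else 0) +
      (if x.2.2 ∈ B then 1 else 0)) = 3 * B.card * (Fintype.card V : ℝ) ^ 2 := by
  have hb : ∑ x : V, (if x ∈ B then (1 : ℝ) else 0) = B.card := by simp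
  have hg := sum_ind_aux (fun x : V => if x ∈ B then (1 : ℝ) else 0)
  rw [hb] at hg
  exact hg

lemma energy_close (r : V → ι) (q : V → κ) (f : V × V × V → ℝ)
    (h0 : ∀ x, 0 ≤ f x) (h1 : ∀ x, f x ≤ 1) (B : Finset V)
    (hB : ∀ x, x ∉ B → ∀ y, r y = r x → q y = q x) :
    energy q f ≤ energy r f + 3 * B.card * (Fintype.card V : ℝ) ^ 2 := by
  have hm : energy q f ≤ energy (fun x => (r x, q x)) f :=
    energy_mono _ _ _ (by intro x y h; exact (Prod.mk.inj h).2)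
  refine hm.trans ?_
  rw [← sum_ind]
  unfold energy
  rw [← Finset.sum_add_distrib]
  apply Finset.sum_le_sum
  rintro ⟨x, y, z⟩ _
  have a0 := av_nonneg (lab r) f h0 (x, y, z)
  have b0 := av_nonneg (lab fun x => (r x, q x)) f h0 (x, y, z)
  have b1 := av_le_one (lab fun x => (r x, q x)) f h1 (x, y, z)
  by_cases hh : x ∉ B ∧ y ∉ B ∧ z ∉ B
  · rw [av_congr (lab fun x => (r x, q x)) (lab r) f (x, y, z) (x, y, z)]
    · simp [hh]
    · rintro ⟨x', y', z'⟩
      simp only [lab, Prod.mk.injEq]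
      constructor
      · tauto
      · rintro ⟨u, v, w⟩
        exact ⟨⟨u, hB x hh.1 _ u⟩, ⟨v, hB y hh.2.1 _ v⟩, ⟨w, hB z hh.2.2 _ w⟩⟩
  · have : (1 : ℝ) ≤ (if x ∈ B then (1 : ℝ) else 0) + (if y ∈ B then 1 else 0) +
      (if z ∈ B then 1 else 0) := by
      split_ifs <;> first | (exfalso; tauto) | norm_num
    simp only
    nlinarith

end Lab

/-- class of a labelling -/
noncomputable def cls {V ι : Type} [Fintype V] (c : V → ι) (i : ι) : Finset V :=
  univ.filter fun x => c x = i

lemma exists_equi {V κ : Type} [DecidableEq V] [Fintype V] [Fintype κ] (q : V → κ) (K : ℕ)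
    (hK : 0 < K) (hn : K ≤ Fintype.card V) :
    ∃ (c : V → Fin K) (B : Finset V),
      (∀ i j, i ≤ j → (cls c i).card ≤ (cls c j).card) ∧
      (∀ i, (cls c i).card = Fintype.card V / K ∨
        (cls c i).card = Fintype.card V / K + 1) ∧
      B.card ≤ Fintype.card κ * (Fintype.card V / K) ∧
      (∀ x, x ∉ B → ∀ y, c y = c x → q y = q x) := by
  set n := Fintype.card V with hndef
  have hab : (K - n % K) * (n / K) + n % K * (n / K + 1) = (univ : Finset V).card := by
    rw [Finset.card_univ, ← hndef]
    rw [tsub_mul, mul_add, ← add_assoc,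
      tsub_add_cancel_of_le (Nat.mul_le_mul_right _ (Nat.mod_lt _ hK).le), mul_one, add_comm,
      Nat.mod_add_div]
  let Q : Finpartition (univ : Finset V) :=
    Finpartition.ofExistsUnique ((univ.image q).image (cls q)) (by simp) (by
      intro a _
      refine ⟨cls q (q a), ⟨by simp, by simp [cls]⟩, ?_⟩
      rintro y ⟨hy, hay⟩
      simp only [Finset.mem_image] at hy
      obtain ⟨_, _, rfl⟩ := hy
      simp [cls] at hay
      rw [hay]) (by
      intro h
      simp only [Finset.mem_image] at h
      obtain ⟨_, ⟨x, _, rfl⟩, h⟩ := h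
      have : x ∈ cls q (q x) := by simp [cls]
      rw [h] at this
      simp at this)
  have hQ : Q.parts = (univ.image q).image (cls q) := rfl
  let R := Q.equitabilise hab
  have hRc : R.parts.card = K := by
    have := Q.card_parts_equitabilise hab (Nat.div_pos hn hK).ne'
    rw [tsub_add_cancel_of_le (Nat.mod_lt _ hK).le] at this
    exact this
  let e0 : R.parts ≃ Fin K := R.parts.equivFinOfCardEq hRc
  let σ := Tuple.sort fun i => (e0.symm i : Finset V).card
  let e : R.parts ≃ Fin K := e0.trans σ.symm
  have hmem : ∀ x, R.part x ∈ R.parts := fun x => R.part_mem.2 (mem_univ x)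
  let c : V → Fin K := fun x => e ⟨R.part x, hmem x⟩
  have hcls : ∀ i, cls c i = (e.symm i : Finset V) := by
    intro i
    ext x
    simp only [cls, mem_filter, mem_univ, true_and, c]
    rw [← Equiv.eq_symm_apply, Subtype.ext_iff]
    exact R.part_eq_iff_mem (e.symm i).2
  refine ⟨c, Q.parts.biUnion fun t => t \ ({u ∈ R.parts | u ⊆ t} : Finset (Finset V)).biUnion id,
    ?_, ?_, ?_, ?_⟩
  · intro i j hij
    rw [hcls, hcls]
    exact Tuple.monotone_sort (fun i => (e0.symm i : Finset V).card) hij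
  · intro i
    rw [hcls]
    exact Finpartition.card_eq_of_mem_parts_equitabilise (e.symm i).2
  · refine (Finset.card_biUnion_le_card_mul _ _ (n / K) ?_).trans ?_
    · intro t ht
      exact Q.card_parts_equitabilise_subset_le hab ht
    · apply Nat.mul_le_mul_right
      rw [hQ]
      exact Finset.card_image_le.trans (Finset.card_le_univ _)
  · intro x hx y hy
    simp only [mem_biUnion, not_exists, not_and, mem_sdiff] at hx
    have h1 : ∃ u ∈ ({u ∈ R.parts | u ⊆ cls q (q x)} : Finset (Finset V)), x ∈ id u := by
      by_contra hcon
      push Not at hcon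
      exact hx (cls q (q x)) (by rw [hQ]; simp) (by simp [cls]) hcon
    obtain ⟨u, hu, hxu⟩ := h1
    simp only [mem_filter, id] at hu hxu
    have h2 : R.part x = u := R.part_eq_of_mem hu.1 hxu
    have h3 : R.part y = R.part x := by
      have := e.injective hy
      exact Subtype.ext_iff.1 this
    have h4 : y ∈ R.part y := R.mem_part (mem_univ y)
    rw [h3, h2] at h4
    have := hu.2 h4
    simpa [cls] using this

noncomputable def fH {V : Type} [DecidableEq V] (H : Finset (Finset V)) (x : V × V × V) : ℝ :=
  if ({x.1, x.2.1, x.2.2} : Finset V) ∈ H then 1 else 0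

lemma eH_eq {V : Type} [DecidableEq V] (H : Finset (Finset V)) (A B C : Finset V) :
    (eH H A B C : ℝ) = ∑ x ∈ A ×ˢ B ×ˢ C, fH H x := by
  unfold eH fH
  rw [Finset.sum_boole]

lemma av_lab {V ι : Type} [DecidableEq V] [Fintype V] (H : Finset (Finset V)) (c : V → ι)
    (x : V × V × V) :
    av (lab c) (fH H) x = dH H (cls c (c x.1)) (cls c (c x.2.1)) (cls c (c x.2.2)) := by
  unfold av dH
  rw [eH_eq]
  have : ∀ inst : DecidablePred fun y => lab c y = lab c x,
      (@Finset.filter _ (fun y => lab c y = lab c x) inst univ) =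
      cls c (c x.1) ×ˢ cls c (c x.2.1) ×ˢ cls c (c x.2.2) := by
    intro inst
    ext ⟨y1, y2, y3⟩
    simp [lab, cls]
  rw [this, Finset.card_product, Finset.card_product]
  push_cast
  rw [mul_assoc]

/-- irregular triples -/
noncomputable def irr {V : Type} [DecidableEq V] (ε : ℝ) (H : Finset (Finset V)) {t : ℕ}
    (P : Fin t → Finset V) : Finset (Fin t × Fin t × Fin t) :=
  Finset.univ.filter fun x : Fin t × Fin t × Fin t =>
            x.1 < x.2.1 ∧ x.2.1 < x.2.2 ∧
            ¬ EpsRegular ε H (P x.1) (P x.2.1) (P x.2.2)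

lemma increment {V : Type} [DecidableEq V] [Fintype V] (ε : ℝ) (hε : 0 < ε)
    (H : Finset (Finset V)) {t : ℕ} (c : V → Fin t) (m : ℝ) (hm : 0 < m)
    (hc : ∀ i, m ≤ (cls c i).card) :
    ∃ q : V → Fin t × (Fin t × Fin t × Fin t → Bool × Bool × Bool),
      energy c (fH H) + (irr ε H (cls c)).card * (ε ^ 5 * m ^ 3) ≤ energy q (fH H) := by
  have key : ∀ T : Fin t × Fin t × Fin t, ∃ A : Finset V × Finset V × Finset V,
      T ∈ irr ε H (cls c) → A.1 ⊆ cls c T.1 ∧ A.2.1 ⊆ cls c T.2.1 ∧ A.2.2 ⊆ cls c T.2.2 ∧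
      ε * ((cls c T.1).card : ℝ) ≤ (A.1.card : ℝ) ∧ ε * ((cls c T.2.1).card : ℝ) ≤ (A.2.1.card : ℝ) ∧
      ε * ((cls c T.2.2).card : ℝ) ≤ (A.2.2.card : ℝ) ∧
      ε < |dH H A.1 A.2.1 A.2.2 - dH H (cls c T.1) (cls c T.2.1) (cls c T.2.2)| := by
    intro T
    by_cases hT : T ∈ irr ε H (cls c)
    · have h := hT
      simp only [irr, mem_filter] at h
      have h := h.2.2.2
      unfold EpsRegular at h
      push Not at h
      obtain ⟨A1, h1, A2, h2, A3, h3, h4, h5, h6, h7⟩ := h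
      exact ⟨(A1, A2, A3), fun _ => ⟨h1, h2, h3, h4, h5, h6, h7⟩⟩
    · exact ⟨(∅, ∅, ∅), fun h => absurd h hT⟩
  choose A hA using key
  let q : V → Fin t × (Fin t × Fin t × Fin t → Bool × Bool × Bool) := fun x =>
    (c x, fun T => (decide (x ∈ (A T).1), decide (x ∈ (A T).2.1), decide (x ∈ (A T).2.2)))
  refine ⟨q, ?_⟩
  have hp := pyth (lab c) (lab q) (fH H) (by
    rintro ⟨x1, x2, x3⟩ ⟨y1, y2, y3⟩ h
    simp only [lab, Prod.mk.injEq, q] at h ⊢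
    tauto)
  have hlow : ((irr ε H (cls c)).card : ℝ) * (ε ^ 5 * m ^ 3) ≤
      ∑ x, (av (lab q) (fH H) x - av (lab c) (fH H) x) ^ 2 := by
    rw [← Finset.sum_fiberwise univ (lab c)]
    rw [← nsmul_eq_mul, ← Finset.sum_const]
    refine (Finset.sum_le_sum ?_).trans (Finset.sum_le_sum_of_subset_of_nonneg
      (Finset.subset_univ (irr ε H (cls c))) fun T _ _ => Finset.sum_nonneg fun x _ => sq_nonneg _)
    intro T hT
    obtain ⟨h1, h2, h3, h4, h5, h6, h7⟩ := hA T hT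
    set S : Finset (V × V × V) := (A T).1 ×ˢ (A T).2.1 ×ˢ (A T).2.2 with hS
    have hScard : (S.card : ℝ) = (A T).1.card * (A T).2.1.card * (A T).2.2.card := by
      rw [hS, Finset.card_product, Finset.card_product]; push_cast; ring
    set d := dH H (cls c T.1) (cls c T.2.1) (cls c T.2.2) with hd
    have hsub : ∀ x ∈ S, lab c x = T := by
      rintro ⟨x1, x2, x3⟩ hx
      simp only [hS, mem_product] at hx
      have a1 := h1 hx.1
      have a2 := h2 hx.2.1
      have a3 := h3 hx.2.2
      simp only [cls, mem_filter, mem_univ, true_and] at a1 a2 a3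
      simp [lab, a1, a2, a3]
    have g1 := mul_le_mul_of_nonneg_left (hc T.1) hε.le
    have g2 := mul_le_mul_of_nonneg_left (hc T.2.1) hε.le
    have g3 := mul_le_mul_of_nonneg_left (hc T.2.2) hε.le
    have hεm : 0 < ε * m := by positivity
    have hSlow : (ε * m) ^ 3 ≤ S.card := by
      rw [hScard, pow_succ, pow_two]
      have := g1.trans h4
      have := g2.trans h5
      have := g3.trans h6
      gcongr
    have hSpos : (0 : ℝ) < S.card := lt_of_lt_of_le (by positivity) hSlow
    have hbox := box_incr (lab q) (fH H) S d ε hε.le (by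
      rintro ⟨x1, x2, x3⟩ ⟨y1, y2, y3⟩ h
      simp only [lab, Prod.mk.injEq, q, funext_iff, decide_eq_decide] at h
      simp only [hS, mem_product]
      rw [(h.1.2 T).1, (h.2.1.2 T).2.1, (h.2.2.2 T).2.2]) (by
      have : dH H (A T).1 (A T).2.1 (A T).2.2 * S.card = ∑ x ∈ S, fH H x := by
        unfold dH
        rw [eH_eq, ← hScard]
        exact div_mul_cancel₀ _ hSpos.ne'
      rw [← this, ← sub_mul, abs_mul, abs_of_pos hSpos]
      exact mul_le_mul_of_nonneg_right h7.le hSpos.le)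
    calc ε ^ 5 * m ^ 3 = ε ^ 2 * (ε * m) ^ 3 := by ring
      _ ≤ ε ^ 2 * S.card := by gcongr
      _ ≤ _ := hbox
      _ = ∑ x ∈ S, (av (lab q) (fH H) x - av (lab c) (fH H) x) ^ 2 := by
        apply Finset.sum_congr rfl
        intro x hx
        have := hsub x hx
        rw [av_lab H c x, hd, ← this]
        rfl
      _ ≤ _ := by
        apply Finset.sum_le_sum_of_subset_of_nonneg
        · intro x hx
          simp [hsub x hx]
        · intro x _ _
          exact sq_nonneg _
  unfold energy
  linarith

def Equi {V : Type} [Fintype V] {t : ℕ} (c : V → Fin t) : Prop :=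
  (∀ i j, i ≤ j → (cls c i).card ≤ (cls c j).card) ∧
      (∀ i, (cls c i).card = Fintype.card V / t ∨ (cls c i).card = Fintype.card V / t + 1)

lemma choose_low (t : ℕ) (ht : 3 ≤ t) : (t : ℝ) ^ 3 / 27 ≤ (t.choose 3 : ℝ) := by
  obtain ⟨s, rfl⟩ := Nat.exists_eq_add_of_le ht
  have h : ((3 + s).choose 3) * 6 = (s + 3) * (s + 2) * (s + 1) := by
    have := Nat.descFactorial_eq_factorial_mul_choose (3 + s) 3
    simp only [Nat.descFactorial, Nat.factorial] at this
    have e1 : 3 + s - 0 = s + 3 := by omega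
    have e2 : 3 + s - 1 = s + 2 := by omega
    have e3 : 3 + s - 2 = s + 1 := by omega
    rw [e1, e2, e3] at this
    linarith
  have h' : ((3 + s).choose 3 : ℝ) * 6 = (s + 3) * (s + 2) * (s + 1) := by exact_mod_cast h
  push_cast
  have : (0 : ℝ) ≤ s := by positivity
  nlinarith [pow_nonneg this 2, pow_nonneg this 3]

lemma iter (ε : ℝ) (hε : 0 < ε) (t₁ : ℕ) (ht₁ : 3 ≤ t₁) (k : ℕ) :
    ∃ t n₀ : ℕ, t₁ ≤ t ∧ t ≤ n₀ ∧ ∀ (V : Type) [DecidableEq V] [Fintype V],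
      n₀ ≤ Fintype.card V → ∀ H : Finset (Finset V),
      (∃ s, t₁ ≤ s ∧ s ≤ t ∧ ∃ c : V → Fin s, Equi c ∧
        ((irr ε H (cls c)).card : ℝ) < ε * (s.choose 3 : ℝ)) ∨
      ∃ c : V → Fin t, Equi c ∧
        k * (ε ^ 6 / 432) * (Fintype.card V : ℝ) ^ 3 ≤ energy c (fH H) := by
  induction k with
  | zero =>
    refine ⟨t₁, t₁, le_rfl, le_rfl, ?_⟩
    intro V _ _ hn H
    right
    obtain ⟨c, B, h1, h2, -, -⟩ := exists_equi (fun _ : V => ()) t₁ (by omega) hn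
    refine ⟨c, ⟨h1, h2⟩, ?_⟩
    simp only [Nat.cast_zero, zero_mul]
    exact Finset.sum_nonneg fun x _ => sq_nonneg _
  | succ k ih =>
    obtain ⟨t, n₀, ht, htn, ih⟩ := ih
    set M := Fintype.card (Fin t × (Fin t × Fin t × Fin t → Bool × Bool × Bool)) with hM
    obtain ⟨K0, hK0⟩ := exists_nat_ge (1296 * M / ε ^ 6 : ℝ)
    set K := max t K0 with hK
    have hKt : t ≤ K := le_max_left _ _
    refine ⟨K, max n₀ K, ht.trans hKt, le_max_right _ _, ?_⟩
    intro V _ _ hn H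
    have hn1 : n₀ ≤ Fintype.card V := (le_max_left _ _).trans hn
    have hn2 : K ≤ Fintype.card V := (le_max_right _ _).trans hn
    rcases ih V hn1 H with ⟨s, hs1, hs2, hs⟩ | ⟨c, hc, hen⟩
    · exact Or.inl ⟨s, hs1, hs2.trans hKt, hs⟩
    by_cases hirr : ((irr ε H (cls c)).card : ℝ) < ε * (t.choose 3 : ℝ)
    · exact Or.inl ⟨t, ht, hKt, c, hc, hirr⟩
    right
    push Not at hirr
    set n := Fintype.card V with hndef
    have htpos : (0 : ℝ) < t := by exact_mod_cast (by omega : 0 < t)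
    have hnpos : (0 : ℝ) < n := by exact_mod_cast (by omega : 0 < n)
    have hfl : (n : ℝ) / (2 * t) ≤ ((n / t : ℕ) : ℝ) := by
      rw [div_le_iff₀ (by positivity)]
      have h1 : 1 ≤ n / t := Nat.div_pos (by omega) (by omega)
      have h2 := Nat.div_add_mod n t
      have h3 := Nat.mod_lt n (by omega : t > 0)
      have h4 : n ≤ n / t * (2 * t) := by nlinarith
      exact_mod_cast h4
    obtain ⟨q, hq⟩ := increment ε hε H c ((n : ℝ) / (2 * t)) (by positivity) (by
      intro i
      refine hfl.trans ?_
      rcases hc.2 i with h | h <;> rw [h] <;> push_cast <;> linarith)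
    obtain ⟨r, B, r1, r2, hB, hB'⟩ := exists_equi q K (by omega) hn2
    refine ⟨r, ⟨r1, r2⟩, ?_⟩
    have hcl := energy_close r q (fH H) (by intro x; unfold fH; split_ifs <;> norm_num)
      (by intro x; unfold fH; split_ifs <;> norm_num) B hB'
    have hKpos : (0 : ℝ) < K := by exact_mod_cast (by omega : 0 < K)
    have hBr : (B.card : ℝ) ≤ ε ^ 6 / 1296 * n := by
      have h1 : (B.card : ℝ) ≤ M * ((n / K : ℕ) : ℝ) := by exact_mod_cast hB
      have h2 : ((n / K : ℕ) : ℝ) ≤ (n : ℝ) / K := Nat.cast_div_le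
      have h3 : (1296 * M / ε ^ 6 : ℝ) ≤ K := hK0.trans (by exact_mod_cast le_max_right _ _)
      rw [div_le_iff₀ (by positivity)] at h3
      have h4 : (M : ℝ) * (n / K) ≤ ε ^ 6 / 1296 * n := by
        rw [← mul_div_assoc, div_le_iff₀ hKpos]
        nlinarith
      have h5 : (M : ℝ) * ((n / K : ℕ) : ℝ) ≤ M * (n / K) := by gcongr
      linarith
    have hgain : ε ^ 6 / 216 * (n : ℝ) ^ 3 ≤
        (irr ε H (cls c)).card * (ε ^ 5 * ((n : ℝ) / (2 * t)) ^ 3) := by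
      have h1 : ε * ((t : ℝ) ^ 3 / 27) ≤ (irr ε H (cls c)).card := by
        have := choose_low t (ht₁.trans ht)
        refine le_trans ?_ hirr
        gcongr
      calc ε ^ 6 / 216 * (n : ℝ) ^ 3
          = ε * ((t : ℝ) ^ 3 / 27) * (ε ^ 5 * ((n : ℝ) / (2 * t)) ^ 3) := by
            field_simp; norm_num
        _ ≤ _ := by gcongr
    have h3 : 3 * (B.card : ℝ) * (n : ℝ) ^ 2 ≤ ε ^ 6 / 432 * (n : ℝ) ^ 3 := by
      calc 3 * (B.card : ℝ) * (n : ℝ) ^ 2 ≤ 3 * (ε ^ 6 / 1296 * n) * (n : ℝ) ^ 2 := by gcongr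
        _ = _ := by ring
    push_cast
    linarith
/-- Weak regularity lemma for 3-graphs: for all `ε > 0` and `t₀` there are `T₀, n₀` such
that every 3-graph on `n ≥ n₀` vertices admits a partition into `t` classes,
`t₀ ≤ t ≤ T₀`, with sizes differing by at most one, in which all but fewer than
`ε·C(t,3)` triples of classes induce an `ε`-regular 3-partite 3-graph. -/
theorem stmt_6 (ε : ℝ) (hε : 0 < ε) (t₀ : ℕ) :
    ∃ T₀ n₀ : ℕ, ∀ n : ℕ, n₀ ≤ n →
      ∀ (V : Type) [DecidableEq V] [Fintype V], Fintype.card V = n →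
      ∀ H : Finset (Finset V), (∀ e ∈ H, e.card = 3) →
      ∃ t : ℕ, t₀ ≤ t ∧ t ≤ T₀ ∧
      ∃ P : Fin t → Finset V,
        (∀ i j, i ≠ j → Disjoint (P i) (P j)) ∧
        (∀ v : V, ∃ i, v ∈ P i) ∧
        (∀ i j, i ≤ j → (P i).card ≤ (P j).card) ∧
        (∀ i j, (P i).card ≤ (P j).card + 1) ∧
        ((Finset.univ.filter fun x : Fin t × Fin t × Fin t =>
            x.1 < x.2.1 ∧ x.2.1 < x.2.2 ∧
            ¬ EpsRegular ε H (P x.1) (P x.2.1) (P x.2.2)).card : ℝ) <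
          ε * (t.choose 3 : ℝ) := by
  obtain ⟨k, hk⟩ := exists_nat_gt (432 / ε ^ 6 : ℝ)
  obtain ⟨T, n₀, hT, hTn, h⟩ := iter ε hε (max t₀ 3) (le_max_right _ _) k
  refine ⟨T, n₀, ?_⟩
  intro n hn V _ _ hV H _
  have h3 : 3 ≤ T := (le_max_right _ _).trans hT
  rcases h V (by omega) H with ⟨s, hs1, hs2, c, hc, hirr⟩ | ⟨c, hc, hen⟩
  · refine ⟨s, (le_max_left _ _).trans hs1, hs2, cls c, ?_, ?_, hc.1, ?_, hirr⟩
    · intro i j hij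
      rw [Finset.disjoint_left]
      intro x hx hx'
      simp only [cls, mem_filter, mem_univ, true_and] at hx hx'
      exact hij (hx.symm.trans hx')
    · intro v
      exact ⟨c v, by simp [cls]⟩
    · intro i j
      rcases hc.2 i with h | h <;> rcases hc.2 j with h' | h' <;> omega
  · exfalso
    have hle := energy_le c (fH H) (by intro x; unfold fH; split_ifs <;> norm_num)
      (by intro x; unfold fH; split_ifs <;> norm_num)
    have hnpos : (0 : ℝ) < (Fintype.card V : ℝ) ^ 3 := by
      have : 0 < Fintype.card V := by omega
      positivity
    rw [div_lt_iff₀ (by positivity)] at hk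
    have := hen.trans hle
    nlinarith
end

section
/- Let 0 < α < c < 1 and let H be a 3-graph on n vertices. If δ(H) ≥ c·C(n−1,2), then the graph G_α has minimum degree at least ((c−α)/(1−α))·(n−1). -/
open Finset
open scoped Classical

/-- The co-degree of a pair of vertices in a 3-graph `H`. -/
def coDeg {V : Type} [DecidableEq V] (H : Finset (Finset V)) (u v : V) : ℕ :=
  (H.filter fun e => u ∈ e ∧ v ∈ e).card

lemma coDeg_le {V : Type} [DecidableEq V] [Fintype V]
    (H : Finset (Finset V)) (hH : ∀ e ∈ H, e.card = 3) (u v : V) (huv : v ≠ u) :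
    coDeg H u v + 2 ≤ Fintype.card V := by
  have h1 : coDeg H u v ≤ (((univ : Finset V).erase u).erase v).card := by
    unfold coDeg
    refine le_trans (card_le_card (t := (((univ : Finset V).erase u).erase v).image
      (fun w => ({u, v, w} : Finset V))) ?_) card_image_le
    intro e he
    simp only [mem_filter] at he
    obtain ⟨he, hu, hv⟩ := he
    have h3 := hH e he
    have hv' : v ∈ e.erase u := mem_erase.2 ⟨huv, hv⟩
    have hc : ((e.erase u).erase v).card = 1 := by
      rw [card_erase_of_mem hv', card_erase_of_mem hu, h3]
    obtain ⟨w, hw⟩ := card_eq_one.1 hc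
    have hwm : w ∈ (e.erase u).erase v := by rw [hw]; simp
    refine mem_image.2 ⟨w, ?_, ?_⟩
    · simp only [mem_erase] at hwm ⊢
      exact ⟨hwm.1, hwm.2.1, mem_univ _⟩
    · show insert u (insert v {w}) = e
      rw [← hw, insert_erase hv', insert_erase hu]
  have hv' : v ∈ (univ : Finset V).erase u := mem_erase.2 ⟨huv, mem_univ _⟩
  have h2 := card_erase_add_one hv'
  have h3 := card_erase_add_one (mem_univ u)
  rw [card_univ] at h3
  omega

lemma sum_coDeg {V : Type} [DecidableEq V] [Fintype V]
    (H : Finset (Finset V)) (hH : ∀ e ∈ H, e.card = 3) (u : V) :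
    ∑ v ∈ univ.erase u, coDeg H u v = (H.filter fun e => u ∈ e).card * 2 := by
  have h : ∀ v, coDeg H u v = ∑ e ∈ H.filter (fun e => u ∈ e), if v ∈ e then 1 else 0 := by
    intro v
    unfold coDeg
    rw [← card_filter, filter_filter]
  simp only [h]
  rw [sum_comm, card_eq_sum_ones, sum_mul]
  refine sum_congr rfl fun e he => ?_
  simp only [mem_filter] at he
  rw [← card_filter]
  have : (univ.erase u).filter (fun v => v ∈ e) = e.erase u := by
    ext v; simp
  rw [this, card_erase_of_mem he.2, hH e he.1, one_mul]

/-- If `0 < α < c < 1` and the 3-graph `H` on `n` vertices has minimum vertex degree at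
least `c·C(n-1,2)`, then in the graph `G_α` of `α`-large pairs every vertex has degree at
least `((c-α)/(1-α))·(n-1)`. -/
theorem stmt_7 (α c : ℝ) (h0 : 0 < α) (hαc : α < c) (hc : c < 1)
    (V : Type) [DecidableEq V] [Fintype V]
    (H : Finset (Finset V)) (hH : ∀ e ∈ H, e.card = 3)
    (hδ : ∀ v : V, c * (((Fintype.card V - 1).choose 2 : ℕ) : ℝ) ≤
      ((H.filter fun e => v ∈ e).card : ℝ)) :
    ∀ u : V, (c - α) / (1 - α) * ((Fintype.card V : ℝ) - 1) ≤
      ((Finset.univ.filter fun v =>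
        v ≠ u ∧ α * ((Fintype.card V : ℝ) - 2) ≤ (coDeg H u v : ℝ)).card : ℝ) := by
  intro u
  have h1α : 0 < 1 - α := by linarith
  have hpos : 0 < Fintype.card V := Fintype.card_pos_iff.2 ⟨u⟩
  set n := Fintype.card V with hn
  set L := Finset.univ.filter fun v =>
        v ≠ u ∧ α * ((n : ℝ) - 2) ≤ (coDeg H u v : ℝ) with hL
  have hE : ((univ : Finset V).erase u).card + 1 = n := by
    rw [card_erase_add_one (mem_univ u), card_univ]
  have hLE : L ⊆ univ.erase u := by
    intro v hv
    simp only [hL, mem_filter] at hv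
    exact mem_erase.2 ⟨hv.2.1, mem_univ _⟩
  rw [div_mul_eq_mul_div, div_le_iff₀ h1α]
  rcases Nat.lt_or_ge n 3 with h3 | h3
  · have hLE' : L = univ.erase u := by
      refine Subset.antisymm hLE fun v hv => ?_
      simp only [hL, mem_filter]
      refine ⟨mem_univ _, (mem_erase.1 hv).1, ?_⟩
      have : (n : ℝ) ≤ 2 := by exact_mod_cast (by omega : n ≤ 2)
      have : (0 : ℝ) ≤ coDeg H u v := Nat.cast_nonneg _
      nlinarith
    have hc' : (L.card : ℝ) = n - 1 := by
      rw [hLE', ← hE]; push_cast; ring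
    have : (1 : ℝ) ≤ n := by exact_mod_cast hpos
    rw [hc']
    nlinarith
  · have hn3 : (3 : ℝ) ≤ n := by exact_mod_cast h3
    have hs : (∑ v ∈ univ.erase u, (coDeg H u v : ℝ)) =
        ((H.filter fun e => u ∈ e).card : ℝ) * 2 := by
      have := sum_coDeg H hH u
      exact_mod_cast this
    have hb : (∑ v ∈ univ.erase u, (coDeg H u v : ℝ)) ≤
        ∑ v ∈ univ.erase u, (((n : ℝ) - 2) * α + if v ∈ L then ((n : ℝ) - 2) * (1 - α) else 0) := by
      refine sum_le_sum fun v hv => ?_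
      have hvu := (mem_erase.1 hv).1
      split_ifs with h
      · have := coDeg_le H hH u v hvu
        have : (coDeg H u v : ℝ) + 2 ≤ n := by exact_mod_cast this
        linarith
      · simp only [hL, mem_filter, mem_univ, true_and, not_and, not_le] at h
        have := h hvu
        linarith
    rw [sum_add_distrib, sum_const, ← sum_filter, sum_const, filter_mem_eq_inter,
      inter_eq_right.2 hLE, nsmul_eq_mul, nsmul_eq_mul] at hb
    have hEr : (((univ : Finset V).erase u).card : ℝ) = n - 1 := by
      rw [← hE]; push_cast; ring
    rw [hEr, hs] at hb
    have hd := hδ u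
    rw [Nat.cast_choose_two, Nat.cast_sub hpos] at hd
    push_cast at hd
    have hn2 : (0 : ℝ) < n - 2 := by linarith
    refine le_of_mul_le_mul_right ?_ hn2
    nlinarith
end
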